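/- Let $d\ge 5$ and let $\psi\in\mathcal{S}(\mathbb{R}^d)$ be a Schwartz function with $1_{Q}\le\widetilde{\psi}\le 1_{2Q}$, $Q=[-1/2,1/2]^d$. For $k\in\mathbb{N}$ let $J_k=\lfloor\log_2 k\rfloor-2$, $\Psi_{j,k}=\psi_{q_j,2^{k-j}}$, and $M_k f=\sup_{2^k\le\lambda\le 2^{k+1},\ \lambda^2\in\mathbb{N}}|A_\lambda f|$. Then there is a constant $C$ (depending on $d$ and $\psi$) such that for all $f\in\ell^2(\mathbb{Z}^d)$, $\bigl\|\sup_{k\ge 8} M_k\bigl(f-f*\Psi_{J_k,k}\bigr)\bigr\|_{\ell^2(\mathbb{Z}^d)}\le C\,\|f\|_{\ell^2(\mathbb{Z}^d)}$. -/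

import Mathlib

open scoped BigOperators ENNReal Real

noncomputable section

/-- Squared Euclidean norm of a lattice point, as a real number. -/
def nsq {d : ℕ} (m : Fin d → ℤ) : ℝ := ∑ i, ((m i : ℝ)) ^ 2

/-- The discrete sphere of radius `lam` in `ℤ^d`. -/
def sph (d : ℕ) (lam : ℝ) : Set (Fin d → ℤ) := {m | nsq m = lam ^ 2}

/-- `N_lam`: the number of lattice points on the sphere of radius `lam`. -/
def Nlam (d : ℕ) (lam : ℝ) : ℕ := Nat.card (sph d lam)

/-- The discrete spherical average. -/
def Avg {d : ℕ} (lam : ℝ) (f : (Fin d → ℤ) → ℝ) (n : Fin d → ℤ) : ℝ :=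
  (Nlam d lam : ℝ)⁻¹ * ∑' m : sph d lam, f (n - (m : Fin d → ℤ))

/-- The `ℓ²(ℤ^d)` norm, valued in `ℝ≥0∞`. -/
def l2norm {d : ℕ} (f : (Fin d → ℤ) → ℝ) : ℝ≥0∞ :=
  (∑' n : Fin d → ℤ, (‖f n‖₊ : ℝ≥0∞) ^ 2) ^ ((1 : ℝ) / 2)

/-- The dyadic-scale maximal operator `M_k f = sup_{2^k ≤ λ ≤ 2^{k+1}, λ²∈ℕ} |A_λ f|`,
valued in `ℝ≥0∞`. -/
def Mk {d : ℕ} (k : ℕ) (f : (Fin d → ℤ) → ℝ) (n : Fin d → ℤ) : ℝ≥0∞ :=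
  ⨆ (lam : ℝ) (_ : (2 : ℝ) ^ k ≤ lam ∧ lam ≤ (2 : ℝ) ^ (k + 1) ∧
      ∃ N : ℕ, (N : ℝ) = lam ^ 2),
    (‖Avg lam f n‖₊ : ℝ≥0∞)

/-- Convolution on `ℤ^d`. -/
def conv {d : ℕ} (f g : (Fin d → ℤ) → ℝ) (n : Fin d → ℤ) : ℝ :=
  ∑' m : Fin d → ℤ, f (n - m) * g m

/-- The Fourier transform on `ℝ^d` with kernel `e^{-2πi x·ξ}`. -/
def ftR {d : ℕ} (ψ : (Fin d → ℝ) → ℝ) (ξ : Fin d → ℝ) : ℂ :=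
  ∫ x : Fin d → ℝ, (ψ x : ℂ) * Complex.exp (-(2 * (π : ℂ) * Complex.I) * (∑ i, x i * ξ i))

/-- The sampling function `ψ_{q,L}(m) = (q/L)^d ψ(m/L)` for `m ∈ (qℤ)^d`, `0` otherwise. -/
def psiQL {d : ℕ} (ψ : (Fin d → ℝ) → ℝ) (q : ℕ) (L : ℝ) : (Fin d → ℤ) → ℝ :=
  Set.indicator {m : Fin d → ℤ | ∀ i, (q : ℤ) ∣ m i}
    (fun m => ((q : ℝ) / L) ^ d * ψ (fun i => (m i : ℝ) / L))

/-- `q_j = lcm{1,2,…,2^j}`. -/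
def qlcm (j : ℕ) : ℕ := (Finset.Icc 1 (2 ^ j)).lcm id

/-- `Ψ_{j,k} = ψ_{q_j, 2^{k-j}}`. -/
def PsiJK {d : ℕ} (ψ : (Fin d → ℝ) → ℝ) (j k : ℕ) : (Fin d → ℤ) → ℝ :=
  psiQL ψ (qlcm j) ((2 : ℝ) ^ ((k : ℤ) - (j : ℤ)))

/-- `ΔΨ_{j,k} = Ψ_{j+1,k} - Ψ_{j,k}`. -/
def DeltaPsiJK {d : ℕ} (ψ : (Fin d → ℝ) → ℝ) (j k : ℕ) : (Fin d → ℤ) → ℝ :=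
  fun m => PsiJK ψ (j + 1) k m - PsiJK ψ j k m

/-- The cube `Q = [-1/2,1/2]^d`. -/
def cubeQ (d : ℕ) : Set (Fin d → ℝ) := {ξ | ∀ i, |ξ i| ≤ 1 / 2}

/-- The cube `2Q = [-1,1]^d`. -/
def cube2Q (d : ℕ) : Set (Fin d → ℝ) := {ξ | ∀ i, |ξ i| ≤ 1}

section
open Quaternion

namespace FS

/-- row action components -/
def e1 {p : ℕ} (a b s t : ZMod p) (v : ℍ[ℤ]) : ZMod p :=
  s * v.re + t * v.imI + (s * a + t * b) * v.imJ + (-s * b + t * a) * v.imK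
def e2 {p : ℕ} (a b s t : ZMod p) (v : ℍ[ℤ]) : ZMod p :=
  t * v.re - s * v.imI + (s * b - t * a) * v.imJ + (s * a + t * b) * v.imK

def memL {p : ℕ} (a b s t : ZMod p) (v : ℍ[ℤ]) : Prop := e1 a b s t v = 0 ∧ e2 a b s t v = 0

lemma memL_mul {p : ℕ} {a b s t : ZMod p} (hab : a ^ 2 + b ^ 2 = -1) {v : ℍ[ℤ]}
    (h : memL a b s t v) (u : ℍ[ℤ]) : memL a b s t (v * u) := by
  obtain ⟨h1, h2⟩ := h
  simp only [e1, e2] at h1 h2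
  constructor
  · simp only [e1, re_mul, imI_mul, imJ_mul, imK_mul]
    push_cast
    linear_combination (u.re + a * u.imJ - b * u.imK) * h1 + (u.imI + b * u.imJ + a * u.imK) * h2
      - (s * v.imJ * u.imJ + s * v.imK * u.imK + t * v.imK * u.imJ - t * v.imJ * u.imK) * hab
  · simp only [e2, re_mul, imI_mul, imJ_mul, imK_mul]
    push_cast
    linear_combination (-u.imI + b * u.imJ + a * u.imK) * h1 + (u.re - a * u.imJ + b * u.imK) * h2
      - (t * v.imJ * u.imJ + t * v.imK * u.imK - s * v.imK * u.imJ + s * v.imJ * u.imK) * hab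

lemma memL_sub {p : ℕ} {a b s t : ZMod p} {v w : ℍ[ℤ]}
    (h : memL a b s t v) (h' : memL a b s t w) : memL a b s t (v - w) := by
  obtain ⟨h1, h2⟩ := h
  obtain ⟨h3, h4⟩ := h'
  simp only [e1, e2] at h1 h2 h3 h4
  constructor
  · simp only [e1, re_sub, imI_sub, imJ_sub, imK_sub]
    push_cast
    linear_combination h1 - h3
  · simp only [e2, re_sub, imI_sub, imJ_sub, imK_sub]
    push_cast
    linear_combination h2 - h4

lemma memL_norm {p : ℕ} [Fact p.Prime] {a b s t : ZMod p} (hab : a ^ 2 + b ^ 2 = -1)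
    (hst : s ≠ 0 ∨ t ≠ 0) {v : ℍ[ℤ]}
    (h : memL a b s t v) : (p : ℤ) ∣ normSq v := by
  rw [← ZMod.intCast_zmod_eq_zero_iff_dvd] 
  obtain ⟨h1, h2⟩ := h
  simp only [e1, e2] at h1 h2
  rw [normSq_def']
  push_cast
  have hs : s * ((v.re:ZMod p)^2 + v.imI^2 + v.imJ^2+v.imK^2) = 0 := by
    linear_combination (v.re - a * v.imJ + b * v.imK) * h1 + (-(v.imI + b * v.imJ + a * v.imK)) * h2 + (s * (v.imJ^2 + v.imK^2)) * hab 
  have ht : t * ((v.re:ZMod p)^2 + v.imI^2 + v.imJ^2+v.imK^2) = 0 := by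
    linear_combination (-(-v.imI + b * v.imJ + a * v.imK)) * h1 + (v.re + a * v.imJ - b * v.imK) * h2 + (t * (v.imJ^2 + v.imK^2)) * hab 
  rcases hst with h | h
  · exact (mul_eq_zero.mp hs).resolve_left h
  · exact (mul_eq_zero.mp ht).resolve_left h

def dvdQ (p : ℤ) (v : ℍ[ℤ]) : Prop := p ∣ v.re ∧ p ∣ v.imI ∧ p ∣ v.imJ ∧ p ∣ v.imK

lemma dvdQ_of_two {p : ℕ} [Fact p.Prime] (hp2 : p ≠ 2) {a b s t s' t' : ZMod p}
    (hab : a ^ 2 + b ^ 2 = -1)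
    (hst : s * t' - s' * t ≠ 0) {v : ℍ[ℤ]}
    (h : memL a b s t v) (h' : memL a b s' t' v) : dvdQ p v := by
  obtain ⟨h1, h2⟩ := h
  obtain ⟨h3, h4⟩ := h'
  simp only [e1, e2] at h1 h2 h3 h4
  have hp2' : (2 : ZMod p) ≠ 0 := by
    have := Fact.mk hp2
    intro h
    have : ((2:ℕ) : ZMod p) = 0 := by exact_mod_cast h
    rw [ZMod.natCast_eq_zero_iff] at this
    exact hp2 ((Nat.prime_dvd_prime_iff_eq Fact.out Nat.prime_two).mp this)
  have m11 : (v.re : ZMod p) + a * v.imJ - b * v.imK = 0 := by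
    apply (mul_eq_zero.mp (?_ : (s * t' - s' * t) * _ = 0)).resolve_left hst
    linear_combination t' * h1 - t * h3
  have m21 : (v.imI : ZMod p) + b * v.imJ + a * v.imK = 0 := by
    apply (mul_eq_zero.mp (?_ : (s * t' - s' * t) * _ = 0)).resolve_left hst
    linear_combination -s' * h1 + s * h3
  have m12 : -(v.imI : ZMod p) + b * v.imJ + a * v.imK = 0 := by
    apply (mul_eq_zero.mp (?_ : (s * t' - s' * t) * _ = 0)).resolve_left hst
    linear_combination t' * h2 - t * h4
  have m22 : (v.re : ZMod p) - a * v.imJ + b * v.imK = 0 := by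
    apply (mul_eq_zero.mp (?_ : (s * t' - s' * t) * _ = 0)).resolve_left hst
    linear_combination -s' * h2 + s * h4
  refine ⟨?_, ?_, ?_, ?_⟩ <;> rw [← ZMod.intCast_zmod_eq_zero_iff_dvd] <;>
    apply (mul_eq_zero.mp (?_ : (2 : ZMod p) * _ = 0)).resolve_left hp2'
  · linear_combination m11 + m22
  · linear_combination m21 - m12
  · linear_combination (-a) * (m11 - m22) + (-b) * (m21 + m12) + 2 * v.imJ * hab
  · linear_combination (b) * (m11 - m22) + (-a) * (m21 + m12) + 2 * v.imK * hab

lemma exists_mem {p : ℕ} [Fact p.Prime] {a b s t : ZMod p} 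
    (hst : s ≠ 0 ∨ t ≠ 0) : ∃ v, memL a b s t v ∧ ¬ dvdQ p v := by
  have lift : ∀ x : ZMod p, ∃ n : ℤ, (n : ZMod p) = x := fun x => ZMod.intCast_surjective x
  by_cases h0 : s ^ 2 + t ^ 2 = 0
  · obtain ⟨x, hx⟩ := lift t
    obtain ⟨y, hy⟩ := lift (-s)
    refine ⟨⟨x, y, 0, 0⟩, ⟨?_, ?_⟩, ?_⟩
    · simp [e1, hx, hy]; ring
    · simp [e2, hx, hy]; linear_combination h0
    · rintro ⟨h1, h2, -, -⟩
      rw [← ZMod.intCast_zmod_eq_zero_iff_dvd] at h1 h2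
      simp only [hx, hy] at h1 h2
      rcases hst with h | h
      · exact h (by simpa using h2)
      · exact h h1
  · obtain ⟨x, hx⟩ := lift (-(s * (s*a+t*b) + t * (s*b-t*a)))
    obtain ⟨y, hy⟩ := lift (-(t * (s*a+t*b) - s * (s*b-t*a)))
    obtain ⟨z, hz⟩ := lift (s^2+t^2)
    refine ⟨⟨x, y, z, 0⟩, ⟨?_, ?_⟩, ?_⟩
    · simp [e1, hx, hy, hz]; ring
    · simp [e2, hx, hy, hz]; ring
    · rintro ⟨h1, h2, h3, -⟩
      rw [← ZMod.intCast_zmod_eq_zero_iff_dvd] at h3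
      simp only [hz] at h3
      exact h0 h3

end FS

end

section
open Quaternion
namespace FS

lemma int_bal (c M : ℤ) (hM : 0 < M) : ∃ x r : ℤ, c = M * x + r ∧ (2 * r) ^ 2 ≤ M ^ 2 := by
  refine ⟨(2 * c + M) / (2 * M), c - M * ((2 * c + M) / (2 * M)), by ring, ?_⟩
  have h1 := Int.mul_ediv_add_emod (2 * c + M) (2 * M)
  have h2 := Int.emod_nonneg (2 * c + M) (show 2 * M ≠ 0 by omega)
  have h3 := Int.emod_lt_of_pos (2 * c + M) (show 0 < 2 * M by omega)
  set y := (2 * c + M) / (2 * M)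
  set z := (2 * c + M) % (2 * M)
  apply sq_le_sq'
  · nlinarith
  · nlinarith

def sc (n : ℤ) : ℍ[ℤ] := ⟨n, 0, 0, 0⟩

lemma star_mul_self' (w : ℍ[ℤ]) : star w * w = sc (normSq w) := by
  ext <;> simp [re_mul, imI_mul, imJ_mul, imK_mul, normSq_def', sc] <;> ring

lemma self_mul_star' (w : ℍ[ℤ]) : w * star w = sc (normSq w) := by
  ext <;> simp [re_mul, imI_mul, imJ_mul, imK_mul, normSq_def', sc] <;> ring

lemma re_sc_mul (n : ℤ) (w : ℍ[ℤ]) : (sc n * w).re = n * w.re := by rw [re_mul]; simp [sc]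
lemma imI_sc_mul (n : ℤ) (w : ℍ[ℤ]) : (sc n * w).imI = n * w.imI := by rw [imI_mul]; simp [sc]
lemma imJ_sc_mul (n : ℤ) (w : ℍ[ℤ]) : (sc n * w).imJ = n * w.imJ := by rw [imJ_mul]; simp [sc]
lemma imK_sc_mul (n : ℤ) (w : ℍ[ℤ]) : (sc n * w).imK = n * w.imK := by rw [imK_mul]; simp [sc]
lemma re_mul_sc (n : ℤ) (w : ℍ[ℤ]) : (w * sc n).re = w.re * n := by rw [re_mul]; simp [sc]
lemma imI_mul_sc (n : ℤ) (w : ℍ[ℤ]) : (w * sc n).imI = w.imI * n := by rw [imI_mul]; simp [sc]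
lemma imJ_mul_sc (n : ℤ) (w : ℍ[ℤ]) : (w * sc n).imJ = w.imJ * n := by rw [imJ_mul]; simp [sc]
lemma imK_mul_sc (n : ℤ) (w : ℍ[ℤ]) : (w * sc n).imK = w.imK * n := by rw [imK_mul]; simp [sc]

lemma sc_comm (n : ℤ) (w : ℍ[ℤ]) : sc n * w = w * sc n := by
  ext
  · rw [re_sc_mul, re_mul_sc, mul_comm]
  · rw [imI_sc_mul, imI_mul_sc, mul_comm]
  · rw [imJ_sc_mul, imJ_mul_sc, mul_comm]
  · rw [imK_sc_mul, imK_mul_sc, mul_comm]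
lemma star_sc (n : ℤ) : star (sc n) = sc n := by
  ext
  · rw [re_star]
  · rw [imI_star]; change -(0:ℤ) = 0; simp
  · rw [imJ_star]; change -(0:ℤ) = 0; simp
  · rw [imK_star]; change -(0:ℤ) = 0; simp

lemma sc_one : sc 1 = 1 := by
  ext <;> rfl

lemma normSq_nonneg' (v : ℍ[ℤ]) : 0 ≤ normSq v := by
  rw [normSq_def']; positivity

lemma normSq_pos' {v : ℍ[ℤ]} (h : v ≠ 0) : 0 < normSq v :=
  lt_of_le_of_ne (normSq_nonneg' v) (fun h' => h (Quaternion.normSq_eq_zero.mp h'.symm))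

/-- the division lemma -/
lemma div_min {p : ℕ} {a b s t : ZMod p} (hab : a ^ 2 + b ^ 2 = -1) {w : ℍ[ℤ]}
    (hw : memL a b s t w) (hw0 : w ≠ 0)
    (hmin : ∀ v, memL a b s t v → v ≠ 0 → normSq w ≤ normSq v) {v : ℍ[ℤ]}
    (hv : memL a b s t v) :
    dvdQ (normSq w) (star w * v) ∨
    ∃ o1 o2 o3 o4 : ℤ, 2 * (star w * v).re = normSq w * (2 * o1 + 1) ∧
      2 * (star w * v).imI = normSq w * (2 * o2 + 1) ∧
      2 * (star w * v).imJ = normSq w * (2 * o3 + 1) ∧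
      2 * (star w * v).imK = normSq w * (2 * o4 + 1) := by
  set M := normSq w with hM
  have hMpos : 0 < M := normSq_pos' hw0
  set c := star w * v with hc
  obtain ⟨x1, r1, h1, g1⟩ := int_bal c.re M hMpos
  obtain ⟨x2, r2, h2, g2⟩ := int_bal c.imI M hMpos
  obtain ⟨x3, r3, h3, g3⟩ := int_bal c.imJ M hMpos
  obtain ⟨x4, r4, h4, g4⟩ := int_bal c.imK M hMpos
  set x : ℍ[ℤ] := ⟨x1, x2, x3, x4⟩ with hx
  set r : ℍ[ℤ] := ⟨r1, r2, r3, r4⟩ with hr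
  have hcr : star w * (v - w * x) = r := by
    have : star w * (v - w * x) = c - sc M * x := by
      rw [mul_sub, ← mul_assoc, star_mul_self']
    rw [this]
    ext
    · rw [re_sub, re_sc_mul, h1]; change M * x1 + r1 - M * x1 = r1; ring
    · rw [imI_sub, imI_sc_mul, h2]; change M * x2 + r2 - M * x2 = r2; ring
    · rw [imJ_sub, imJ_sc_mul, h3]; change M * x3 + r3 - M * x3 = r3; ring
    · rw [imK_sub, imK_sc_mul, h4]; change M * x4 + r4 - M * x4 = r4; ring
  have hn : M * normSq (v - w * x) = r1 ^ 2 + r2 ^ 2 + r3 ^ 2 + r4 ^ 2 := by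
    have := congrArg normSq hcr
    rw [map_mul, normSq_star, normSq_def' (a := r)] at this
    simpa [hr] using this
  by_cases hz : v - w * x = 0
  · left
    have : r = 0 := by rw [← hcr, hz, mul_zero]
    have e1 : r1 = 0 := by simpa [hr] using congrArg QuaternionAlgebra.re this
    have e2 : r2 = 0 := by simpa [hr] using congrArg QuaternionAlgebra.imI this
    have e3 : r3 = 0 := by simpa [hr] using congrArg QuaternionAlgebra.imJ this
    have e4 : r4 = 0 := by simpa [hr] using congrArg QuaternionAlgebra.imK this
    refine ⟨⟨x1, ?_⟩, ⟨x2, ?_⟩, ⟨x3, ?_⟩, ⟨x4, ?_⟩⟩ <;> omega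
  · right
    have hle := hmin _ (memL_sub hv (memL_mul hab hw x)) hz
    have hge : M * M ≤ M * normSq (v - w * x) := mul_le_mul_of_nonneg_left hle hMpos.le
    have key : ∀ (c x r : ℤ), c = M * x + r → (2 * r) ^ 2 = M ^ 2 → ∃ o, 2 * c = M * (2 * o + 1) := by
      intro c x r h g
      rcases sq_eq_sq_iff_eq_or_eq_neg.mp g with g | g
      · exact ⟨x, by rw [h]; linarith⟩
      · exact ⟨x - 1, by rw [h]; linarith⟩
    obtain ⟨o1, k1⟩ := key _ _ _ h1 (by nlinarith)
    obtain ⟨o2, k2⟩ := key _ _ _ h2 (by nlinarith)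
    obtain ⟨o3, k3⟩ := key _ _ _ h3 (by nlinarith)
    obtain ⟨o4, k4⟩ := key _ _ _ h4 (by nlinarith)
    exact ⟨o1, o2, o3, o4, k1, k2, k3, k4⟩

lemma odd_sq8 (o : ℤ) : ∃ z, (2 * o + 1) ^ 2 = 8 * z + 1 := by
  obtain ⟨z, hz⟩ := Int.even_mul_succ_self o
  exact ⟨z, by linear_combination 4 * hz⟩

lemma exists_norm_p {p : ℕ} [Fact p.Prime] (hp2 : p ≠ 2) {a b s t : ZMod p}
    (hab : a ^ 2 + b ^ 2 = -1) (hst : s ≠ 0 ∨ t ≠ 0) :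
    ∃ w : ℍ[ℤ], memL a b s t w ∧ normSq w = p := by
  have hp : p.Prime := Fact.out
  have hpodd : p % 2 = 1 := hp.eq_two_or_odd.resolve_left hp2
  obtain ⟨u, hu, hup⟩ := exists_mem (a := a) (b := b) hst
  have hu0 : u ≠ 0 := by
    rintro rfl
    exact hup ⟨by simp, by simp, by simp, by simp⟩
  obtain ⟨w, ⟨hw, hw0⟩, hmin'⟩ := WellFounded.has_min (measure (fun v : ℍ[ℤ] => (normSq v).natAbs)).wf
    {v | memL a b s t v ∧ v ≠ 0} ⟨u, hu, hu0⟩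
  have hmin : ∀ v, memL a b s t v → v ≠ 0 → normSq w ≤ normSq v := by
    intro v hv hv0
    have := hmin' v ⟨hv, hv0⟩
    have h1 := normSq_nonneg' v
    have h2 := normSq_nonneg' w
    simp only [measure, invImage, InvImage, WellFoundedRelation.rel] at this
    have h3 : ¬ (normSq v).natAbs < (normSq w).natAbs := this
    omega
  refine ⟨w, hw, ?_⟩
  have hMpos : 0 < normSq w := normSq_pos' hw0
  obtain ⟨m, hm⟩ := memL_norm hab hst hw
  have hppos : (0 : ℤ) < p := by exact_mod_cast hp.pos
  have hmpos : 0 < m := by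
    rw [hm] at hMpos; exact pos_of_mul_pos_right hMpos hppos.le
  have hpL : memL a b s t (sc p) := by
    constructor <;> simp [e1, e2, sc]
  have hns : normSq w = w.re ^ 2 + w.imI ^ 2 + w.imJ ^ 2 + w.imK ^ 2 := normSq_def' w
  rcases div_min hab hw hw0 hmin hpL with ⟨d1, d2, d3, d4⟩ | ⟨o1, o2, o3, o4, k1, k2, k3, k4⟩
  · simp only [re_mul_sc, imI_mul_sc, imJ_mul_sc, imK_mul_sc] at d1 d2 d3 d4
    have key : ∀ x : ℤ, normSq w ∣ x * p → m ∣ x := by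
      intro x hx
      rw [hm, mul_comm (p : ℤ) m] at hx
      exact Int.dvd_of_mul_dvd_mul_right hppos.ne' hx
    have d1 := key _ (by simpa using d1)
    have d2 := key _ (by simpa using d2)
    have d3 := key _ (by simpa using d3)
    have d4 := key _ (by simpa using d4)
    obtain ⟨y1, hy1⟩ := d1
    obtain ⟨y2, hy2⟩ := d2
    obtain ⟨y3, hy3⟩ := d3
    obtain ⟨y4, hy4⟩ := d4
    have hpm : (p : ℤ) = m * (y1^2+y2^2+y3^2+y4^2) := by
      rw [hm, hy1, hy2, hy3, hy4] at hns
      have : m * (p : ℤ) = m * (m * (y1^2+y2^2+y3^2+y4^2)) := by linarith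
      exact mul_left_cancel₀ hmpos.ne' this
    have hmn : m.natAbs ∣ p := Int.natAbs_dvd_natAbs.mpr ⟨_, hpm⟩
    rcases (Nat.dvd_prime hp).mp hmn with h1 | h1
    · have : m = 1 := by omega
      rw [hm, this, mul_one]
    · exfalso
      have hmp : m = p := by omega
      have hy : y1^2+y2^2+y3^2+y4^2 = 1 := by
        rw [hmp] at hpm
        have : (p : ℤ) * (y1^2+y2^2+y3^2+y4^2) = p * 1 := by linarith
        exact mul_left_cancel₀ hppos.ne' this
      set y : ℍ[ℤ] := ⟨y1, y2, y3, y4⟩ with hyd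
      have hwy : w = sc p * y := by
        ext
        · rw [re_sc_mul]; change _ = (p : ℤ) * y1; simpa [hmp] using hy1
        · rw [imI_sc_mul]; change _ = (p : ℤ) * y2; have := hy2; simp only [hmp, imI_star] at this; rw [this]
        · rw [imJ_sc_mul]; change _ = (p : ℤ) * y3; have := hy3; simp only [hmp, imJ_star] at this; rw [this]
        · rw [imK_sc_mul]; change _ = (p : ℤ) * y4; have := hy4; simp only [hmp, imK_star] at this; rw [this]
      have hyn : normSq y = 1 := by rw [normSq_def']; simpa [hyd] using hy
      rcases div_min hab hw hw0 hmin hu with ⟨d1, d2, d3, d4⟩ | ⟨o1, o2, o3, o4, k1, -, -, -⟩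
      · have hsw : star w * u = sc p * (star y * u) := by
          rw [hwy, star_mul, star_sc, ← sc_comm, mul_assoc]
        have key2 : ∀ x : ℤ, normSq w ∣ p * x → (p : ℤ) ∣ x := by
          intro x hx
          rw [hm, hmp] at hx
          exact Int.dvd_of_mul_dvd_mul_left hppos.ne' hx
        rw [hsw] at d1 d2 d3 d4
        have d1 := key2 _ (by simpa only [re_sc_mul] using d1)
        have d2 := key2 _ (by simpa only [imI_sc_mul] using d2)
        have d3 := key2 _ (by simpa only [imJ_sc_mul] using d3)
        have d4 := key2 _ (by simpa only [imK_sc_mul] using d4)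
        apply hup
        have huy : u = y * (star y * u) := by
          rw [← mul_assoc, self_mul_star', hyn, sc_one, one_mul]
        rw [huy]
        generalize star y * u = c at d1 d2 d3 d4
        obtain ⟨c1, d1⟩ := d1
        obtain ⟨c2, d2⟩ := d2
        obtain ⟨c3, d3⟩ := d3
        obtain ⟨c4, d4⟩ := d4
        refine ⟨?_, ?_, ?_, ?_⟩
        · rw [re_mul, d1, d2, d3, d4]; exact ⟨y.re * c1 - y.imI * c2 - y.imJ * c3 - y.imK * c4, by ring⟩
        · rw [imI_mul, d1, d2, d3, d4]; exact ⟨y.re * c2 + y.imI * c1 + y.imJ * c4 - y.imK * c3, by ring⟩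
        · rw [imJ_mul, d1, d2, d3, d4]; exact ⟨y.re * c3 - y.imI * c4 + y.imJ * c1 + y.imK * c2, by ring⟩
        · rw [imK_mul, d1, d2, d3, d4]; exact ⟨y.re * c4 + y.imI * c3 - y.imJ * c2 + y.imK * c1, by ring⟩
      · rw [hm, hmp] at k1
        have h1 : Odd ((p : ℤ) * p * (2 * o1 + 1)) := by
          have : Odd (p : ℤ) := by rw [Int.odd_iff]; omega
          exact (this.mul this).mul ⟨o1, rfl⟩
        rw [← k1] at h1
        exact (Int.not_odd_iff_even.mpr (even_two_mul _)) h1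
  · exfalso
    simp only [re_mul_sc, imI_mul_sc, imJ_mul_sc, imK_mul_sc] at k1 k2 k3 k4
    have key : ∀ x o : ℤ, 2 * (x * p) = normSq w * (2 * o + 1) → 2 * x = m * (2 * o + 1) := by
      intro x o h
      rw [hm] at h
      apply mul_left_cancel₀ hppos.ne'
      linarith
    have k1 := key _ _ k1
    have k2 := key _ _ k2
    have k3 := key _ _ k3
    have k4 := key _ _ k4
    simp at k1 k2 k3 k4
    obtain ⟨z1, e1⟩ := odd_sq8 o1
    obtain ⟨z2, e2⟩ := odd_sq8 o2
    obtain ⟨z3, e3⟩ := odd_sq8 o3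
    obtain ⟨z4, e4⟩ := odd_sq8 o4
    have hh : (p : ℤ) = m * (2 * (z1 + z2 + z3 + z4) + 1) := by
      have : 4 * m * (p : ℤ) = 4 * m * (m * (2 * (z1 + z2 + z3 + z4) + 1)) := by
        have : 4 * (p * m) = m ^ 2 * ((2*o1+1)^2 + (2*o2+1)^2+(2*o3+1)^2+(2*o4+1)^2) := by
          rw [← hm, hns]
          linear_combination (2 * w.re + m * (2 * o1 + 1)) * k1 - (-2 * w.imI + m * (2 * o2 + 1)) * (-k2) - (-2 * w.imJ + m * (2 * o3 + 1)) * (-k3) - (-2 * w.imK + m * (2 * o4 + 1)) * (-k4)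
        rw [e1, e2, e3, e4] at this
        linear_combination this
      exact mul_left_cancel₀ (by omega) this
    have hmodd : Odd m := by
      have : Odd (p : ℤ) := by rw [Int.odd_iff]; omega
      rw [hh] at this
      exact (Int.odd_mul.mp this).1
    have : Odd (m * (2 * o1 + 1)) := hmodd.mul ⟨o1, rfl⟩
    rw [← k1] at this
    exact (Int.not_odd_iff_even.mpr (even_two_mul _)) this

end FS

end

section
open Quaternion
namespace FS

lemma R_finite (n : ℕ) : {v : ℍ[ℤ] | normSq v = n}.Finite := by
  let F : ℍ[ℤ] → ℤ × ℤ × ℤ × ℤ := fun v => (v.re, v.imI, v.imJ, v.imK)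
  have hF : Function.Injective F := by
    intro v w h
    simp only [F, Prod.mk.injEq] at h
    obtain ⟨h1, h2, h3, h4⟩ := h
    ext <;> assumption
  let I := Set.Icc (-(n:ℤ)) n
  have hI : I.Finite := Set.finite_Icc _ _
  refine Set.Finite.subset ((hI.prod (hI.prod (hI.prod hI))).preimage hF.injOn) ?_
  intro v hv
  have hv : normSq v = n := hv
  rw [normSq_def'] at hv
  have key : ∀ x : ℤ, x ^ 2 ≤ n → x ∈ I := by
    intro x hx
    have h1 : |x| ≤ x ^ 2 := by
      rw [← sq_abs]
      rcases (abs_nonneg x).eq_or_lt with h | h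
      · rw [← h]; norm_num
      · nlinarith
    exact abs_le.mp (h1.trans hx)
  have p1 := sq_nonneg v.re
  have p2 := sq_nonneg v.imI
  have p3 := sq_nonneg v.imJ
  have p4 := sq_nonneg v.imK
  exact ⟨key _ (by linarith), key _ (by linarith), key _ (by linarith), key _ (by linarith)⟩

noncomputable def RF (n : ℕ) : Finset ℍ[ℤ] := (R_finite n).toFinset

lemma mem_RF {n : ℕ} {v : ℍ[ℤ]} : v ∈ RF n ↔ normSq v = n := by simp [RF]

lemma sc_mul_eq (p : ℤ) (v : ℍ[ℤ]) (h : dvdQ p v) : ∃ w, v = sc p * w := by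
  obtain ⟨⟨a, ha⟩, ⟨b, hb⟩, ⟨c, hc⟩, ⟨e, he⟩⟩ := h
  set y : ℍ[ℤ] := ⟨a, b, c, e⟩ with hy
  refine ⟨y, ?_⟩
  ext
  · rw [re_sc_mul, ha]
  · rw [imI_sc_mul, hb]
  · rw [imJ_sc_mul, hc]
  · rw [imK_sc_mul, he]

lemma sc_inj {p : ℤ} (hp : p ≠ 0) {v w : ℍ[ℤ]} (h : sc p * v = sc p * w) : v = w := by
  ext
  · have := congrArg QuaternionAlgebra.re h
    rw [re_sc_mul, re_sc_mul] at this; exact mul_left_cancel₀ hp this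
  · have := congrArg QuaternionAlgebra.imI h
    rw [imI_sc_mul, imI_sc_mul] at this; exact mul_left_cancel₀ hp this
  · have := congrArg QuaternionAlgebra.imJ h
    rw [imJ_sc_mul, imJ_sc_mul] at this; exact mul_left_cancel₀ hp this
  · have := congrArg QuaternionAlgebra.imK h
    rw [imK_sc_mul, imK_sc_mul] at this; exact mul_left_cancel₀ hp this

lemma normSq_sc (p : ℤ) : normSq (sc p) = p ^ 2 := by
  rw [normSq_def']; simp [sc]

open Classical in
lemma count {p : ℕ} [Fact p.Prime] (hp2 : p ≠ 2) (n : ℕ) :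
    (p + 1) * (RF n).card ≤ (RF (p * n)).card + p * ((RF (p * n)).filter (fun v => dvdQ p v)).card := by
  have hp : p.Prime := Fact.out
  obtain ⟨a, b, hab⟩ := ZMod.sq_add_sq p (-1)
  let S : Option (ZMod p) → ZMod p := fun o => o.elim 0 (fun _ => 1)
  let T : Option (ZMod p) → ZMod p := fun o => o.elim 1 (fun t => t)
  have hST : ∀ o, S o ≠ 0 ∨ T o ≠ 0 := by
    rintro (_ | t)
    · right; simp [T]
    · left; simp [S]
  have hdet : ∀ o o', o ≠ o' → S o * T o' - S o' * T o ≠ 0 := by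
    rintro (_ | t) (_ | t') h
    · exact absurd rfl h
    · simp [S, T]
    · simp [S, T]
    · simp only [S, T, Option.elim, one_mul]
      intro h'
      exact h (by rw [sub_eq_zero.mp h'])
  choose w hw hwn using fun o => exists_norm_p (p := p) hp2 hab (hST o)
  have hp0 : (p : ℤ) ≠ 0 := by exact_mod_cast hp.ne_zero
  have hinj : ∀ o, Function.Injective (fun v => w o * v) := by
    intro o v v' h
    have h : w o * v = w o * v' := h
    have h2 := congrArg (fun x => star (w o) * x) h
    simp only [← mul_assoc, star_mul_self', hwn] at h2
    exact sc_inj hp0 h2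
  set R' := (RF (p * n)).filter (fun v => dvdQ p v) with hR'
  let A : Option (ZMod p) → Finset ℍ[ℤ] := fun o => (RF n).image (fun v => w o * v)
  have hA : ∀ o, (A o).card = (RF n).card := fun o => Finset.card_image_of_injective _ (hinj o)
  have hAs : ∀ o, A o ⊆ RF (p * n) := by
    intro o x hx
    obtain ⟨v, hv, rfl⟩ := Finset.mem_image.mp hx
    rw [mem_RF] at hv ⊢
    rw [map_mul, hwn, hv]; push_cast; rfl
  have hAL : ∀ o, ∀ x ∈ A o, memL a b (S o) (T o) x := by
    intro o x hx
    obtain ⟨v, hv, rfl⟩ := Finset.mem_image.mp hx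
    exact memL_mul hab (hw o) v
  have hdis : ∀ o ∈ (Finset.univ : Finset (Option (ZMod p))), ∀ o' ∈ (Finset.univ : Finset (Option (ZMod p))), o ≠ o' → Disjoint (A o \ R') (A o' \ R') := by
    intro o _ o' _ hoo
    rw [Finset.disjoint_left]
    intro x hx hx'
    rw [Finset.mem_sdiff] at hx hx'
    apply hx.2
    rw [hR', Finset.mem_filter]
    exact ⟨hAs _ hx.1, dvdQ_of_two hp2 hab (hdet o o' hoo) (hAL _ _ hx.1) (hAL _ _ hx'.1)⟩
  have h1 := Finset.card_biUnion hdis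
  have h2 : (Finset.univ.biUnion (fun o => A o \ R')) ⊆ RF (p * n) \ R' := by
    intro x hx
    obtain ⟨o, -, hx⟩ := Finset.mem_biUnion.mp hx
    rw [Finset.mem_sdiff] at hx ⊢
    exact ⟨hAs _ hx.1, hx.2⟩
  have h3 := Finset.card_le_card h2
  rw [h1] at h3
  have h4 : (RF (p * n) \ R').card + R'.card = (RF (p * n)).card :=
    Finset.card_sdiff_add_card_eq_card (Finset.filter_subset _ _)
  have h5 : ∀ o ∈ (Finset.univ : Finset (Option (ZMod p))), (RF n).card ≤ (A o \ R').card + R'.card := by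
    intro o _
    rw [← hA o]
    have := Finset.le_card_sdiff R' (A o)
    omega
  have h6 := Finset.sum_le_sum h5
  rw [Finset.sum_add_distrib] at h6
  simp only [Finset.sum_const, Finset.card_univ, Fintype.card_option, ZMod.card, smul_eq_mul] at h6
  nlinarith

lemma r4_mul {p : ℕ} [Fact p.Prime] (hp2 : p ≠ 2) (n : ℕ) :
    0 < n → p * (RF n).card ≤ (RF (p * n)).card := by
  classical
  have hp : p.Prime := Fact.out
  have hp0 : (p : ℤ) ≠ 0 := by exact_mod_cast hp.ne_zero
  induction n using Nat.strong_induction_on with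
  | _ n ih =>
    intro hn
    have hc := count hp2 n
    have hdiv : ∀ v, v ∈ (RF (p * n)).filter (fun v => dvdQ p v) → ∃ w, v = sc p * w ∧ p * normSq w = n := by
      intro v hv
      rw [Finset.mem_filter, mem_RF] at hv
      obtain ⟨w, hw⟩ := sc_mul_eq _ _ hv.2
      refine ⟨w, hw, ?_⟩
      have := hv.1
      rw [hw, map_mul, normSq_sc] at this
      push_cast at this
      apply mul_left_cancel₀ hp0
      linarith
    by_cases hpn : p ∣ n
    · obtain ⟨m, rfl⟩ := hpn
      have hm : 0 < m := Nat.pos_of_mul_pos_left hn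
      have hlt : m < p * m := by nlinarith [hp.two_le]
      have h1 := ih m hlt hm
      have h2 : ((RF (p * (p * m))).filter (fun v => dvdQ p v)).card ≤ (RF m).card := by
        refine (Finset.card_le_card (t := (RF m).image (fun v => sc p * v)) ?_).trans Finset.card_image_le
        intro v hv
        obtain ⟨w, hw, hw2⟩ := hdiv v hv
        refine Finset.mem_image.mpr ⟨w, mem_RF.mpr ?_, hw.symm⟩
        push_cast at hw2
        exact mul_left_cancel₀ hp0 hw2
      nlinarith
    · have h2 : (RF (p * n)).filter (fun v => dvdQ p v) = ∅ := by
        rw [Finset.eq_empty_iff_forall_notMem]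
        intro v hv
        obtain ⟨w, hw, hw2⟩ := hdiv v hv
        apply hpn
        exact Int.natCast_dvd_natCast.mp ⟨_, hw2.symm⟩
      rw [h2] at hc
      simp only [Finset.card_empty, mul_zero, add_zero] at hc
      nlinarith

lemma r4_odd (n : ℕ) : n % 2 = 1 → n ≤ (RF n).card := by
  induction n using Nat.strong_induction_on with
  | _ n ih =>
    intro hn
    by_cases h1 : n = 1
    · subst h1
      have : (1 : ℍ[ℤ]) ∈ RF 1 := by rw [mem_RF]; simp
      exact Finset.card_pos.mpr ⟨_, this⟩
    · have hp := Nat.minFac_prime h1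
      haveI : Fact (n.minFac).Prime := ⟨hp⟩
      obtain ⟨m, hm⟩ := Nat.minFac_dvd n
      generalize n.minFac = p at *
      have hodd : p % 2 = 1 ∧ m % 2 = 1 := by
        rw [hm, ← Nat.odd_iff, Nat.odd_mul, Nat.odd_iff, Nat.odd_iff] at hn; exact hn
      have hm0 : 0 < m := by omega
      have hlt : m < n := by rw [hm]; nlinarith [hp.two_le]
      have := ih m hlt hodd.2
      have h2 := r4_mul (p := p) (by omega) m hm0
      rw [← hm] at h2
      calc n = p * m := hm
        _ ≤ p * (RF m).card := Nat.mul_le_mul_left _ this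
        _ ≤ _ := h2

end FS

end

open scoped BigOperators ENNReal Real
noncomputable section
section
open Quaternion
namespace FS

lemma SF_finite (d N : ℕ) : {m : Fin d → ℤ | ∑ i, m i ^ 2 = (N:ℤ)}.Finite := by
  refine Set.Finite.subset (Set.Finite.pi (fun _ => Set.finite_Icc (-(N:ℤ)) N)) ?_
  intro m hm i _
  have hm : ∑ i, m i ^ 2 = (N:ℤ) := hm
  have h1 : m i ^ 2 ≤ N := by
    rw [← hm]
    exact Finset.single_le_sum (f := fun i => m i ^ 2) (fun j _ => sq_nonneg (m j)) (Finset.mem_univ i)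
  have h2 : |m i| ≤ m i ^ 2 := by
    rw [← sq_abs]
    rcases (abs_nonneg (m i)).eq_or_lt with h | h
    · rw [← h]; norm_num
    · nlinarith
  exact abs_le.mp (h2.trans h1)

def SF (d N : ℕ) : Finset (Fin d → ℤ) := (SF_finite d N).toFinset

lemma mem_SF {d N : ℕ} {m : Fin d → ℤ} : m ∈ SF d N ↔ ∑ i, m i ^ 2 = (N:ℤ) := by simp [SF]

lemma SF_four (n : ℕ) : (RF n).card ≤ (SF 4 n).card := by
  apply Finset.card_le_card_of_injOn (fun v => ![v.re, v.imI, v.imJ, v.imK])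
  · intro v hv
    have hv := mem_RF.mp hv
    rw [normSq_def'] at hv
    apply mem_SF.mpr
    simp [Fin.sum_univ_four, hv]
  · intro v _ w _ h
    have h0 := congrFun h 0
    have h1 := congrFun h 1
    have h2 := congrFun h 2
    have h3 := congrFun h 3
    simp at h0 h1 h2 h3
    ext <;> assumption

lemma SF_succ (d N : ℕ) (X : Finset ℕ) (hX : ∀ x ∈ X, x ^ 2 ≤ N) :
    ∑ x ∈ X, (SF d (N - x ^ 2)).card ≤ (SF (d + 1) N).card := by
  rw [← Finset.card_sigma X (fun x => SF d (N - x ^ 2))]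
  apply Finset.card_le_card_of_injOn (fun y => Fin.cons (y.1 : ℤ) y.2)
  · rintro ⟨x, m⟩ hv
    have hv := Finset.mem_sigma.mp hv
    have h1 := hX _ hv.1
    have h2 := mem_SF.mp hv.2
    apply mem_SF.mpr
    simp only at h1 h2
    rw [Fin.sum_univ_succ]
    simp only [Fin.cons_zero, Fin.cons_succ, h2]
    push_cast [h1]
    ring
  · rintro ⟨x, m⟩ _ ⟨y, n⟩ _ h
    have h0 := congrFun h 0
    simp at h0
    subst h0
    have h1 : m = n := by
      funext i
      have := congrFun h i.succ
      simpa using this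
    subst h1
    rfl

lemma SF_five (N : ℕ) (hN : 1 ≤ N) : (1/16 : ℝ) * (√N) ^ 3 ≤ (SF 5 N).card := by
  set s := Nat.sqrt (N / 2) with hs
  have hs1 : s * s ≤ N / 2 := Nat.sqrt_le _
  have hs2 : N / 2 < (s + 1) * (s + 1) := Nat.lt_succ_sqrt _
  set e := (N + 1) % 2 with he
  have hes : e ≤ s := by
    by_contra h
    have : e = 1 ∧ s = 0 := by omega
    rw [this.2] at hs2
    omega
  set h := (s - e) / 2 + 1 with hh
  set X := (Finset.range h).image (fun y => 2 * y + e) with hXd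
  have hXc : X.card = h := by
    rw [hXd, Finset.card_image_of_injective, Finset.card_range]
    intro a b hab
    simp only at hab
    omega
  have hXs : ∀ x ∈ X, x ^ 2 ≤ N / 2 ∧ N % 2 ≠ x % 2 := by
    intro x hx
    obtain ⟨y, hy, rfl⟩ := Finset.mem_image.mp hx
    have hy := Finset.mem_range.mp hy
    have : 2 * y + e ≤ s := by omega
    refine ⟨?_, by omega⟩
    nlinarith
  have key := SF_succ 4 N X (fun x hx => (hXs x hx).1.trans (Nat.div_le_self _ _))
  have hterm : ∀ x ∈ X, N - N / 2 ≤ (SF 4 (N - x ^ 2)).card := by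
    intro x hx
    obtain ⟨h1, h2⟩ := hXs x hx
    have h3 : (N - x ^ 2) % 2 = 1 := by
      have : x ^ 2 % 2 = x % 2 := by
        rcases Nat.mod_two_eq_zero_or_one x with h | h <;> simp [Nat.pow_mod, h]
      omega
    have := (r4_odd _ h3).trans (SF_four _)
    omega
  have h5 := (Finset.card_nsmul_le_sum X _ _ hterm).trans key
  rw [hXc, smul_eq_mul] at h5
  have h6 : N ≤ 2 * (N - N / 2) := by omega
  have h7 : s + 1 ≤ 4 * h := by omega
  have h8 : N ≤ 32 * h ^ 2 := by nlinarith [show N < 2 * ((s + 1) * (s + 1)) by omega]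
  have h9 : √(N:ℝ) ≤ 6 * h := by
    apply Real.sqrt_le_iff.mpr
    refine ⟨by positivity, ?_⟩
    have : (N:ℝ) ≤ 32 * h ^ 2 := by exact_mod_cast h8
    nlinarith
  have h10 : (h : ℝ) * N ≤ 2 * (SF 5 N).card := by
    have : h * N ≤ 2 * (SF 5 N).card := by nlinarith
    exact_mod_cast this
  have h11 : √(N:ℝ) ^ 3 = √(N:ℝ) * N := by
    rw [pow_succ, Real.sq_sqrt (Nat.cast_nonneg _)]; ring
  rw [h11]
  have hN0 : (0:ℝ) ≤ N := Nat.cast_nonneg _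
  nlinarith [mul_le_mul_of_nonneg_right h9 hN0]

lemma SF_lower (i : ℕ) : ∃ c : ℝ, 0 < c ∧ ∀ N : ℕ, 1 ≤ N → c * (√N) ^ (3 + i) ≤ (SF (5 + i) N).card := by
  induction i with
  | zero => exact ⟨1/16, by norm_num, SF_five⟩
  | succ i ih =>
    obtain ⟨c, hc, h⟩ := ih
    refine ⟨c / 2 ^ (4 + i), by positivity, ?_⟩
    intro N hN
    set s := Nat.sqrt (N / 2) with hs
    have hs1 : s * s ≤ N / 2 := Nat.sqrt_le _
    have hs2 : N / 2 < (s + 1) * (s + 1) := Nat.lt_succ_sqrt _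
    have hX : ∀ x ∈ Finset.range (s + 1), x ^ 2 ≤ N / 2 := by
      intro x hx
      have := Finset.mem_range.mp hx
      nlinarith
    have key := SF_succ (5 + i) N (Finset.range (s + 1)) (fun x hx => (hX x hx).trans (Nat.div_le_self _ _))
    have key' : ∑ x ∈ Finset.range (s + 1), ((SF (5 + i) (N - x ^ 2)).card : ℝ) ≤ (SF (5 + i + 1) N).card := by
      exact_mod_cast key
    have hterm : ∀ x ∈ Finset.range (s + 1), c * (√N / 2) ^ (3 + i) ≤ ((SF (5 + i) (N - x ^ 2)).card : ℝ) := by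
      intro x hx
      have h1 := hX x hx
      refine le_trans ?_ (h (N - x ^ 2) (by omega))
      have h2 : √(N:ℝ) / 2 ≤ √((N - x ^ 2 : ℕ) : ℝ) := by
        apply Real.le_sqrt_of_sq_le
        rw [div_pow, Real.sq_sqrt (Nat.cast_nonneg _)]
        have : N ≤ 2 * (N - x ^ 2) := by omega
        have : (N:ℝ) ≤ 2 * ((N - x ^ 2 : ℕ) : ℝ) := by exact_mod_cast this
        have h0 : (0:ℝ) ≤ ((N - x ^ 2 : ℕ) : ℝ) := Nat.cast_nonneg _
        linarith
      gcongr
    have h5 := (Finset.card_nsmul_le_sum _ _ _ hterm).trans key'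
    rw [Finset.card_range, nsmul_eq_mul] at h5
    have h9 : √(N:ℝ) ≤ 2 * (s + 1 : ℕ) := by
      apply Real.sqrt_le_iff.mpr
      refine ⟨by positivity, ?_⟩
      have : N ≤ 4 * (s + 1) ^ 2 := by nlinarith [show N < 2 * ((s + 1) * (s + 1)) by omega]
      have : (N:ℝ) ≤ 4 * ((s + 1 : ℕ) : ℝ) ^ 2 := by exact_mod_cast this
      linarith
    refine le_trans ?_ h5
    have : c / 2 ^ (4 + i) * √(N:ℝ) ^ (3 + (i + 1)) = (√N / 2) * (c * (√N / 2) ^ (3 + i)) := by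
      rw [div_pow]; field_simp; ring
    rw [this]
    gcongr
    linarith

end FS
end

lemma nsq_eq_iff {d : ℕ} (m : Fin d → ℤ) (lam : ℝ) (N : ℕ) (h : (N:ℝ) = lam ^ 2) :
    m ∈ sph d lam ↔ m ∈ FS.SF d N := by
  rw [FS.mem_SF, sph, Set.mem_setOf_eq, nsq, ← h]
  constructor
  · intro h; exact_mod_cast h
  · intro h; exact_mod_cast h

lemma sph_eq {d : ℕ} (lam : ℝ) (N : ℕ) (h : (N:ℝ) = lam ^ 2) : sph d lam = ↑(FS.SF d N) := by
  ext m; exact nsq_eq_iff m lam N h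

lemma sph_finite {d : ℕ} (lam : ℝ) (N : ℕ) (h : (N:ℝ) = lam ^ 2) : (sph d lam).Finite := by
  rw [sph_eq lam N h]; exact Finset.finite_toSet _

/-- Lower bound for the number of lattice points on spheres. -/
lemma Nlam_lower (d : ℕ) (hd : 5 ≤ d) : ∃ c : ℝ, 0 < c ∧ ∀ (lam : ℝ) (N : ℕ), 1 ≤ lam →
    (N:ℝ) = lam ^ 2 → c * lam ^ (d - 2) ≤ Nlam d lam := by
  obtain ⟨i, rfl⟩ := Nat.exists_eq_add_of_le hd
  obtain ⟨c, hc, h⟩ := FS.SF_lower i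
  refine ⟨c, hc, fun lam N hl hN => ?_⟩
  have h1 : 1 ≤ N := by
    have : (1:ℝ) ≤ N := by rw [hN]; nlinarith
    exact_mod_cast this
  have h2 := h N h1
  rw [hN, Real.sqrt_sq (by linarith)] at h2
  rw [Nlam, sph_eq lam N hN]
  simp only [Nat.card_eq_fintype_card, SetLike.coe_sort_coe, Fintype.card_coe]
  have : 5 + i - 2 = 3 + i := by omega
  rw [this]
  exact h2
end

open scoped BigOperators ENNReal Real
noncomputable section
section
open Complex

lemma card_two_tors (q : ℕ) [NeZero q] :
    ((Finset.univ : Finset (ZMod q)).filter (fun h => 2 * h = 0)).card ≤ 2 := by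
  have : (Finset.univ : Finset (ZMod q)).filter (fun h => 2 * h = 0) ⊆ {0, ((q / 2 : ℕ) : ZMod q)} := by
    intro h hh
    simp only [Finset.mem_filter, Finset.mem_univ, true_and] at hh
    simp only [Finset.mem_insert, Finset.mem_singleton]
    have h1 : ((2 * h.val : ℕ) : ZMod q) = 0 := by push_cast; rw [ZMod.natCast_zmod_val]; exact hh
    rw [ZMod.natCast_eq_zero_iff] at h1
    have h2 := ZMod.val_lt h
    obtain ⟨c, hc⟩ := h1
    have hc2 : c < 2 := by
      by_contra hcc
      have : q * 2 ≤ q * c := Nat.mul_le_mul_left _ (by omega)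
      omega
    interval_cases c
    · left
      rw [← ZMod.val_eq_zero]; omega
    · right
      have : h.val = q / 2 := by omega
      rw [← this, ZMod.natCast_zmod_val]
  exact (Finset.card_le_card this).trans Finset.card_le_two

lemma gauss_zmod (q : ℕ) [NeZero q] (a l : ZMod q) (ha : IsUnit a) :
    ‖∑ r : ZMod q, ZMod.stdAddChar (a * r ^ 2 + l * r)‖ ^ 2 ≤ 2 * q := by
  set χ := ZMod.stdAddChar (N := q) with hχ
  set G := ∑ r : ZMod q, χ (a * r ^ 2 + l * r) with hG
  have hconj : (starRingEnd ℂ) G = ∑ s : ZMod q, χ (-(a * s ^ 2 + l * s)) := by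
    rw [hG, map_sum]
    refine Finset.sum_congr rfl fun s _ => ?_
    rw [AddChar.map_neg_eq_conj]
  have h1 : G * (starRingEnd ℂ) G = ∑ h : ZMod q, χ (a * h ^ 2 + l * h) * (if 2 * h = 0 then (q:ℂ) else 0) := by
    rw [hconj, hG, Finset.sum_mul_sum, Finset.sum_comm]
    have : ∀ s : ZMod q, ∑ r : ZMod q, χ (a * r ^ 2 + l * r) * χ (-(a * s ^ 2 + l * s))
        = ∑ h : ZMod q, χ (a * h ^ 2 + l * h) * χ (s * (2 * h * a)) := by
      intro s
      rw [← Equiv.sum_comp (Equiv.addRight s)]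
      refine Finset.sum_congr rfl fun h _ => ?_
      rw [← AddChar.map_add_eq_mul, ← AddChar.map_add_eq_mul]
      congr 1
      simp only [Equiv.coe_addRight]
      ring
    rw [Finset.sum_congr rfl (fun s _ => this s), Finset.sum_comm]
    refine Finset.sum_congr rfl fun h _ => ?_
    rw [← Finset.mul_sum, AddChar.sum_mulShift _ (ZMod.isPrimitive_stdAddChar q), ZMod.card]
    congr 1
    simp only [ha.mul_left_eq_zero]
    split_ifs <;> simp
  have h2 : ‖G‖ ^ 2 = ‖G * (starRingEnd ℂ) G‖ := by rw [norm_mul, RCLike.norm_conj, sq]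
  rw [h2, h1]
  refine (norm_sum_le _ _).trans ?_
  have h3 : ∀ h : ZMod q, ‖χ (a * h ^ 2 + l * h) * (if 2 * h = 0 then (q:ℂ) else 0)‖ = if 2 * h = 0 then (q:ℝ) else 0 := by
    intro h
    rw [norm_mul, AddChar.norm_apply, one_mul]
    split_ifs <;> simp
  rw [Finset.sum_congr rfl (fun h _ => h3 h), ← Finset.sum_filter, Finset.sum_const, nsmul_eq_mul]
  have := card_two_tors q
  have : (((Finset.univ : Finset (ZMod q)).filter (fun h => 2 * h = 0)).card : ℝ) ≤ 2 := by exact_mod_cast this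
  gcongr

lemma gauss_bound (q : ℕ) [NeZero q] (a l : ℤ) (ha : IsCoprime a (q : ℤ)) :
    ‖∑ r : Fin q, cexp (2 * π * I * ((a * (r:ℕ) ^ 2 + l * (r:ℕ) : ℤ) : ℂ) / q)‖ ^ 2 ≤ 2 * q := by
  have hu : IsUnit (a : ZMod q) := by
    exact (ZMod.coe_int_isUnit_iff_isCoprime a q).mpr ha.symm
  have := gauss_zmod q a l hu
  have e : ∑ r : Fin q, cexp (2 * π * I * ((a * (r:ℕ) ^ 2 + l * (r:ℕ) : ℤ) : ℂ) / q)
      = ∑ r : ZMod q, ZMod.stdAddChar ((a : ZMod q) * r ^ 2 + (l : ZMod q) * r) := by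
    refine Fintype.sum_bijective (fun r : Fin q => ((r:ℕ) : ZMod q)) ?_ _ _ ?_
    · rw [Fintype.bijective_iff_injective_and_card]
      refine ⟨?_, by simp [ZMod.card]⟩
      intro r s h
      have h := congrArg ZMod.val h
      simp only [ZMod.val_cast_of_lt r.2, ZMod.val_cast_of_lt s.2] at h
      exact Fin.ext h
    · intro r
      rw [← ZMod.stdAddChar_coe]
      push_cast
      rfl
  rw [e]; exact this
end
end

open scoped BigOperators ENNReal Real
noncomputable section
section
open Complex

/-- Gaussian weight twisted by a quadratic phase. -/
def ew (Λ α : ℝ) (n : ℤ) : ℂ := cexp (-(π:ℂ) * ((((Λ ^ 2)⁻¹ : ℝ) : ℂ) - 2 * I * α) * n ^ 2)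

/-- The theta series. -/
def th (Λ α x : ℝ) : ℂ := ∑' n : ℤ, ew Λ α n * cexp (2 * π * I * n * x)

lemma summable_gen (z x : ℂ) (hz : 0 < z.re) : Summable (fun n : ℤ => cexp (-π * z * n ^ 2 + 2 * π * I * n * x)) := by
  have := (summable_jacobiTheta₂_term_iff x (I * z)).mpr (by simpa using hz)
  refine this.congr fun n => ?_
  unfold jacobiTheta₂_term
  congr 1
  linear_combination ((π * z * n ^ 2 : ℂ)) * I_sq

lemma summable_real_gauss (c y : ℝ) (hc : 0 < c) : Summable (fun n : ℤ => Real.exp (-c * (y - n) ^ 2)) := by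
  have h := (summable_gen (c / π) (-I * (c * y / π)) (by 
    have : ((c:ℂ) / π).re = c / π := by rw [← ofReal_div, ofReal_re]
    rw [this]; positivity)).norm
  have h2 := h.mul_left (Real.exp (-c * y ^ 2))
  refine h2.congr fun n => ?_
  rw [Complex.norm_exp, ← Real.exp_add]
  congr 1
  have : (-π * (c / π) * n ^ 2 + 2 * π * I * n * (-I * (c * y / π)) : ℂ) = ((- c * n ^ 2 + 2 * c * n * y : ℝ) : ℂ) := by
    have : (π:ℂ) ≠ 0 := by exact_mod_cast Real.pi_ne_zero
    push_cast
    field_simp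
    linear_combination (- 2 * c * n * y : ℂ) * I_sq
  rw [this, ofReal_re]
  ring

lemma gauss_unif : ∃ C : ℝ, 0 < C ∧ ∀ y : ℝ, ∑' n : ℤ, Real.exp (-(1/5) * (y - n) ^ 2) ≤ C := by
  have hs : Summable (fun n : ℤ => Real.exp (-(1/20) * (0 - n) ^ 2)) := summable_real_gauss (1/20) 0 (by norm_num)
  refine ⟨∑' n : ℤ, Real.exp (-(1/20) * (0 - n) ^ 2), hs.tsum_pos (fun _ => (Real.exp_pos _).le) 0 (Real.exp_pos _), ?_⟩
  intro y
  rw [← (Equiv.addRight (round y)).tsum_eq]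
  refine Summable.tsum_le_tsum ?_ ?_ hs
  · intro m
    apply Real.exp_le_exp.mpr
    simp only [Equiv.coe_addRight]
    push_cast
    have hr := abs_sub_round y
    set t := y - round y
    have e : y - (m + round y) = t - m := by simp [t]; ring
    rw [e]
    have hm : (m:ℝ) ^ 2 / 4 ≤ (t - m) ^ 2 := by
      by_cases h0 : m = 0
      · subst h0; simp; positivity
      · have h1 : (1:ℝ) ≤ |(m:ℝ)| := by exact_mod_cast Int.one_le_abs h0
        have h2 : |(m:ℝ)| / 2 ≤ |t - m| := by
          have := abs_sub_abs_le_abs_sub (m:ℝ) t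
          rw [abs_sub_comm (m:ℝ) t] at this
          linarith
        have h3 := pow_le_pow_left₀ (by positivity) h2 2
        rw [sq_abs, div_pow, sq_abs] at h3
        linarith
    nlinarith
  · exact (Equiv.summable_iff (Equiv.addRight (round y))).mpr (summable_real_gauss (1/5) y (by norm_num))

lemma th_formula (Λ : ℝ) (hΛ : 0 < Λ) (q : ℕ) [NeZero q] (a : ℤ) (β x : ℝ) :
    th Λ (a / q + β) x = 1 / (((((Λ ^ 2)⁻¹ : ℝ) : ℂ) - 2 * I * β) * q ^ 2) ^ (1 / 2 : ℂ) *
      ∑' n : ℤ, cexp (-π * (x - n / q) ^ 2 / ((((Λ ^ 2)⁻¹ : ℝ) : ℂ) - 2 * I * β)) *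
        ∑ r : Fin q, cexp (2 * π * I * ((a * (r:ℕ) ^ 2 + n * (r:ℕ) : ℤ) : ℂ) / q) := by
  set z : ℂ := (((Λ ^ 2)⁻¹ : ℝ) : ℂ) - 2 * I * β with hz
  have hzre : z.re = (Λ ^ 2)⁻¹ := by
    rw [hz, sub_re, ofReal_re]; simp
  have hzpos : 0 < z.re := by rw [hzre]; positivity
  have hz0 : z ≠ 0 := by rintro h; rw [h] at hzpos; simp at hzpos
  have hq0 : (q:ℂ) ≠ 0 := by exact_mod_cast NeZero.ne q
  have hqpos : (0:ℝ) < q := by exact_mod_cast Nat.pos_of_ne_zero (NeZero.ne q)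
  -- original summand
  have hterm : ∀ n : ℤ, ew Λ (a / q + β) n * cexp (2 * π * I * n * x)
      = cexp (2 * π * I * (a * n ^ 2 : ℂ) / q) * cexp (-π * z * n ^ 2 + 2 * π * I * n * x) := by
    intro n
    rw [ew, ← Complex.exp_add, ← Complex.exp_add]
    congr 1
    rw [hz]
    push_cast
    ring
  have hsum : Summable (fun n : ℤ => ew Λ (a / q + β) n * cexp (2 * π * I * n * x)) := by
    apply Summable.of_norm
    refine (summable_gen z x hzpos).norm.congr fun n => ?_
    rw [hterm, norm_mul]
    have : (2 * π * I * (a * n ^ 2 : ℂ) / q) = ((2 * π * (a * n ^ 2) / q : ℝ) : ℂ) * I := by push_cast; ring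
    rw [this, norm_exp_ofReal_mul_I, one_mul]
  -- split
  have hsplit : th Λ (a / q + β) x = ∑ r : Fin q, ∑' m : ℤ,
      (cexp (2 * π * I * (a * ((r:ℕ):ℂ) ^ 2) / q) * cexp (-π * z * (r:ℕ) ^ 2 + 2 * π * I * (r:ℕ) * x)) *
        cexp (-π * (z * q ^ 2) * m ^ 2 + 2 * π * (q * (I * x - z * (r:ℕ))) * m) := by
    rw [th, ← (Int.divModEquiv q).symm.tsum_eq]
    have hs2 := (Equiv.summable_iff (Int.divModEquiv q).symm).mpr hsum
    rw [← (Equiv.prodComm (Fin q) ℤ).tsum_eq]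
    have hs3 := (Equiv.summable_iff (Equiv.prodComm (Fin q) ℤ)).mpr hs2
    refine (Summable.tsum_prod hs3).trans ?_
    rw [tsum_fintype]
    refine Finset.sum_congr rfl fun r _ => tsum_congr fun m => ?_
    simp only [Function.comp, Equiv.prodComm_apply, Prod.swap, Int.divModEquiv_symm_apply]
    rw [hterm]
    push_cast
    have e1 : cexp (2 * π * I * (a * (m * q + (r:ℕ)) ^ 2 : ℂ) / q) = cexp (2 * π * I * (a * ((r:ℕ):ℂ) ^ 2) / q) := by
      have : (2 * π * I * (a * (m * q + (r:ℕ)) ^ 2 : ℂ) / q) = 2 * π * I * (a * ((r:ℕ):ℂ) ^ 2) / q + ((a * (m ^ 2 * q + 2 * m * (r:ℕ)) : ℤ) : ℂ) * (2 * π * I) := by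
        push_cast
        field_simp
        ring
      rw [this, Complex.exp_add, Complex.exp_int_mul_two_pi_mul_I, mul_one]
    rw [e1, ← Complex.exp_add, ← Complex.exp_add, ← Complex.exp_add]
    congr 1
    ring
  rw [hsplit]
  have hzq : 0 < (z * q ^ 2).re := by
    have : (z * q ^ 2).re = z.re * q ^ 2 := by
      have : ((q:ℂ) ^ 2) = (((q:ℝ) ^ 2 : ℝ) : ℂ) := by push_cast; rfl
      rw [this, re_mul_ofReal]
    rw [this]; positivity
  simp only [tsum_mul_left, Complex.tsum_exp_neg_quadratic hzq]
  have hs4 : ∀ r : Fin q, Summable (fun n : ℤ => cexp (-π * (x - n / q) ^ 2 / z) * cexp (2 * π * I * ((a * (r:ℕ) ^ 2 + n * (r:ℕ) : ℤ) : ℂ) / q)) := by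
    intro r
    apply Summable.of_norm
    have hz' : 0 < (z⁻¹ / q ^ 2).re := by
      have : ((q:ℂ) ^ 2) = (((q:ℝ) ^ 2 : ℝ) : ℂ) := by push_cast; rfl
      rw [this, div_ofReal_re, inv_re]
      have := normSq_pos.mpr hz0
      positivity
    refine ((summable_gen (z⁻¹ / q ^ 2) (-I * x / z / q) hz').mul_left (cexp (-π * x ^ 2 / z))).norm.congr fun n => ?_
    rw [norm_mul (cexp (-π * (x - n / q) ^ 2 / z))]
    have : (2 * π * I * ((a * (r:ℕ) ^ 2 + n * (r:ℕ) : ℤ) : ℂ) / q) = ((2 * π * (a * (r:ℕ) ^ 2 + n * (r:ℕ) : ℤ) / q : ℝ) : ℂ) * I := by push_cast; ring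
    rw [this, norm_exp_ofReal_mul_I, mul_one, ← Complex.exp_add]
    congr 2
    field_simp
    linear_combination (- 2 * q * n * x : ℂ) * I_sq
  simp only [Finset.mul_sum]
  rw [Summable.tsum_finsetSum (fun r _ => hs4 r), Finset.mul_sum]
  refine Finset.sum_congr rfl fun r _ => ?_
  rw [mul_left_comm]
  congr 1
  rw [← tsum_mul_left]
  refine tsum_congr fun n => ?_
  rw [← Complex.exp_add, ← Complex.exp_add, ← Complex.exp_add]
  congr 1
  push_cast
  field_simp
  have h4 : (I:ℂ) ^ 4 = 1 := I_pow_four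
  have h3 : (I:ℂ) ^ 3 = -I := I_pow_three
  ring_nf
  simp only [h4, h3, I_sq]
  ring
end
end

open scoped BigOperators ENNReal Real
noncomputable section
section
open Complex

set_option maxHeartbeats 1000000 in
/-- The minor/major arc bound for theta series. -/
lemma th_bound : ∃ C : ℝ, 1 ≤ C ∧ ∀ (Λ : ℝ) (q : ℕ) (a : ℤ) (α x ρ : ℝ), 1 ≤ Λ → 1 ≤ q → (q:ℝ) ≤ Λ →
    IsCoprime a (q:ℤ) → |α - a / q| ≤ 1 / (q * Λ) → 0 ≤ ρ → (∀ l : ℤ, ρ ≤ |x - l / q|) →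
    ‖th Λ α x‖ ^ 2 ≤ C * (Λ ^ 2 / (q * (1 + Λ ^ 2 * |α - a / q|))) *
      Real.exp (-(Λ ^ 2 * ρ ^ 2 / (4 * (1 + Λ ^ 2 * |α - a / q|) ^ 2))) := by
  obtain ⟨C0, hC0, hC⟩ := gauss_unif
  refine ⟨max 1 (4 * C0 ^ 2), le_max_left _ _, ?_⟩
  intro Λ q a α x ρ hΛ hq hqΛ hcop hβ hρ hρx
  haveI : NeZero q := ⟨by omega⟩
  set β := α - a / q with hβd
  have hα : α = a / q + β := by rw [hβd]; ring
  have hΛ0 : 0 < Λ := by linarith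
  have hq0 : (0:ℝ) < q := by exact_mod_cast hq
  rw [hα, th_formula Λ hΛ0]
  set T := 1 + Λ ^ 2 * |β| with hT
  have hT1 : 1 ≤ T := by rw [hT]; have : 0 ≤ Λ ^ 2 * |β| := by positivity
                         linarith
  set z : ℂ := (((Λ ^ 2)⁻¹ : ℝ) : ℂ) - 2 * I * β with hz
  have hzre : z.re = (Λ ^ 2)⁻¹ := by
    rw [hz, sub_re, ofReal_re]; simp
  have hzim : z.im = - 2 * β := by
    rw [hz, sub_im, ofReal_im]; simp
  have hz0 : z ≠ 0 := by
    intro h; rw [h] at hzre; simp at hzre; exact (pow_pos hΛ0 2).ne hzre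
  set δ := (z⁻¹).re with hδ
  have hns : Complex.normSq z = (Λ ^ 2)⁻¹ ^ 2 + 4 * β ^ 2 := by
    rw [Complex.normSq_apply, hzre, hzim]; ring
  have hδe : δ = Λ ^ 2 / (1 + 4 * (Λ ^ 2 * β) ^ 2) := by
    rw [hδ, inv_re, hns, hzre]
    field_simp
  have habs : |β| ^ 2 = β ^ 2 := sq_abs β
  -- lower bounds on δ
  have hδ1 : 1 / 5 ≤ δ / q ^ 2 := by
    rw [hδe, div_div, le_div_iff₀ (by positivity)]
    have h1 : q * Λ * |β| ≤ 1 := by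
      rw [le_div_iff₀ (by positivity)] at hβ; linarith
    have h2 : (q * Λ * |β|) ^ 2 ≤ 1 := pow_le_one₀ (by positivity) h1
    have h3 : (q:ℝ) ^ 2 ≤ Λ ^ 2 := pow_le_pow_left₀ hq0.le hqΛ 2
    have h4 : (q * Λ * |β|) ^ 2 = q ^ 2 * Λ ^ 2 * β ^ 2 := by rw [mul_pow, mul_pow, habs]
    rw [h4] at h2
    have h5 := mul_le_mul_of_nonneg_left h2 (sq_nonneg Λ)
    nlinarith
  have hδ2 : Λ ^ 2 / (4 * T ^ 2) ≤ δ := by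
    rw [hδe]
    apply div_le_div_of_nonneg_left (by positivity) (by positivity)
    have h0 : (Λ ^ 2 * β) ^ 2 = (Λ ^ 2 * |β|) ^ 2 := by rw [mul_pow, mul_pow, habs]
    rw [h0, hT]
    have : 0 ≤ Λ ^ 2 * |β| := by positivity
    nlinarith
  have hδ0 : 0 < δ := lt_of_lt_of_le (by positivity) hδ2
  -- lower bound on |z|
  have hzn : T / (2 * Λ ^ 2) ≤ ‖z‖ := by
    refine (sq_le_sq₀ (by positivity) (norm_nonneg z)).mp ?_
    rw [← Complex.normSq_eq_norm_sq, hns]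
    have h0 : (Λ ^ 2)⁻¹ ^ 2 + 4 * β ^ 2 = (1 + 4 * (Λ ^ 2 * |β|) ^ 2) / (Λ ^ 2) ^ 2 := by
      rw [mul_pow, habs]; field_simp
    rw [h0, div_pow, mul_pow, div_le_div_iff₀ (by positivity) (by positivity), hT]
    have h1 : 0 ≤ Λ ^ 2 * |β| := by positivity
    have h2 : (1 + Λ ^ 2 * |β|) ^ 2 ≤ (1 + 4 * (Λ ^ 2 * |β|) ^ 2) * 2 ^ 2 := by
      nlinarith [sq_nonneg (Λ ^ 2 * |β| - 1)]
    have h3 := mul_le_mul_of_nonneg_right h2 (show (0:ℝ) ≤ (Λ ^ 2) ^ 2 by positivity)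
    linarith
  -- the sum
  set E := Real.exp (-(δ * ρ ^ 2)) with hE
  have hterm : ∀ n : ℤ, ‖cexp (-π * (x - n / q) ^ 2 / z) *
        ∑ r : Fin q, cexp (2 * π * I * ((a * (r:ℕ) ^ 2 + n * (r:ℕ) : ℤ) : ℂ) / q)‖ ≤
        (E * √(2 * q)) * Real.exp (-(1/5) * (q * x - n) ^ 2) := by
    intro n
    rw [norm_mul, Complex.norm_exp]
    have e1 : (-π * (x - n / q) ^ 2 / z : ℂ).re = -π * (x - n / q) ^ 2 * δ := by
      have : (-π * (x - n / q) ^ 2 / z : ℂ) = ((-π * (x - n / q) ^ 2 : ℝ) : ℂ) * z⁻¹ := by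
        push_cast; ring
      rw [this, re_ofReal_mul]
    rw [e1]
    have e2 : ‖∑ r : Fin q, cexp (2 * π * I * ((a * (r:ℕ) ^ 2 + n * (r:ℕ) : ℤ) : ℂ) / q)‖ ≤ √(2 * q) :=
      Real.le_sqrt_of_sq_le (gauss_bound q a n hcop)
    have e3 : Real.exp (-π * (x - n / q) ^ 2 * δ) ≤ E * Real.exp (-(1/5) * (q * x - n) ^ 2) := by
      rw [hE, ← Real.exp_add]
      apply Real.exp_le_exp.mpr
      have h1 : ρ ^ 2 ≤ (x - n / q) ^ 2 := by
        rw [← sq_abs (x - n / q)]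
        exact pow_le_pow_left₀ hρ (hρx n) 2
      have h2 : (q * x - n) ^ 2 = q ^ 2 * (x - n / q) ^ 2 := by
        field_simp
      have h3 : 1/5 * (q:ℝ) ^ 2 ≤ δ := by
        rw [le_div_iff₀ (by positivity)] at hδ1; exact hδ1
      rw [h2]
      have h4 := mul_le_mul_of_nonneg_right h3 (sq_nonneg (x - n / q))
      have h5 := mul_le_mul_of_nonneg_left h1 hδ0.le
      have h6 : 0 ≤ δ * (x - n / q) ^ 2 := by positivity
      have h7 := mul_le_mul_of_nonneg_right Real.pi_gt_three.le h6
      generalize (x - n / q) ^ 2 = D at h4 h5 h6 h7 ⊢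
      linarith
    calc _ ≤ (E * Real.exp (-(1/5) * (q * x - n) ^ 2)) * √(2 * q) := by gcongr
      _ = _ := by ring
  have hsum := summable_real_gauss (1/5) (q * x) (by norm_num)
  have hS : ‖∑' n : ℤ, cexp (-π * (x - n / q) ^ 2 / z) *
        ∑ r : Fin q, cexp (2 * π * I * ((a * (r:ℕ) ^ 2 + n * (r:ℕ) : ℤ) : ℂ) / q)‖ ≤ (E * √(2 * q)) * C0 := by
    refine (tsum_of_norm_bounded (hsum.mul_left _).hasSum hterm).trans ?_
    rw [tsum_mul_left]
    have := hC (q * x)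
    gcongr
  have hpow : ‖(z * q ^ 2) ^ (1 / 2 : ℂ)‖ ^ 2 = ‖z‖ * q ^ 2 := by
    rw [← norm_pow]
    have : ((z * q ^ 2) ^ (1 / 2 : ℂ)) ^ 2 = z * q ^ 2 := by
      rw [one_div]; exact Complex.cpow_ofNat_inv_pow _ 2
    rw [this, norm_mul, norm_pow, Complex.norm_natCast]
  rw [norm_mul, mul_pow, norm_div, div_pow, hpow, norm_one, one_pow]
  have hE2 : E ^ 2 ≤ Real.exp (-(Λ ^ 2 * ρ ^ 2 / (4 * T ^ 2))) := by
    rw [hE, ← Real.exp_nat_mul]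
    apply Real.exp_le_exp.mpr
    have h1 := mul_le_mul_of_nonneg_right hδ2 (sq_nonneg ρ)
    have h2 : Λ ^ 2 * ρ ^ 2 / (4 * T ^ 2) = Λ ^ 2 / (4 * T ^ 2) * ρ ^ 2 := by ring
    rw [h2]
    have h3 : 0 ≤ δ * ρ ^ 2 := by positivity
    push_cast
    linarith
  have hzpos : 0 < ‖z‖ := norm_pos_iff.mpr hz0
  calc 1 / (‖z‖ * q ^ 2) * ‖∑' n : ℤ, cexp (-π * (x - n / q) ^ 2 / z) *
        ∑ r : Fin q, cexp (2 * π * I * ((a * (r:ℕ) ^ 2 + n * (r:ℕ) : ℤ) : ℂ) / q)‖ ^ 2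
      ≤ 1 / (T / (2 * Λ ^ 2) * q ^ 2) * ((E * √(2 * q)) * C0) ^ 2 := by gcongr
    _ = 4 * C0 ^ 2 * (Λ ^ 2 / (q * T)) * E ^ 2 := by
      rw [mul_pow, mul_pow, Real.sq_sqrt (by positivity)]; field_simp; ring
    _ ≤ max 1 (4 * C0 ^ 2) * (Λ ^ 2 / (q * T)) * Real.exp (-(Λ ^ 2 * ρ ^ 2 / (4 * T ^ 2))) := by
      have h1 : 4 * C0 ^ 2 ≤ max 1 (4 * C0 ^ 2) := le_max_right _ _
      have h2 : 0 ≤ Λ ^ 2 / (q * T) := by positivity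
      have h3 : 0 ≤ max 1 (4 * C0 ^ 2) := le_trans (by norm_num) (le_max_left _ _)
      exact mul_le_mul (mul_le_mul_of_nonneg_right h1 h2) hE2 (sq_nonneg _) (mul_nonneg h3 h2)
end
end

open scoped BigOperators ENNReal Real
noncomputable section

lemma pow_exp_bd : ∃ C : ℝ, 0 < C ∧ ∀ k : ℕ, 1 ≤ k → ((2:ℝ) ^ ((k:ℝ) / 2)) ^ (-(1/8) : ℝ) ≤ C * (k:ℝ) ^ (-(3/2) : ℝ) := by
  have h := tendsto_rpow_mul_exp_neg_mul_atTop_nhds_zero (3/2) (Real.log 2 / 16) (by have := Real.log_pos one_lt_two; positivity)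
  have h2 := h.comp (tendsto_natCast_atTop_atTop (R := ℝ))
  obtain ⟨C, hC⟩ := h2.bddAbove_range
  refine ⟨max C 1, by positivity, fun k hk => ?_⟩
  have h3 := hC ⟨k, rfl⟩
  simp only [Function.comp] at h3
  have hk0 : (0:ℝ) < k := by exact_mod_cast hk
  rw [Real.rpow_neg hk0.le, ← div_eq_mul_inv, le_div_iff₀ (by positivity)]
  refine le_trans (le_of_eq ?_) (h3.trans (le_max_left _ _))
  rw [← Real.rpow_mul (by norm_num), mul_comm, Real.rpow_def_of_pos (by norm_num : (0:ℝ) < 2)]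
  congr 2
  ring

/-- set of bad denominators -/
def badB (x δ : ℝ) (q : ℕ) : Prop := ∃ l : ℤ, |x - l / q| ≤ δ

lemma badB_mul {x δ : ℝ} {q m : ℕ} (hm : m ≠ 0) (h : badB x δ q) : badB x δ (q * m) := by
  obtain ⟨l, hl⟩ := h
  refine ⟨l * m, ?_⟩
  have hm : (m:ℝ) ≠ 0 := by exact_mod_cast hm
  push_cast
  rwa [mul_div_mul_right _ _ hm]

lemma badB_dvd {x δ L : ℝ} (hL : 0 < L) (hδ : 2 * δ ≤ 1 / L) {q0 : ℕ} (hq0 : 1 ≤ q0) (h0 : badB x δ q0)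
    (hmin : ∀ q, 1 ≤ q → badB x δ q → q0 ≤ q) {q : ℕ} (hq : 1 ≤ q) (h : badB x δ q)
    (hqL : (q:ℝ) ^ 2 < L) : q0 ∣ q := by
  obtain ⟨l0, hl0⟩ := h0
  have hle := hmin q hq h
  obtain ⟨l, hl⟩ := h
  have hq' : (0:ℝ) < q := by exact_mod_cast hq
  have hq0' : (0:ℝ) < q0 := by exact_mod_cast hq0
  have hle' : (q0:ℝ) ≤ q := by exact_mod_cast hle
  have h1 : |(l:ℝ) / q - l0 / q0| ≤ 1 / L := by
    have e : (l:ℝ) / q - l0 / q0 = (x - l0 / q0) - (x - l / q) := by ring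
    rw [e]
    refine (abs_sub _ _).trans ?_
    linarith
  have h2 : |(l * q0 - l0 * q : ℤ)| < 1 := by
    have e : ((l * q0 - l0 * q : ℤ) : ℝ) = ((l:ℝ) / q - l0 / q0) * (q * q0) := by
      push_cast; field_simp
    have : |((l * q0 - l0 * q : ℤ) : ℝ)| < 1 := by
      rw [e, abs_mul, abs_of_pos (mul_pos hq' hq0')]
      calc _ ≤ 1 / L * (q * q0) := by gcongr
        _ ≤ 1 / L * (q ^ 2) := by rw [sq]; gcongr
        _ < 1 / L * L := by gcongr
        _ = 1 := by field_simp
    exact_mod_cast this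
  have h3 : l * q0 = l0 * q := by
    rw [Int.abs_lt_one_iff] at h2; omega
  -- coprimality
  set g := Int.gcd l0 q0 with hg
  have hgpos : 0 < g := Int.gcd_pos_of_ne_zero_right _ (by exact_mod_cast (Nat.pos_iff_ne_zero.mp hq0))
  obtain ⟨l1, hl1⟩ : (g:ℤ) ∣ l0 := Int.gcd_dvd_left ..
  obtain ⟨q1', hq1'⟩ : (g:ℤ) ∣ q0 := Int.gcd_dvd_right ..
  have hq1 : ∃ q1 : ℕ, q0 = g * q1 := by
    have : g ∣ q0 := by
      have : (g:ℤ) ∣ q0 := ⟨_, hq1'⟩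
      exact_mod_cast this
    exact this
  obtain ⟨q1, hq1⟩ := hq1
  have hq1pos : 1 ≤ q1 := by
    rcases Nat.eq_zero_or_pos q1 with h | h
    · subst h; omega
    · exact h
  have hgR : (g:ℝ) ≠ 0 := by exact_mod_cast hgpos.ne'
  have hb1 : badB x δ q1 := by
    refine ⟨l1, ?_⟩
    have : (l0:ℝ) / q0 = l1 / q1 := by
      rw [hq1, hl1]; push_cast; rw [mul_div_mul_left _ _ hgR]
    rwa [← this]
  have h5 := hmin q1 hq1pos hb1
  have hg1 : g = 1 := by
    by_contra hne
    have : 2 ≤ g := by omega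
    nlinarith
  have hcop : IsCoprime (q0:ℤ) l0 := by
    rw [Int.isCoprime_iff_gcd_eq_one, Int.gcd_comm]; exact hg1
  have : (q0:ℤ) ∣ l0 * q := ⟨l, by linarith⟩
  exact_mod_cast hcop.dvd_of_dvd_mul_left this

lemma sum_le_zeta (s : ℝ) (hs : 1 < s) : ∃ C : ℝ, 0 < C ∧ ∀ F : Finset ℕ, ∑ q ∈ F, (q:ℝ) ^ (-s) ≤ C := by
  have h : Summable (fun n : ℕ => (n:ℝ) ^ (-s)) := Real.summable_nat_rpow.mpr (by linarith)
  refine ⟨max 1 (∑' n : ℕ, (n:ℝ) ^ (-s)), by positivity, fun F => ?_⟩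
  exact (h.sum_le_tsum F (fun n _ => by positivity)).trans (le_max_right _ _)

open Classical in
lemma arith_sum : ∃ C : ℝ, 0 < C ∧ ∀ (j k Q : ℕ) (x : ℝ), 2 ^ (j + 2) ≤ k → k < 2 ^ (j + 3) →
    (∀ n, 1 ≤ n → n ≤ 2 ^ j → n ∣ Q) → 1 ≤ Q → ¬ badB x (1 / (2 * 2 ^ (k - j))) Q → ∀ F : Finset ℕ, (∀ q ∈ F, 1 ≤ q) →
    ∑ q ∈ F, (q:ℝ) ^ (-(3/2) : ℝ) * (if badB x (1 / (2 * 2 ^ (k - j))) q then 1 else ((2:ℝ) ^ j) ^ (-(3/2) : ℝ)) ≤ C * (k:ℝ) ^ (-(3/2) : ℝ) := by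
  obtain ⟨C1, hC1, h1⟩ := sum_le_zeta (3/2) (by norm_num)
  obtain ⟨C2, hC2, h2⟩ := sum_le_zeta (5/4) (by norm_num)
  obtain ⟨C3, hC3, h3⟩ := pow_exp_bd
  refine ⟨2 * C1 * 8 ^ (3/2 : ℝ) + C2 * C3, by positivity, ?_⟩
  intro j k Q x hjk hkj hQ hQ1 hx F hF
  set δ : ℝ := 1 / (2 * 2 ^ (k - j)) with hδ
  set L : ℝ := 2 ^ (k - j) with hL
  have hLpos : 0 < L := by positivity
  have hk1 : 1 ≤ k := le_trans (Nat.one_le_two_pow) hjk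
  have hk0 : (0:ℝ) < k := by exact_mod_cast hk1
  have hj2 : 2 * j ≤ k := by
    have : j < 2 ^ j := Nat.lt_two_pow_self
    rw [pow_add] at hjk; omega
  have hLk : (2:ℝ) ^ ((k:ℝ) / 2) ≤ L := by
    rw [hL, ← Real.rpow_natCast]
    apply Real.rpow_le_rpow_of_exponent_le (by norm_num)
    rw [Nat.cast_sub (by omega)]
    have : (2 * j : ℝ) ≤ k := by exact_mod_cast hj2
    linarith
  have h2j : ((2:ℝ) ^ j) ^ (-(3/2) : ℝ) ≤ 8 ^ (3/2 : ℝ) * (k:ℝ) ^ (-(3/2) : ℝ) := by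
    have : (k:ℝ) / 8 ≤ 2 ^ j := by
      have : k ≤ 2 ^ j * 8 := by rw [pow_add] at hkj; omega
      have : (k:ℝ) ≤ 2 ^ j * 8 := by exact_mod_cast this
      linarith
    refine (Real.rpow_le_rpow_of_nonpos (by positivity) this (by norm_num)).trans (le_of_eq ?_)
    rw [Real.div_rpow hk0.le (by norm_num), Real.rpow_neg (by norm_num : (0:ℝ) ≤ 8)]
    field_simp
  -- Bad small
  have hsmall : ∑ q ∈ F.filter (fun q => badB x δ q ∧ (q:ℝ) ^ 2 < L), (q:ℝ) ^ (-(3/2) : ℝ) ≤ C1 * ((2:ℝ) ^ j) ^ (-(3/2) : ℝ) := by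
    by_cases hex : ∃ q, 1 ≤ q ∧ badB x δ q
    · set q0 := Nat.find hex with hq0
      obtain ⟨hq01, hq0b⟩ := Nat.find_spec hex
      have hmin : ∀ q, 1 ≤ q → badB x δ q → q0 ≤ q := fun q h h' => Nat.find_min' hex ⟨h, h'⟩
      have hq0j : 2 ^ j < q0 := by
        by_contra hcon
        obtain ⟨m, hm⟩ := hQ q0 hq01 (by omega)
        apply hx
        rw [hm]
        refine badB_mul ?_ hq0b
        rintro rfl
        omega
      have hdvd : ∀ q ∈ F.filter (fun q => badB x δ q ∧ (q:ℝ) ^ 2 < L), q0 * (q / q0) = q := by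
        intro q hq
        rw [Finset.mem_filter] at hq
        exact Nat.mul_div_cancel' (badB_dvd (L := L) hLpos (by rw [hδ]; apply le_of_eq; field_simp) hq01 hq0b hmin (hF q hq.1) hq.2.1 hq.2.2)
      calc ∑ q ∈ F.filter (fun q => badB x δ q ∧ (q:ℝ) ^ 2 < L), (q:ℝ) ^ (-(3/2) : ℝ)
          = ∑ q ∈ F.filter (fun q => badB x δ q ∧ (q:ℝ) ^ 2 < L), (q0:ℝ) ^ (-(3/2) : ℝ) * ((q / q0 : ℕ):ℝ) ^ (-(3/2) : ℝ) := by
            refine Finset.sum_congr rfl fun q hq => ?_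
            rw [← Real.mul_rpow (by positivity) (by positivity), ← Nat.cast_mul, hdvd q hq]
        _ = (q0:ℝ) ^ (-(3/2) : ℝ) * ∑ m ∈ (F.filter (fun q => badB x δ q ∧ (q:ℝ) ^ 2 < L)).image (fun q => q / q0), (m:ℝ) ^ (-(3/2) : ℝ) := by
            rw [← Finset.mul_sum, Finset.sum_image]
            intro a ha b hb hab
            simp only at hab
            rw [← hdvd a ha, ← hdvd b hb, hab]
        _ ≤ ((2:ℝ) ^ j) ^ (-(3/2) : ℝ) * C1 := by
            apply mul_le_mul _ (h1 _) (Finset.sum_nonneg fun _ _ => by positivity) (by positivity)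
            apply Real.rpow_le_rpow_of_nonpos (by positivity) _ (by norm_num)
            exact_mod_cast hq0j.le
        _ = _ := mul_comm _ _
    · have : F.filter (fun q => badB x δ q ∧ (q:ℝ) ^ 2 < L) = ∅ := by
        rw [Finset.filter_eq_empty_iff]
        intro q hq h
        exact hex ⟨q, hF q hq, h.1⟩
      rw [this, Finset.sum_empty]; positivity
  have hlarge : ∑ q ∈ F.filter (fun q : ℕ => L ≤ (q:ℝ) ^ 2), (q:ℝ) ^ (-(3/2) : ℝ) ≤ C2 * (C3 * (k:ℝ) ^ (-(3/2) : ℝ)) := by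
    calc ∑ q ∈ F.filter (fun q : ℕ => L ≤ (q:ℝ) ^ 2), (q:ℝ) ^ (-(3/2) : ℝ)
        ≤ ∑ q ∈ F.filter (fun q : ℕ => L ≤ (q:ℝ) ^ 2), (q:ℝ) ^ (-(5/4) : ℝ) * (C3 * (k:ℝ) ^ (-(3/2) : ℝ)) := by
          refine Finset.sum_le_sum fun q hq => ?_
          rw [Finset.mem_filter] at hq
          have hq0 : (0:ℝ) < q := by exact_mod_cast hF q hq.1
          have e : (q:ℝ) ^ (-(3/2) : ℝ) = (q:ℝ) ^ (-(5/4) : ℝ) * ((q:ℝ) ^ 2) ^ (-(1/8) : ℝ) := by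
            rw [← Real.rpow_natCast, ← Real.rpow_mul hq0.le, ← Real.rpow_add hq0]
            norm_num
          rw [e]
          gcongr
          refine le_trans ?_ (h3 k hk1)
          exact Real.rpow_le_rpow_of_nonpos (by positivity) (hLk.trans hq.2) (by norm_num)
      _ ≤ _ := by
          rw [← Finset.sum_mul]
          gcongr
          exact h2 _
  calc ∑ q ∈ F, (q:ℝ) ^ (-(3/2) : ℝ) * (if badB x δ q then 1 else ((2:ℝ) ^ j) ^ (-(3/2) : ℝ))
      ≤ ∑ q ∈ F, ((q:ℝ) ^ (-(3/2) : ℝ) * ((2:ℝ) ^ j) ^ (-(3/2) : ℝ)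
          + (if badB x δ q ∧ (q:ℝ) ^ 2 < L then (q:ℝ) ^ (-(3/2) : ℝ) else 0)
          + (if L ≤ (q:ℝ) ^ 2 then (q:ℝ) ^ (-(3/2) : ℝ) else 0)) := by
        refine Finset.sum_le_sum fun q hq => ?_
        have p1 : 0 ≤ (q:ℝ) ^ (-(3/2) : ℝ) := by positivity
        have p2 : 0 ≤ (q:ℝ) ^ (-(3/2) : ℝ) * ((2:ℝ) ^ j) ^ (-(3/2) : ℝ) := by positivity
        by_cases hb : badB x δ q
        · rw [if_pos hb]
          by_cases hl : L ≤ (q:ℝ) ^ 2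
          · rw [if_pos hl]
            have : 0 ≤ (if badB x δ q ∧ (q:ℝ) ^ 2 < L then (q:ℝ) ^ (-(3/2) : ℝ) else 0) := by split_ifs <;> positivity
            linarith
          · rw [if_neg hl, if_pos ⟨hb, not_le.mp hl⟩]; linarith
        · rw [if_neg hb, if_neg (fun h => hb h.1)]
          have : 0 ≤ (if L ≤ (q:ℝ) ^ 2 then (q:ℝ) ^ (-(3/2) : ℝ) else 0) := by split_ifs <;> positivity
          linarith
    _ ≤ C1 * ((2:ℝ) ^ j) ^ (-(3/2) : ℝ) + C1 * ((2:ℝ) ^ j) ^ (-(3/2) : ℝ) + C2 * (C3 * (k:ℝ) ^ (-(3/2) : ℝ)) := by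
        rw [Finset.sum_add_distrib, Finset.sum_add_distrib, ← Finset.sum_mul, ← Finset.sum_filter, ← Finset.sum_filter]
        gcongr
        exact h1 _
    _ ≤ _ := by
        have := mul_le_mul_of_nonneg_left h2j hC1.le
        linarith
end

open scoped BigOperators ENNReal Real
noncomputable section
open MeasureTheory in
lemma J_bound : ∃ C : ℝ, 0 < C ∧ ∀ (Λ c : ℝ), 1 ≤ Λ →
    ∫⁻ α : ℝ, ENNReal.ofReal ((1 + Λ ^ 2 * |α - c|) ^ (-(3/2) : ℝ)) ≤ ENNReal.ofReal (C / Λ ^ 2) := by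
  have hi : Integrable (fun x : ℝ => (1 + ‖x‖) ^ (-(3/2) : ℝ)) := integrable_one_add_norm (by norm_num)
  refine ⟨max 1 (∫ x : ℝ, (1 + ‖x‖) ^ (-(3/2) : ℝ)), by positivity, ?_⟩
  intro Λ c hΛ
  rw [lintegral_sub_right_eq_self (fun α => ENNReal.ofReal ((1 + Λ ^ 2 * |α|) ^ (-(3/2) : ℝ))) c]
  have hΛ2 : 0 < Λ ^ 2 := by positivity
  have h1 : (fun x : ℝ => (1 + Λ ^ 2 * |x|) ^ (-(3/2) : ℝ)) = fun x => (fun x : ℝ => (1 + ‖x‖) ^ (-(3/2) : ℝ)) (Λ ^ 2 * x) := by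
    funext x
    simp only [Real.norm_eq_abs, abs_mul, abs_of_pos hΛ2]
  have h2 : Integrable (fun x : ℝ => (1 + Λ ^ 2 * |x|) ^ (-(3/2) : ℝ)) := by
    rw [h1]; exact hi.comp_mul_left' hΛ2.ne'
  rw [← ofReal_integral_eq_lintegral_ofReal h2 (ae_of_all _ fun x => by positivity)]
  apply ENNReal.ofReal_le_ofReal
  have h3 := Measure.integral_comp_mul_left (fun x : ℝ => (1 + ‖x‖) ^ (-(3/2) : ℝ)) (Λ ^ 2)
  rw [h1, h3, abs_of_pos (inv_pos.mpr hΛ2), smul_eq_mul]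
  refine (mul_le_mul_of_nonneg_left ?_ (inv_pos.mpr hΛ2).le).trans_eq (div_eq_inv_mul _ _).symm
  exact le_max_right 1 (∫ x : ℝ, (1 + ‖x‖) ^ (-(3/2) : ℝ))

/-- Farey arc -/
def arc (Λ : ℝ) (q : ℕ) (a : ℤ) : Set ℝ := {α | |α - a / q| ≤ 1 / (q * Λ)}

/-- dilated distance to the centre of the arc -/
def TT (Λ : ℝ) (q : ℕ) (a : ℤ) (α : ℝ) : ℝ := 1 + Λ ^ 2 * |α - a / q|

lemma one_le_TT (Λ : ℝ) (q : ℕ) (a : ℤ) (α : ℝ) : 1 ≤ TT Λ q a α := by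
  have : 0 ≤ Λ ^ 2 * |α - a / q| := by positivity
  rw [TT]; linarith

open Classical in
/-- Farey index set -/
def FI (K : ℕ) : Finset (Σ _ : ℕ, ℤ) :=
  (Finset.Icc 1 K).sigma (fun q => (Finset.Icc (0:ℤ) q).filter (fun a => IsCoprime a (q:ℤ)))

lemma mem_FI {K : ℕ} {i : Σ _ : ℕ, ℤ} : i ∈ FI K ↔ (1 ≤ i.1 ∧ i.1 ≤ K) ∧ (0 ≤ i.2 ∧ i.2 ≤ i.1) ∧ IsCoprime i.2 (i.1:ℤ) := by
  simp [FI]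

lemma arc_cover (K : ℕ) (hK : 1 ≤ K) (α : ℝ) (h0 : 0 ≤ α) (h1 : α ≤ 1) : ∃ i ∈ FI K, α ∈ arc K i.1 i.2 := by
  obtain ⟨r, hr1, hr2⟩ := Real.exists_rat_abs_sub_le_and_den_le α hK
  have hden : (0:ℝ) < r.den := by exact_mod_cast r.den_pos
  have hK0 : (0:ℝ) < K := by exact_mod_cast hK
  have hcast : (r:ℝ) = r.num / r.den := Rat.cast_def r
  rw [hcast] at hr1
  have h3 : |r.den * α - r.num| < 1 := by
    have e : r.den * α - r.num = r.den * (α - r.num / r.den) := by field_simp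
    rw [e, abs_mul, abs_of_pos hden]
    calc _ ≤ (r.den:ℝ) * (1 / ((K + 1) * r.den)) := by gcongr
      _ = 1 / (K + 1) := by field_simp
      _ < 1 := by rw [div_lt_one (by positivity)]; linarith
  rw [abs_lt] at h3
  refine ⟨⟨r.den, r.num⟩, mem_FI.mpr ⟨⟨r.den_pos, hr2⟩, ⟨?_, ?_⟩, ?_⟩, ?_⟩
  · have : (-1 : ℝ) < r.num := by nlinarith [mul_nonneg hden.le h0]
    have : (-1 : ℤ) < r.num := by exact_mod_cast this
    simp only; omega
  · have : (r.num : ℝ) < r.den + 1 := by nlinarith [mul_le_mul_of_nonneg_left h1 hden.le]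
    have : r.num < r.den + 1 := by exact_mod_cast this
    simp only; omega
  · simp only
    rw [Int.isCoprime_iff_gcd_eq_one]
    exact r.reduced
  · simp only [arc, Set.mem_setOf_eq]
    refine hr1.trans ?_
    apply one_div_le_one_div_of_le (by positivity)
    nlinarith

lemma exp_neg_le (y : ℝ) (hy : 0 < y) : Real.exp (-y) ≤ y ^ (-(3/4) : ℝ) := by
  rw [Real.exp_neg, Real.rpow_neg hy.le]
  apply inv_anti₀ (by positivity)
  have h1 := Real.add_one_le_exp y
  rcases le_total y 1 with h | h
  · have := Real.rpow_le_one hy.le h (show (0:ℝ) ≤ 3/4 by norm_num)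
    linarith
  · have := Real.rpow_le_rpow_of_exponent_le h (show (3/4:ℝ) ≤ 1 by norm_num)
    rw [Real.rpow_one] at this
    linarith

open Classical in
lemma pointwise_arc (d : ℕ) (hd : 5 ≤ d) : ∃ C : ℝ, 0 < C ∧ ∀ (j k q : ℕ) (a : ℤ) (α : ℝ) (t : Fin d → ℝ) (i0 : Fin d),
    j ≤ k → 1 ≤ q → q ≤ 2 ^ k → IsCoprime a (q:ℤ) → α ∈ arc (2 ^ k) q a →
    ((q:ℝ) ^ (5/2 : ℝ) * (TT (2 ^ k) q a α) ^ (3/2 : ℝ)) * ∏ i, ‖th (2 ^ k) α (t i)‖ ^ 2 ≤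
      C * (((2:ℝ) ^ k) ^ 2) ^ d * ((q:ℝ) ^ (-(5/2) : ℝ) * (TT (2 ^ k) q a α) ^ (-(3/2) : ℝ)) *
        (if badB (t i0) (1 / (2 * 2 ^ (k - j))) q then 1 else ((2:ℝ) ^ j) ^ (-(3/2) : ℝ)) := by
  obtain ⟨C, hC, hth⟩ := th_bound
  refine ⟨8 * C ^ d, by positivity, ?_⟩
  intro j k q a α t i0 hjk hq hqk hcop hα
  set Λ : ℝ := 2 ^ k with hΛ
  have hΛ1 : 1 ≤ Λ := one_le_pow₀ (by norm_num)
  have hT1 := one_le_TT Λ q a α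
  set T := TT Λ q a α with hT
  have hT0 : 0 < T := by linarith
  have hq0 : (0:ℝ) < q := by exact_mod_cast hq
  have hq1 : (1:ℝ) ≤ q := by exact_mod_cast hq
  have hqΛ : (q:ℝ) ≤ Λ := by rw [hΛ]; exact_mod_cast hqk
  set η : ℝ := if badB (t i0) (1 / (2 * 2 ^ (k - j))) q then 1 else ((2:ℝ) ^ j) ^ (-(3/2) : ℝ) with hη
  have hη0 : 0 ≤ η := by rw [hη]; split_ifs <;> positivity
  have hgen : ∀ i, ‖th Λ α (t i)‖ ^ 2 ≤ C * (Λ ^ 2 / (q * T)) := by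
    intro i
    have := hth Λ q a α (t i) 0 hΛ1 hq hqΛ hcop hα le_rfl (fun l => abs_nonneg _)
    simpa [hT, TT] using this
  have hspec : ‖th Λ α (t i0)‖ ^ 2 ≤ C * (Λ ^ 2 / (q * T)) * (8 * η * T ^ (3/2:ℝ)) := by
    have hT32 : 1 ≤ T ^ (3/2:ℝ) := Real.one_le_rpow hT1 (by norm_num)
    by_cases hb : badB (t i0) (1 / (2 * 2 ^ (k - j))) q
    · have e : η = 1 := by rw [hη, if_pos hb]
      rw [e]
      refine (hgen i0).trans (le_mul_of_one_le_right (by positivity) ?_)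
      linarith
    · have e : η = ((2:ℝ) ^ j) ^ (-(3/2) : ℝ) := by rw [hη, if_neg hb]
      rw [e]
      have := hth Λ q a α (t i0) (1 / (2 * 2 ^ (k - j))) hΛ1 hq hqΛ hcop hα (by positivity) (by
        intro l
        by_contra hcon
        exact hb ⟨l, (not_le.mp hcon).le⟩)
      refine this.trans ?_
      change C * (Λ ^ 2 / (q * T)) * Real.exp (-(Λ ^ 2 * (1 / (2 * 2 ^ (k - j))) ^ 2 / (4 * T ^ 2))) ≤ _
      apply mul_le_mul_of_nonneg_left _ (by positivity)
      have e2 : Λ ^ 2 * (1 / (2 * 2 ^ (k - j))) ^ 2 / (4 * T ^ 2) = ((2:ℝ) ^ j / (4 * T)) ^ 2 := by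
        have : Λ = 2 ^ (k - j) * 2 ^ j := by rw [hΛ, ← pow_add]; congr 1; omega
        rw [this]; field_simp; norm_num
      rw [e2]
      refine (exp_neg_le _ (by positivity)).trans (le_of_eq ?_)
      rw [← Real.rpow_natCast, ← Real.rpow_mul (by positivity)]
      have e3 : ((2:ℕ):ℝ) * (-(3/4)) = -(3/2) := by norm_num
      rw [e3, Real.div_rpow (by positivity) (by positivity), Real.mul_rpow (by norm_num) hT0.le]
      have e4 : (4:ℝ) ^ (-(3/2) : ℝ) = 1/8 := by
        have : (4:ℝ) = 2 ^ (2:ℝ) := by norm_num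
        rw [this, ← Real.rpow_mul (by norm_num)]
        norm_num
      rw [e4, Real.rpow_neg hT0.le]
      field_simp
  have hprod : ∏ i, ‖th Λ α (t i)‖ ^ 2 ≤ (C * (Λ ^ 2 / (q * T))) ^ d * (8 * η * T ^ (3/2:ℝ)) := by
    rw [← Finset.mul_prod_erase Finset.univ _ (Finset.mem_univ i0)]
    have h1 : ∏ i ∈ Finset.univ.erase i0, ‖th Λ α (t i)‖ ^ 2 ≤ (C * (Λ ^ 2 / (q * T))) ^ (d - 1) := by
      refine (Finset.prod_le_prod (fun _ _ => by positivity) (fun i _ => hgen i)).trans (le_of_eq ?_)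
      rw [Finset.prod_const, Finset.card_erase_of_mem (Finset.mem_univ _), Finset.card_univ, Fintype.card_fin]
    refine (mul_le_mul hspec h1 (Finset.prod_nonneg fun _ _ => by positivity) (by positivity)).trans (le_of_eq ?_)
    have : d = (d - 1) + 1 := by omega
    conv_rhs => rw [this, pow_succ]
    ring
  have hd5 : (C * (Λ ^ 2 / (q * T))) ^ d ≤ C ^ d * (Λ ^ 2) ^ d * ((q:ℝ) ^ (-(5:ℝ)) * T ^ (-(5:ℝ))) := by
    have h1 : ((q:ℝ) * T) ^ 5 ≤ (q * T) ^ d := pow_le_pow_right₀ (by nlinarith) hd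
    have e1 : (q:ℝ) ^ (-(5:ℝ)) * T ^ (-(5:ℝ)) = ((q * T) ^ 5)⁻¹ := by
      rw [← Real.mul_rpow hq0.le hT0.le, Real.rpow_neg (by positivity)]
      norm_cast
    rw [e1, mul_pow, div_pow, mul_assoc, div_eq_mul_inv]
    gcongr
  have hcomb : T ^ (3/2:ℝ) * T ^ (-(5:ℝ)) * T ^ (3/2:ℝ) ≤ T ^ (-(3/2):ℝ) := by
    rw [← Real.rpow_add hT0, ← Real.rpow_add hT0]
    exact Real.rpow_le_rpow_of_exponent_le hT1 (by norm_num)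
  have hcombq : (q:ℝ) ^ (5/2:ℝ) * (q:ℝ) ^ (-(5:ℝ)) = (q:ℝ) ^ (-(5/2):ℝ) := by
    rw [← Real.rpow_add hq0]; norm_num
  calc ((q:ℝ) ^ (5/2 : ℝ) * T ^ (3/2 : ℝ)) * ∏ i, ‖th Λ α (t i)‖ ^ 2
      ≤ ((q:ℝ) ^ (5/2 : ℝ) * T ^ (3/2 : ℝ)) * ((C ^ d * (Λ ^ 2) ^ d * ((q:ℝ) ^ (-(5:ℝ)) * T ^ (-(5:ℝ)))) * (8 * η * T ^ (3/2:ℝ))) := by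
        gcongr
        refine hprod.trans ?_
        gcongr
    _ = 8 * C ^ d * (Λ ^ 2) ^ d * η * (((q:ℝ) ^ (5/2:ℝ) * (q:ℝ) ^ (-(5:ℝ))) * (T ^ (3/2:ℝ) * T ^ (-(5:ℝ)) * T ^ (3/2:ℝ))) := by ring
    _ ≤ 8 * C ^ d * (Λ ^ 2) ^ d * η * ((q:ℝ) ^ (-(5/2):ℝ) * T ^ (-(3/2):ℝ)) := by
        rw [hcombq]
        gcongr
    _ = _ := by ring
end

open scoped BigOperators ENNReal Real
noncomputable section

open MeasureTheory in
lemma farey_sum : ∃ C : ℝ, 0 < C ∧ ∀ (k : ℕ) (η : ℕ → ℝ), (∀ q, 0 ≤ η q) →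
    ∑ i ∈ FI (2 ^ k), ∫⁻ α : ℝ, ENNReal.ofReal (((i.1:ℝ) ^ (-(5/2) : ℝ) * (TT (2 ^ k) i.1 i.2 α) ^ (-(3/2) : ℝ)) * η i.1)
      ≤ ENNReal.ofReal (C / ((2:ℝ) ^ k) ^ 2 * ∑ q ∈ Finset.Icc (1:ℕ) (2 ^ k), (q:ℝ) ^ (-(3/2) : ℝ) * η q) := by
  classical
  obtain ⟨C, hC, hJ⟩ := J_bound
  refine ⟨2 * C, by positivity, ?_⟩
  intro k η hη
  have hterm : ∀ i : (Σ _ : ℕ, ℤ), ∫⁻ α : ℝ, ENNReal.ofReal (((i.1:ℝ) ^ (-(5/2) : ℝ) * (TT (2 ^ k) i.1 i.2 α) ^ (-(3/2) : ℝ)) * η i.1)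
      ≤ ENNReal.ofReal ((i.1:ℝ) ^ (-(5/2) : ℝ) * η i.1 * (C / ((2:ℝ) ^ k) ^ 2)) := by
    intro i
    have h0 : 0 ≤ (i.1:ℝ) ^ (-(5/2) : ℝ) * η i.1 := mul_nonneg (by positivity) (hη _)
    have e : ∀ α : ℝ, ENNReal.ofReal (((i.1:ℝ) ^ (-(5/2) : ℝ) * (TT (2 ^ k) i.1 i.2 α) ^ (-(3/2) : ℝ)) * η i.1)
        = ENNReal.ofReal ((i.1:ℝ) ^ (-(5/2) : ℝ) * η i.1) * ENNReal.ofReal ((TT (2 ^ k) i.1 i.2 α) ^ (-(3/2) : ℝ)) := by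
      intro α
      rw [← ENNReal.ofReal_mul h0]
      congr 1; ring
    simp_rw [e]
    rw [lintegral_const_mul' _ _ ENNReal.ofReal_ne_top, ENNReal.ofReal_mul h0]
    gcongr
    exact hJ (2 ^ k) _ (one_le_pow₀ (by norm_num))
  refine (Finset.sum_le_sum fun i _ => hterm i).trans ?_
  rw [← ENNReal.ofReal_sum_of_nonneg (fun i _ => mul_nonneg (mul_nonneg (by positivity) (hη _)) (by positivity))]
  apply ENNReal.ofReal_le_ofReal
  rw [FI, Finset.sum_sigma, Finset.mul_sum]
  apply Finset.sum_le_sum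
  intro q hq
  have hq1 : 1 ≤ q := (Finset.mem_Icc.mp hq).1
  have hq0 : (0:ℝ) < q := by exact_mod_cast hq1
  simp only [Finset.sum_const, nsmul_eq_mul]
  have hcard : (((Finset.Icc (0:ℤ) q).filter (fun a => IsCoprime a (q:ℤ))).card : ℝ) ≤ 2 * q := by
    have h1 : ((Finset.Icc (0:ℤ) q).filter (fun a => IsCoprime a (q:ℤ))).card ≤ q + 1 := by
      refine (Finset.card_filter_le _ _).trans ?_
      simp
    have : (((Finset.Icc (0:ℤ) q).filter (fun a => IsCoprime a (q:ℤ))).card : ℝ) ≤ q + 1 := by exact_mod_cast h1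
    have : (1:ℝ) ≤ q := by exact_mod_cast hq1
    linarith
  have e : (q:ℝ) ^ (-(3/2) : ℝ) = q * (q:ℝ) ^ (-(5/2) : ℝ) := by
    conv_rhs => rw [← Real.rpow_one_add' hq0.le (by norm_num)]
    norm_num
  rw [e]
  calc _ ≤ 2 * (q:ℝ) * ((q:ℝ) ^ (-(5/2) : ℝ) * η q * (C / ((2:ℝ) ^ k) ^ 2)) := by
        gcongr
        exact mul_nonneg (mul_nonneg (by positivity) (hη _)) (by positivity)
    _ = _ := by ring

open MeasureTheory in
/-- total weight -/
lemma farey_weight : ∃ C : ℝ, 0 < C ∧ ∀ (k : ℕ),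
    ∑ i ∈ FI (2 ^ k), ∫⁻ α : ℝ, ENNReal.ofReal ((i.1:ℝ) ^ (-(5/2) : ℝ) * (TT (2 ^ k) i.1 i.2 α) ^ (-(3/2) : ℝ))
      ≤ ENNReal.ofReal (C / ((2:ℝ) ^ k) ^ 2) := by
  obtain ⟨C, hC, h⟩ := farey_sum
  obtain ⟨C', hC', h'⟩ := sum_le_zeta (3/2) (by norm_num)
  refine ⟨C * C', by positivity, fun k => ?_⟩
  have := h k (fun _ => 1) (fun _ => zero_le_one)
  simp only [mul_one] at this
  refine this.trans (ENNReal.ofReal_le_ofReal ?_)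
  rw [mul_div_right_comm]
  gcongr
  exact h' _

open MeasureTheory in
/-- multiplier bound on the support of `1 - Ψ̂` -/
lemma farey_mult (d : ℕ) (hd : 5 ≤ d) : ∃ C : ℝ, 0 < C ∧ ∀ (j k Q : ℕ) (t : Fin d → ℝ) (i0 : Fin d),
    2 ^ (j + 2) ≤ k → k < 2 ^ (j + 3) → (∀ n, 1 ≤ n → n ≤ 2 ^ j → n ∣ Q) → 1 ≤ Q →
    ¬ badB (t i0) (1 / (2 * 2 ^ (k - j))) Q →
    ∑ i ∈ FI (2 ^ k), ∫⁻ α in arc (2 ^ k) i.1 i.2,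
        ENNReal.ofReal (((i.1:ℝ) ^ (5/2 : ℝ) * (TT (2 ^ k) i.1 i.2 α) ^ (3/2 : ℝ)) * ∏ l, ‖th (2 ^ k) α (t l)‖ ^ 2)
      ≤ ENNReal.ofReal (C * (((2:ℝ) ^ k) ^ 2) ^ d / ((2:ℝ) ^ k) ^ 2 * (k:ℝ) ^ (-(3/2) : ℝ)) := by
  classical
  obtain ⟨C1, hC1, h1⟩ := farey_sum
  obtain ⟨C2, hC2, h2⟩ := pointwise_arc d hd
  obtain ⟨C3, hC3, h3⟩ := arith_sum
  refine ⟨C1 * C2 * C3, by positivity, ?_⟩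
  intro j k Q t i0 hj1 hj2 hdiv hQ hbad
  have hjk : j ≤ k := by
    have : j < 2 ^ (j+2) := (Nat.lt_two_pow_self).trans (Nat.pow_lt_pow_right (by norm_num) (by omega))
    omega
  set A : ℝ := C2 * (((2:ℝ) ^ k) ^ 2) ^ d with hA
  have hA0 : 0 < A := by positivity
  set η : ℕ → ℝ := fun q => A * (if badB (t i0) (1 / (2 * 2 ^ (k - j))) q then 1 else ((2:ℝ) ^ j) ^ (-(3/2) : ℝ)) with hη
  have hη0 : ∀ q, 0 ≤ η q := by
    intro q; simp only [hη]; split_ifs <;> positivity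
  have hstep : ∀ i ∈ FI (2 ^ k), ∫⁻ α in arc (2 ^ k) i.1 i.2,
        ENNReal.ofReal (((i.1:ℝ) ^ (5/2 : ℝ) * (TT (2 ^ k) i.1 i.2 α) ^ (3/2 : ℝ)) * ∏ l, ‖th (2 ^ k) α (t l)‖ ^ 2)
      ≤ ∫⁻ α : ℝ, ENNReal.ofReal (((i.1:ℝ) ^ (-(5/2) : ℝ) * (TT (2 ^ k) i.1 i.2 α) ^ (-(3/2) : ℝ)) * η i.1) := by
    intro i hi
    obtain ⟨⟨hq1, hq2⟩, -, hc⟩ := mem_FI.mp hi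
    refine le_trans ?_ (setLIntegral_le_lintegral (arc (2 ^ k) i.1 i.2) _)
    have hm : MeasurableSet (arc (2 ^ k) i.1 i.2) := by
      apply measurableSet_le <;> fun_prop
    apply setLIntegral_mono' hm
    intro α hα
    apply ENNReal.ofReal_le_ofReal
    refine (h2 j k i.1 i.2 α t i0 hjk hq1 hq2 hc hα).trans (le_of_eq ?_)
    simp only [hη, hA]; ring
  refine (Finset.sum_le_sum hstep).trans ((h1 k η hη0).trans (ENNReal.ofReal_le_ofReal ?_))
  have := h3 j k Q (t i0) hj1 hj2 hdiv hQ hbad (Finset.Icc 1 (2 ^ k)) (fun q hq => (Finset.mem_Icc.mp hq).1)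
  calc _ = C1 / ((2:ℝ) ^ k) ^ 2 * (A * ∑ q ∈ Finset.Icc (1:ℕ) (2 ^ k), (q:ℝ) ^ (-(3/2):ℝ) * (if badB (t i0) (1 / (2 * 2 ^ (k - j))) q then 1 else ((2:ℝ) ^ j) ^ (-(3/2) : ℝ))) := by
        congr 1
        rw [Finset.mul_sum]
        apply Finset.sum_congr rfl
        intro q _
        simp only [hη]; ring
    _ ≤ C1 / ((2:ℝ) ^ k) ^ 2 * (A * (C3 * (k:ℝ) ^ (-(3/2):ℝ))) := by gcongr
    _ = _ := by simp only [hA]; ring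
end

open scoped BigOperators ENNReal Real
noncomputable section

lemma sq_le_two_pow (j : ℕ) (hj : 6 ≤ j) : (j + 2) ^ 2 ≤ 2 ^ j := by
  induction j, hj using Nat.le_induction with
  | base => norm_num
  | succ n hn ih =>
    rw [pow_succ 2 n]
    nlinarith

lemma qlcm_bound (j k : ℕ) (h : 2 ^ (j + 2) ≤ k) : 2 * (qlcm j : ℝ) < 2 ^ (k - j) := by
  have hmono : (2:ℝ) ^ (4 * 2 ^ j - j) ≤ 2 ^ (k - j) := by
    apply pow_le_pow_right₀ (by norm_num)
    have : 4 * 2 ^ j = 2 ^ (j + 2) := by ring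
    omega
  refine lt_of_lt_of_le ?_ hmono
  rcases lt_or_ge j 6 with hj | hj
  · have : 2 * qlcm j < 2 ^ (4 * 2 ^ j - j) := by
      have small : ∀ (i X : ℕ), 0 < X → 2 * X < 2 ^ (4 * 2 ^ i - i) → (∀ b, 1 ≤ b → b ≤ 2 ^ i → b ∣ X) →
          2 * qlcm i < 2 ^ (4 * 2 ^ i - i) := by
        intro i X hX h1 h2
        have h3 : qlcm i ≤ X := Nat.le_of_dvd hX (Finset.lcm_dvd fun b hb => by
          rw [Finset.mem_Icc] at hb
          exact h2 b hb.1 hb.2)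
        omega
      interval_cases j
      · exact small 0 1 (by norm_num) (by norm_num) (by intro b h1 h2; norm_num at h2; interval_cases b <;> norm_num)
      · exact small 1 2 (by norm_num) (by norm_num) (by intro b h1 h2; norm_num at h2; interval_cases b <;> norm_num)
      · exact small 2 12 (by norm_num) (by norm_num) (by intro b h1 h2; norm_num at h2; interval_cases b <;> norm_num)
      · exact small 3 840 (by norm_num) (by norm_num) (by intro b h1 h2; norm_num at h2; interval_cases b <;> norm_num)
      · exact small 4 720720 (by norm_num) (by norm_num) (by intro b h1 h2; norm_num at h2; interval_cases b <;> norm_num)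
      · exact small 5 144403552893600 (by norm_num) (by norm_num) (by intro b h1 h2; norm_num at h2; interval_cases b <;> norm_num)
    exact_mod_cast this
  · have hq : (qlcm j : ℝ) = Nat.lcmUpto (2 ^ j) := rfl
    have h1 := Chebyshev.psi_le (x := ((2 ^ j : ℕ) : ℝ)) (by exact_mod_cast Nat.one_le_two_pow)
    rw [Chebyshev.psi_eq_log_lcmUpto, ← hq] at h1
    have hqpos : 0 < (qlcm j : ℝ) := by rw [hq]; exact_mod_cast Nat.lcmUpto_pos _
    rw [← Real.log_lt_log_iff (by positivity) (by positivity), Real.log_mul (by norm_num) hqpos.ne', Real.log_pow]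
    push_cast at h1
    rw [Real.log_pow] at h1
    have hl4 : Real.log 4 = 2 * Real.log 2 := by
      rw [show (4:ℝ) = 2 ^ 2 by norm_num, Real.log_pow]; norm_num
    rw [hl4] at h1
    set s := √((2:ℝ) ^ j) with hs
    have hss : s ^ 2 = 2 ^ j := Real.sq_sqrt (by positivity)
    have hsj : (j:ℝ) + 2 ≤ s := by
      apply Real.le_sqrt_of_sq_le
      exact_mod_cast sq_le_two_pow j hj
    have hsub : ((4 * 2 ^ j - j : ℕ) : ℝ) = 4 * 2 ^ j - j := by
      have : j < 2 ^ j := Nat.lt_two_pow_self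
      rw [Nat.cast_sub (by omega)]; push_cast; ring
    rw [hsub]
    have hlog : 0 < Real.log 2 := Real.log_pos (by norm_num)
    have hkey : 1 + 2 * (2:ℝ) ^ j + 2 * s * j < 4 * 2 ^ j - j := by
      rw [← hss]
      have hj0 : (0:ℝ) ≤ j := Nat.cast_nonneg j
      nlinarith
    nlinarith

lemma dvd_qlcm (j n : ℕ) (h1 : 1 ≤ n) (h2 : n ≤ 2 ^ j) : n ∣ qlcm j :=
  Finset.dvd_lcm (f := id) (Finset.mem_Icc.mpr ⟨h1, h2⟩)

lemma one_le_qlcm (j : ℕ) : 1 ≤ qlcm j := Nat.lcmUpto_pos (2 ^ j)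

/-- absolutely convergent product formula -/
lemma summable_pi_prod {d : ℕ} (g : Fin d → ℤ → ℂ) (hg : ∀ i, Summable fun n => ‖g i n‖) :
    Summable (fun m : Fin d → ℤ => ‖∏ i, g i (m i)‖) ∧
      ∑' m : Fin d → ℤ, ∏ i, g i (m i) = ∏ i, ∑' n, g i n := by
  induction d with
  | zero => exact ⟨Summable.of_finite, by simp⟩
  | succ d ih =>
    obtain ⟨h1, h2⟩ := ih (fun i => g i.succ) (fun i => hg i.succ)
    let e := Fin.consEquiv (fun _ : Fin (d+1) => ℤ)
    have key : ∀ p : ℤ × (Fin d → ℤ), ∏ i, g i (e p i) = g 0 p.1 * ∏ i : Fin d, g i.succ (p.2 i) := by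
      intro p
      rw [Fin.prod_univ_succ]
      simp [e, Fin.consEquiv]
    constructor
    · rw [← e.summable_iff]
      refine ((hg 0).mul_norm h1).congr ?_
      intro p
      rw [Function.comp_apply, key]
    · rw [← e.tsum_eq, Fin.prod_univ_succ, ← h2, tsum_mul_tsum_of_summable_norm (hg 0) h1]
      exact tsum_congr key
end

open scoped BigOperators ENNReal Real
noncomputable section

lemma summable_schwartz_lattice {d : ℕ} (ψ : SchwartzMap (Fin d → ℝ) ℝ) (s : ℝ) (hs : 0 < s) :
    Summable (fun m : Fin d → ℤ => ‖ψ (fun i => s * (m i : ℝ))‖) := by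
  set B : ℝ := 2 ^ (2 * d) * (Finset.Iic ((2*d, 0) : ℕ × ℕ)).sup (fun m => SchwartzMap.seminorm ℝ m.1 m.2) ψ with hB
  have hdec : ∀ x : Fin d → ℝ, (∏ i, (1 + (x i) ^ 2)) * ‖ψ x‖ ≤ B := by
    intro x
    have h := SchwartzMap.one_add_le_sup_seminorm_apply (𝕜 := ℝ) (m := (2*d, 0)) (k := 2*d) (n := 0) le_rfl le_rfl ψ x
    rw [norm_iteratedFDeriv_zero] at h
    refine le_trans ?_ h
    gcongr
    calc ∏ i, (1 + (x i) ^ 2) ≤ ∏ i : Fin d, (1 + ‖x‖) ^ 2 := by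
          apply Finset.prod_le_prod (fun _ _ => by positivity)
          intro i _
          have h1 := norm_le_pi_norm x i
          rw [Real.norm_eq_abs] at h1
          have h2 := abs_nonneg (x i)
          have h3 : (x i)^2 ≤ ‖x‖^2 := by rw [← sq_abs]; gcongr
          nlinarith
      _ = _ := by rw [Finset.prod_const, Finset.card_univ, Fintype.card_fin, ← pow_mul]
  have hg1 : Summable (fun n : ℤ => ‖(((1 + (s * (n:ℝ)) ^ 2)⁻¹ : ℝ) : ℂ)‖) := by
    have h0 : Summable (fun n : ℤ => (s^2)⁻¹ * (1 / (n:ℝ) ^ 2)) := (Real.summable_one_div_int_pow.mpr (by norm_num)).mul_left _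
    apply Summable.of_norm_bounded_eventually h0
    have : ∀ᶠ n : ℤ in Filter.cofinite, n ≠ 0 := (Set.finite_singleton (0:ℤ)).eventually_cofinite_notMem
    filter_upwards [this] with n hn
    have hn' : (n:ℝ) ≠ 0 := by exact_mod_cast hn
    have h5 : (0:ℝ) < (n:ℝ)^2 := by positivity
    rw [norm_norm, Complex.norm_real, Real.norm_eq_abs, abs_of_pos (by positivity), one_div, ← mul_inv]
    apply inv_anti₀ (by positivity)
    rw [mul_pow]; linarith
  have h2 := (summable_pi_prod (d := d) (fun _ n => (((1 + (s * (n:ℝ)) ^ 2)⁻¹ : ℝ) : ℂ)) (fun _ => hg1)).1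
  refine Summable.of_nonneg_of_le (fun _ => norm_nonneg _) (fun m => ?_) (h2.mul_left B)
  have h3 := hdec (fun i => s * (m i : ℝ))
  have hp : 0 < ∏ i, (1 + (s * (m i : ℝ)) ^ 2) := Finset.prod_pos fun i _ => by positivity
  rw [← Complex.ofReal_prod, Complex.norm_real, Finset.prod_inv_distrib, norm_inv, Real.norm_eq_abs (∏ i, _), abs_of_pos hp]
  rw [← div_eq_mul_inv, le_div_iff₀ hp, mul_comm]
  exact h3

/-- complexified function on Euclidean space -/
def psiE {d : ℕ} (ψ : SchwartzMap (Fin d → ℝ) ℝ) : SchwartzMap (EuclideanSpace ℝ (Fin d)) ℂ :=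
  (SchwartzMap.compCLMOfContinuousLinearEquiv ℝ (EuclideanSpace.equiv (Fin d) ℝ) ψ).postcompCLM Complex.ofRealCLM

lemma psiE_apply {d : ℕ} (ψ : SchwartzMap (Fin d → ℝ) ℝ) (x : EuclideanSpace ℝ (Fin d)) :
    psiE ψ x = (ψ (WithLp.ofLp x) : ℂ) := rfl

open FourierTransform MeasureTheory in
lemma fourier_psiE {d : ℕ} (ψ : SchwartzMap (Fin d → ℝ) ℝ) (ξ : EuclideanSpace ℝ (Fin d)) :
    (𝓕 (psiE ψ)) ξ = ftR (fun x => ψ x) (WithLp.ofLp ξ) := by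
  rw [SchwartzMap.fourier_coe, Real.fourier_eq', ftR]
  rw [← (PiLp.volume_preserving_ofLp (Fin d)).integral_comp (MeasurableEquiv.toLp 2 (Fin d → ℝ)).symm.measurableEmbedding]
  apply integral_congr_ae
  refine ae_of_all _ fun x => ?_
  simp only [psiE_apply, smul_eq_mul, PiLp.inner_apply, RCLike.inner_apply, conj_trivial]
  rw [mul_comm]
  congr 2
  push_cast
  simp only [Finset.mul_sum, Finset.sum_mul]
  apply Finset.sum_congr rfl
  intro i _
  ring

open FourierTransform MeasureTheory in
lemma ftR_facts {d : ℕ} (ψ : SchwartzMap (Fin d → ℝ) ℝ) :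
    Continuous (ftR (fun x => ψ x)) ∧
    ∀ x : Fin d → ℝ, (ψ x : ℂ) = ∫ ξ : Fin d → ℝ, Complex.exp (2 * (π : ℂ) * Complex.I * (∑ i, x i * ξ i)) * ftR (fun x => ψ x) ξ := by
  have e : (ftR fun x => ψ x) = fun ξ : Fin d → ℝ => (𝓕 (psiE ψ)) (WithLp.toLp 2 ξ) := by
    funext ξ; rw [fourier_psiE]
  constructor
  · rw [e]
    exact (𝓕 (psiE ψ)).continuous.comp (PiLp.continuous_toLp 2 _)
  · intro x
    have h1 : (𝓕⁻ (𝓕 (psiE ψ))) (WithLp.toLp 2 x) = psiE ψ (WithLp.toLp 2 x) := by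
      rw [FourierTransform.fourierInv_fourier_eq]
    rw [psiE_apply, SchwartzMap.fourierInv_coe, Real.fourierInv_eq'] at h1
    rw [← (PiLp.volume_preserving_ofLp (Fin d)).integral_comp (MeasurableEquiv.toLp 2 (Fin d → ℝ)).symm.measurableEmbedding]
    rw [← h1]
    apply integral_congr_ae
    refine ae_of_all _ fun ξ => ?_
    simp only [← fourier_psiE, smul_eq_mul, PiLp.inner_apply, RCLike.inner_apply, conj_trivial]
    congr 2
    push_cast
    simp only [Finset.mul_sum, Finset.sum_mul]
    apply Finset.sum_congr rfl
    intro i _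
    ring
end

open scoped BigOperators ENNReal Real
noncomputable section
open MeasureTheory UnitAddTorus

local instance instMSC : MeasureSpace UnitAddCircle := ⟨AddCircle.haarAddCircle⟩
local instance instHaarC : Measure.IsAddHaarMeasure (volume : Measure UnitAddCircle) :=
  inferInstanceAs (Measure.IsAddHaarMeasure AddCircle.haarAddCircle)
local instance instProbC : IsProbabilityMeasure (volume : Measure UnitAddCircle) :=
  inferInstanceAs (IsProbabilityMeasure AddCircle.haarAddCircle)

lemma norm_mFourier_apply {d : ℕ} (m : Fin d → ℤ) (t : UnitAddTorus (Fin d)) : ‖mFourier m t‖ = 1 := by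
  simp only [mFourier, fourier_apply, ContinuousMap.coe_mk, norm_prod, Circle.norm_coe, Finset.prod_const_one]

/-- Riesz–Fischer -/
lemma exists_L2_of_l2 {d : ℕ} (f : (Fin d → ℤ) → ℂ) (hf : Summable fun n => ‖f n‖ ^ 2) :
    ∃ F : UnitAddTorus (Fin d) → ℂ, MemLp F 2 volume ∧ ∀ n, mFourierCoeff F n = f n := by
  have hm : Memℓp f 2 := by
    apply memℓp_gen
    simpa using hf
  let F := (mFourierBasis (d := Fin d)).repr.symm ⟨f, hm⟩
  refine ⟨F, Lp.memLp F, fun n => ?_⟩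
  rw [← mFourierBasis_repr]
  simp [F]

lemma parseval {d : ℕ} (F : UnitAddTorus (Fin d) → ℂ) (hF : MemLp F 2 volume) :
    ∑' n, ‖mFourierCoeff F n‖ₑ ^ 2 = ∫⁻ t, ‖F t‖ₑ ^ 2 := by
  have h := hasSum_sq_mFourierCoeff (hF.toLp F)
  have hc : ∀ n, mFourierCoeff (hF.toLp F) n = mFourierCoeff F n := by
    intro n
    apply integral_congr_ae
    filter_upwards [hF.coeFn_toLp] with t ht
    rw [ht]
  have hi : ∫ t, ‖hF.toLp F t‖ ^ 2 = ∫ t, ‖F t‖ ^ 2 := by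
    apply integral_congr_ae
    filter_upwards [hF.coeFn_toLp] with t ht
    rw [ht]
  simp_rw [hc] at h
  rw [hi] at h
  have h1 : ∀ z : ℂ, ‖z‖ₑ ^ 2 = ENNReal.ofReal (‖z‖ ^ 2) := by
    intro z
    rw [ENNReal.ofReal_pow (norm_nonneg _), ofReal_norm]
  simp_rw [h1]
  rw [← ofReal_integral_eq_lintegral_ofReal hF.integrable_norm_pow' (ae_of_all _ fun _ => by positivity), ← h.tsum_eq,
    ENNReal.ofReal_tsum_of_nonneg (fun _ => by positivity) h.summable]

/-- symbol of an `ℓ¹` kernel -/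
def sym {d : ℕ} (H : (Fin d → ℤ) → ℂ) (t : UnitAddTorus (Fin d)) : ℂ := ∑' m, H m * mFourier m t

lemma sym_summable {d : ℕ} {H : (Fin d → ℤ) → ℂ} (hH : Summable fun m => ‖H m‖) (t : UnitAddTorus (Fin d)) :
    Summable fun m => H m * mFourier m t := by
  apply Summable.of_norm
  simpa [norm_mFourier_apply] using hH

lemma sym_continuous {d : ℕ} {H : (Fin d → ℤ) → ℂ} (hH : Summable fun m => ‖H m‖) : Continuous (sym H) := by
  apply continuous_tsum (u := fun m => ‖H m‖) _ hH
  · intro m t; simp [norm_mFourier_apply]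
  · intro m; exact continuous_const.mul (mFourier m).continuous

lemma sym_bound {d : ℕ} {H : (Fin d → ℤ) → ℂ} (hH : Summable fun m => ‖H m‖) (t : UnitAddTorus (Fin d)) :
    ‖sym H t‖ ≤ ∑' m, ‖H m‖ := by
  refine (norm_tsum_le_tsum_norm ?_).trans (le_of_eq ?_)
  · simpa [norm_mFourier_apply] using hH
  · simp [norm_mFourier_apply]

lemma memLp_sym_mul {d : ℕ} {H : (Fin d → ℤ) → ℂ} (hH : Summable fun m => ‖H m‖) {F : UnitAddTorus (Fin d) → ℂ} (hF : MemLp F 2 volume) :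
    MemLp (fun t => sym H t * F t) 2 volume := by
  refine MemLp.of_le_mul (c := ∑' m, ‖H m‖) hF ?_ (ae_of_all _ fun t => ?_)
  · exact (sym_continuous hH).aestronglyMeasurable.mul hF.1
  · rw [norm_mul]
    gcongr
    exact sym_bound hH t

lemma coeff_sym_mul {d : ℕ} {H : (Fin d → ℤ) → ℂ} (hH : Summable fun m => ‖H m‖) {F : UnitAddTorus (Fin d) → ℂ} (hF : MemLp F 2 volume)
    (n : Fin d → ℤ) :
    mFourierCoeff (fun t => sym H t * F t) n = ∑' m, H m * mFourierCoeff F (n - m) := by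
  have hFi : Integrable F := hF.integrable (by norm_num)
  have hi : ∀ m : Fin d → ℤ, Integrable (fun t => mFourier m t * F t) := by
    intro m
    refine hFi.bdd_mul (c := 1) (mFourier m).continuous.aestronglyMeasurable (ae_of_all _ fun t => (norm_mFourier_apply m t).le)
  have e : ∀ (m : Fin d → ℤ) t, mFourier (-n) t * (H m * mFourier m t * F t) = H m * (mFourier (-(n-m)) t * F t) := by
    intro m t
    have : -(n - m) = -n + m := by abel
    rw [this, mFourier_add]; ring
  have key := integral_tsum_of_summable_integral_norm (F := fun (m : Fin d → ℤ) (t : UnitAddTorus (Fin d)) => H m * (mFourier (-(n-m)) t * F t))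
    (μ := volume) (fun m => (hi _).const_mul _) (by
      simp only [norm_mul, norm_mFourier_apply, one_mul, integral_const_mul]
      exact hH.mul_right _)
  unfold mFourierCoeff
  simp only [smul_eq_mul]
  simp only [integral_const_mul] at key
  rw [key]
  apply integral_congr_ae
  refine ae_of_all _ fun t => ?_
  simp only
  rw [sym, ← tsum_mul_right, ← tsum_mul_left]
  exact tsum_congr fun m => e m t
end

open scoped BigOperators ENNReal Real
noncomputable section
open MeasureTheory UnitAddTorus
attribute [local instance] instMSC instHaarC instProbC

/-- representative in `(-1/2,1/2]` -/
def rep {d : ℕ} (t : UnitAddTorus (Fin d)) (i : Fin d) : ℝ := (AddCircle.equivIoc (1:ℝ) (-(1/2)) (t i)).1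

lemma rep_coe_coord {d : ℕ} (t : UnitAddTorus (Fin d)) (i : Fin d) : ((rep t i : ℝ) : UnitAddCircle) = t i :=
  AddCircle.coe_equivIoc

lemma measurable_rep {d : ℕ} : Measurable (rep : UnitAddTorus (Fin d) → Fin d → ℝ) := by
  apply measurable_pi_lambda
  intro i
  exact measurable_subtype_coe.comp ((AddCircle.measurableEquivIoc (1:ℝ) (-(1/2))).measurable.comp (measurable_pi_apply i))

lemma rep_of_mem {d : ℕ} (t : UnitAddTorus (Fin d)) (i : Fin d) (x : ℝ) (hx : x ∈ Set.Ioc (-(1/2):ℝ) (-(1/2)+1)) (h : (x : UnitAddCircle) = t i) :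
    rep t i = x := by
  rw [rep, ← h, AddCircle.equivIoc_coe_eq hx]

lemma mFourier_coe {d : ℕ} (n : Fin d → ℤ) (x : Fin d → ℝ) :
    mFourier n (fun i => (x i : UnitAddCircle)) = Complex.exp (2 * (π : ℂ) * Complex.I * (∑ i, (n i : ℂ) * (x i : ℂ))) := by
  simp only [mFourier, ContinuousMap.coe_mk, fourier_coe_apply]
  rw [← Complex.exp_sum, Finset.mul_sum]
  congr 1
  apply Finset.sum_congr rfl
  intro i _
  push_cast
  ring

/-- hypothesis on `ψ` -/
def goodPsi {d : ℕ} (ψ : SchwartzMap (Fin d → ℝ) ℝ) : Prop := ∀ ξ : Fin d → ℝ, (ftR (fun x => ψ x) ξ).im = 0 ∧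
      Set.indicator (cubeQ d) (fun _ => (1 : ℝ)) ξ ≤ (ftR (fun x => ψ x) ξ).re ∧
      (ftR (fun x => ψ x) ξ).re ≤ Set.indicator (cube2Q d) (fun _ => (1 : ℝ)) ξ

lemma goodPsi.mem_Icc {d : ℕ} {ψ : SchwartzMap (Fin d → ℝ) ℝ} (h : goodPsi ψ) (ξ : Fin d → ℝ) :
    ∃ r : ℝ, 0 ≤ r ∧ r ≤ 1 ∧ ftR (fun x => ψ x) ξ = r := by
  obtain ⟨h1, h2, h3⟩ := h ξ
  refine ⟨(ftR (fun x => ψ x) ξ).re, ?_, ?_, ?_⟩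
  · exact le_trans (Set.indicator_nonneg (fun _ _ => zero_le_one) _) h2
  · exact h3.trans (Set.indicator_le_self' (fun _ _ => zero_le_one) _)
  · apply Complex.ext <;> simp [h1]

lemma goodPsi.eq_one {d : ℕ} {ψ : SchwartzMap (Fin d → ℝ) ℝ} (h : goodPsi ψ) (ξ : Fin d → ℝ) (hξ : ∀ i, |ξ i| ≤ 1/2) :
    ftR (fun x => ψ x) ξ = 1 := by
  obtain ⟨r, h0, h1, hr⟩ := h.mem_Icc ξ
  obtain ⟨-, h2, -⟩ := h ξ
  rw [Set.indicator_of_mem (show ξ ∈ cubeQ d from hξ), hr, Complex.ofReal_re] at h2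
  rw [hr, le_antisymm h1 h2]; simp

lemma goodPsi.eq_zero {d : ℕ} {ψ : SchwartzMap (Fin d → ℝ) ℝ} (h : goodPsi ψ) (ξ : Fin d → ℝ) (i : Fin d) (hξ : 1 < |ξ i|) :
    ftR (fun x => ψ x) ξ = 0 := by
  obtain ⟨r, h0, h1, hr⟩ := h.mem_Icc ξ
  obtain ⟨-, -, h3⟩ := h ξ
  rw [Set.indicator_of_notMem (show ξ ∉ cube2Q d from fun hc => (not_le.mpr hξ) (hc i)), hr, Complex.ofReal_re] at h3
  rw [hr, le_antisymm h3 h0]; simp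

/-- the periodised profile -/
def GG {d : ℕ} (ψ : SchwartzMap (Fin d → ℝ) ℝ) (s : ℝ) (t : UnitAddTorus (Fin d)) : ℂ :=
  ftR (fun x => ψ x) ((-(1/s)) • rep t)

lemma GG_coeff {d : ℕ} {ψ : SchwartzMap (Fin d → ℝ) ℝ} (h : goodPsi ψ) (s : ℝ) (hs : 0 < s) (hs2 : s < 1/2) (n : Fin d → ℤ) :
    mFourierCoeff (GG ψ s) n = ((s ^ d * ψ (fun i => s * (n i : ℝ)) : ℝ) : ℂ) := by
  rw [mFourierCoeff_eq_integral _ _ (fun _ => -(1/2))]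
  set g : (Fin d → ℝ) → ℂ := fun ξ => Complex.exp (2 * (π : ℂ) * Complex.I * (∑ i, (((s * (n i : ℝ) : ℝ)) : ℂ) * (ξ i : ℂ))) * ftR (fun x => ψ x) ξ with hg
  have hmeas : MeasurableSet {x : Fin d → ℝ | ∀ i, x i ∈ Set.Ioc (-(1/2):ℝ) (-(1/2) + 1)} :=
    MeasurableSet.univ_pi' (fun i => measurableSet_Ioc)
  have h1 : ∫ (x : Fin d → ℝ) in {x : Fin d → ℝ | ∀ i, x i ∈ Set.Ioc (-(1/2):ℝ) (-(1/2) + 1)},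
      mFourier (-n) (fun i => (x i : UnitAddCircle)) • GG ψ s (fun i => (x i : UnitAddCircle)) =
      ∫ (x : Fin d → ℝ) in {x : Fin d → ℝ | ∀ i, x i ∈ Set.Ioc (-(1/2):ℝ) (-(1/2) + 1)}, g ((-(1/s)) • x) := by
    apply setIntegral_congr_fun hmeas
    intro x hx
    have hrep : rep (fun i => (x i : UnitAddCircle)) = x := by
      funext i
      exact rep_of_mem _ i (x i) (hx i) rfl
    simp only [GG, hrep, hg, mFourier_coe, smul_eq_mul, Pi.smul_apply, Pi.neg_apply]
    congr 3
    apply Finset.sum_congr rfl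
    intro i _
    push_cast
    have : (s:ℂ) ≠ 0 := by exact_mod_cast hs.ne'
    field_simp
  rw [h1, setIntegral_eq_integral_of_forall_compl_eq_zero, Measure.integral_comp_smul]
  · have : |((-(1/s)) ^ Module.finrank ℝ (Fin d → ℝ))⁻¹| = s ^ d := by
      rw [Module.finrank_fin_fun, ← inv_pow, abs_pow]
      congr 1
      rw [abs_inv, abs_neg, one_div, abs_inv, inv_inv, abs_of_pos hs]
    rw [this, Complex.real_smul]
    rw [Complex.ofReal_mul, (ftR_facts ψ).2]
    congr 1
    apply integral_congr_ae
    refine ae_of_all _ fun ξ => ?_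
    simp only [hg, Complex.ofReal_sum, Complex.ofReal_mul]
  · intro x hx
    simp only [Set.mem_setOf_eq, not_forall] at hx
    obtain ⟨i, hi⟩ := hx
    simp only [hg]
    rw [h.eq_zero _ i, mul_zero]
    simp only [Pi.smul_apply, smul_eq_mul, abs_mul, abs_neg, one_div, abs_inv, abs_of_pos hs]
    rw [← div_eq_inv_mul, one_lt_div hs]
    refine lt_of_lt_of_le hs2 ?_
    by_contra hc
    rw [not_le, abs_lt] at hc
    exact hi ⟨hc.1, by linarith [hc.2]⟩

lemma coeff_one {d : ℕ} (k : Fin d → ℤ) : mFourierCoeff (fun _ : UnitAddTorus (Fin d) => (1:ℂ)) k = if k = 0 then 1 else 0 := by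
  have h1 := mFourierCoeff_toLp (mFourier (0 : Fin d → ℤ)) k
  have h2 := mFourierBasis_repr (mFourierLp 2 (0 : Fin d → ℤ)) k
  rw [mFourier_zero] at h1
  have h3 : mFourierCoeff (fun _ : UnitAddTorus (Fin d) => (1:ℂ)) k = mFourierBasis.repr (mFourierLp 2 (0 : Fin d → ℤ)) k := by
    rw [h2, mFourierLp, mFourier_zero, h1]; rfl
  rw [h3, ← coe_mFourierBasis, HilbertBasis.repr_self]
  by_cases hk : k = 0
  · subst hk; simp
  · rw [if_neg hk, lp.single_apply_ne _ _ _ hk]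

lemma coeff_sym {d : ℕ} {H : (Fin d → ℤ) → ℂ} (hH : Summable fun m => ‖H m‖) (n : Fin d → ℤ) : mFourierCoeff (sym H) n = H n := by
  have h := coeff_sym_mul hH (F := fun _ => (1:ℂ)) (memLp_const _) n
  simp only [mul_one, coeff_one] at h
  have e : (fun t => sym H t) = sym H := rfl
  rw [e] at h
  rw [h, tsum_eq_single n]
  · simp
  · intro m hm
    rw [if_neg (fun hc => hm (sub_eq_zero.mp hc).symm), mul_zero]

lemma GG_measurable {d : ℕ} (ψ : SchwartzMap (Fin d → ℝ) ℝ) (s : ℝ) : Measurable (GG ψ s) :=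
  (ftR_facts ψ).1.measurable.comp (measurable_rep.const_smul (-(1/s)) : Measurable (fun t : UnitAddTorus (Fin d) => (-(1/s)) • rep t))

lemma sym_eq_GG {d : ℕ} {ψ : SchwartzMap (Fin d → ℝ) ℝ} (h : goodPsi ψ) (s : ℝ) (hs : 0 < s) (hs2 : s < 1/2) :
    ∀ᵐ t, sym (fun m => ((s ^ d * ψ (fun i => s * (m i : ℝ)) : ℝ) : ℂ)) t = GG ψ s t := by
  set H : (Fin d → ℤ) → ℂ := (fun m => ((s ^ d * ψ (fun i => s * (m i : ℝ)) : ℝ) : ℂ)) with hHdef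
  have hH : Summable fun m => ‖H m‖ := by
    have := (summable_schwartz_lattice ψ s hs).mul_left (s^d)
    refine this.congr fun m => ?_
    simp only [hHdef, Complex.norm_real, norm_mul, norm_pow, Real.norm_eq_abs, abs_of_pos hs]
  have hG : MemLp (GG ψ s) 2 (volume : Measure (UnitAddTorus (Fin d))) := by
    apply MemLp.of_bound (GG_measurable ψ s).aestronglyMeasurable 1
    refine ae_of_all _ fun t => ?_
    obtain ⟨r, h0, h1, hr⟩ := h.mem_Icc ((-(1/s)) • rep t)
    rw [GG, hr, Complex.norm_real, Real.norm_eq_abs, abs_of_nonneg h0]; exact h1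
  have hS : MemLp (sym H) 2 (volume : Measure (UnitAddTorus (Fin d))) := by
    apply MemLp.of_bound (sym_continuous hH).aestronglyMeasurable (∑' m, ‖H m‖)
    exact ae_of_all _ fun t => sym_bound hH t
  have hp := parseval _ (hS.sub hG)
  have hc : ∀ n, mFourierCoeff (sym H - GG ψ s) n = 0 := by
    intro n
    have hb : ∀ F : UnitAddTorus (Fin d) → ℂ, MemLp F 2 volume → Integrable (fun t => mFourier (-n) t • F t) := by
      intro F hF
      exact (hF.integrable (by norm_num)).bdd_mul (c := 1) (mFourier _).continuous.aestronglyMeasurable (ae_of_all _ fun t => (norm_mFourier_apply _ t).le)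
    have : mFourierCoeff (sym H - GG ψ s) n = mFourierCoeff (sym H) n - mFourierCoeff (GG ψ s) n := by
      unfold mFourierCoeff
      rw [← integral_sub (hb _ hS) (hb _ hG)]
      simp [mul_sub]
    rw [this, coeff_sym hH, GG_coeff h s hs hs2, sub_self]
  simp only [hc, enorm_zero] at hp
  have hz : ∫⁻ t, ‖(sym H - GG ψ s) t‖ₑ ^ 2 = 0 := by rw [← hp]; simp
  rw [lintegral_eq_zero_iff' ((hS.sub hG).1.enorm.pow_const 2)] at hz
  filter_upwards [hz] with t ht
  have ht' : ‖(sym H - GG ψ s) t‖ₑ ^ 2 = 0 := ht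
  rw [pow_eq_zero_iff (by norm_num), enorm_eq_zero] at ht'
  exact sub_eq_zero.mp ht'

/-- complex kernel associated with `psiQL` -/
def psiC {d : ℕ} (ψ : SchwartzMap (Fin d → ℝ) ℝ) (q : ℕ) (L : ℝ) (m : Fin d → ℤ) : ℂ := ((psiQL (fun x => ψ x) q L m : ℝ) : ℂ)

lemma psiQL_mul {d : ℕ} (ψ : SchwartzMap (Fin d → ℝ) ℝ) (q : ℕ) (L : ℝ) (m : Fin d → ℤ) :
    psiQL (fun x => ψ x) q L ((q:ℤ) • m) = ((q:ℝ)/L) ^ d * ψ (fun i => ((q:ℝ)/L) * (m i : ℝ)) := by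
  rw [psiQL, Set.indicator_of_mem]
  · congr 2
    funext i
    simp only [Pi.smul_apply, smul_eq_mul]
    push_cast; ring
  · intro i
    exact ⟨m i, by simp⟩

lemma smul_inj {d : ℕ} (q : ℕ) (hq : 1 ≤ q) : Function.Injective (fun m : Fin d → ℤ => (q:ℤ) • m) := by
  intro a b hab
  funext i
  have := congrFun hab i
  simp only [Pi.smul_apply, smul_eq_mul] at this
  exact mul_left_cancel₀ (by positivity) this

lemma psiQL_zero {d : ℕ} (ψ : SchwartzMap (Fin d → ℝ) ℝ) (q : ℕ) (L : ℝ) (m : Fin d → ℤ)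
    (hm : m ∉ Set.range (fun m : Fin d → ℤ => (q:ℤ) • m)) : psiQL (fun x => ψ x) q L m = 0 := by
  rw [psiQL, Set.indicator_of_notMem]
  intro hc
  choose v hv using hc
  exact hm ⟨v, by funext i; simp [hv i]⟩

lemma psiC_summable {d : ℕ} (ψ : SchwartzMap (Fin d → ℝ) ℝ) (q : ℕ) (L : ℝ) (hq : 1 ≤ q) (hL : 0 < L) :
    Summable fun m => ‖psiC ψ q L m‖ := by
  have hs : 0 < (q:ℝ)/L := by positivity
  rw [← (smul_inj q hq).summable_iff (fun m hm => by simp [psiC, psiQL_zero ψ q L m hm])]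
  refine ((summable_schwartz_lattice ψ _ hs).mul_left (((q:ℝ)/L)^d)).congr fun m => ?_
  simp only [Function.comp_apply, psiC, psiQL_mul, Complex.norm_real, norm_mul, norm_pow, Real.norm_eq_abs, abs_mul, abs_pow, abs_of_pos hs]

lemma sym_psiC {d : ℕ} (ψ : SchwartzMap (Fin d → ℝ) ℝ) (q : ℕ) (L : ℝ) (hq : 1 ≤ q) (t : UnitAddTorus (Fin d)) :
    sym (psiC ψ q L) t = sym (fun m => ((((q:ℝ)/L) ^ d * ψ (fun i => ((q:ℝ)/L) * (m i : ℝ)) : ℝ) : ℂ)) ((q:ℤ) • t) := by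
  rw [sym, sym, ← (smul_inj q hq).tsum_eq]
  · apply tsum_congr
    intro m
    rw [psiC, psiQL_mul]
    congr 1
    simp only [mFourier, ContinuousMap.coe_mk]
    apply Finset.prod_congr rfl
    intro i _
    simp only [fourier_apply, Pi.smul_apply, smul_eq_mul, smul_smul]
    rw [mul_comm]
  · intro m hm
    by_contra hc
    exact hm (by simp [psiC, psiQL_zero ψ q L m hc])

lemma mult_facts {d : ℕ} {ψ : SchwartzMap (Fin d → ℝ) ℝ} (h : goodPsi ψ) (q : ℕ) (L : ℝ) (hq : 1 ≤ q) (hL : 0 < L) (hqL : 2 * (q:ℝ) < L) :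
    ∀ᵐ t, ‖1 - sym (psiC ψ q L) t‖ ≤ 1 ∧ ((∀ i, badB (rep t i) (1 / (2 * L)) q) → 1 - sym (psiC ψ q L) t = 0) := by
  have hq0 : (0:ℝ) < q := by exact_mod_cast hq
  have hs : 0 < (q:ℝ)/L := by positivity
  have hs2 : (q:ℝ)/L < 1/2 := by rw [div_lt_div_iff₀ hL (by norm_num)]; linarith
  have hmp : MeasurePreserving (fun t : UnitAddTorus (Fin d) => (q:ℤ) • t) volume volume :=
    Measure.measurePreserving_zsmul (volume : Measure (UnitAddTorus (Fin d))) (by positivity)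
  have := hmp.quasiMeasurePreserving.ae (sym_eq_GG h _ hs hs2)
  filter_upwards [this] with t ht
  rw [sym_psiC ψ q L hq, ht]
  constructor
  · obtain ⟨r, h0, h1, hr⟩ := h.mem_Icc ((-(1/((q:ℝ)/L))) • rep ((q:ℤ) • t))
    rw [GG, hr, ← Complex.ofReal_one, ← Complex.ofReal_sub, Complex.norm_real, Real.norm_eq_abs, abs_le]
    constructor <;> linarith
  · intro hb
    rw [GG, h.eq_one, sub_self]
    intro i
    obtain ⟨l, hl⟩ := hb i
    have h1 : |q * rep t i - l| ≤ (q:ℝ)/L * (1/2) := by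
      have e : q * rep t i - l = q * (rep t i - l / q) := by field_simp
      rw [e, abs_mul, abs_of_pos hq0]
      calc _ ≤ (q:ℝ) * (1 / (2 * L)) := by gcongr
        _ = _ := by field_simp
    have h2 := abs_le.mp h1
    have hr : rep ((q:ℤ) • t) i = q * rep t i - l := by
      apply rep_of_mem
      · constructor <;> nlinarith
      · have e1 : (((q:ℝ) * rep t i - l : ℝ) : UnitAddCircle) = (q:ℤ) • ((rep t i : ℝ) : UnitAddCircle) - ((l:ℝ) : UnitAddCircle) := by
          rw [← AddCircle.coe_zsmul, ← AddCircle.coe_sub]; simp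
        have e2 : ((l:ℝ) : UnitAddCircle) = 0 := by
          have := AddCircle.coe_eq_zero_iff (1:ℝ) (x := (l:ℝ))
          rw [this]; exact ⟨l, by simp⟩
        rw [e1, e2, rep_coe_coord, sub_zero]; rfl
    simp only [Pi.smul_apply, smul_eq_mul, hr, abs_mul, abs_neg, abs_div, abs_one, abs_of_pos hq0, abs_of_pos hL]
    rw [one_div, inv_mul_le_iff₀ hs]
    exact h1
end

open scoped BigOperators ENNReal Real
noncomputable section
open MeasureTheory UnitAddTorus
attribute [local instance] instMSC instHaarC instProbC

lemma norm_ew (Λ α : ℝ) (n : ℤ) : ‖ew Λ α n‖ = Real.exp (-(π * (Λ^2)⁻¹) * (0 - n)^2) := by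
  rw [ew, Complex.norm_exp]
  congr 1
  have : (-(π:ℂ) * ((((Λ^2)⁻¹:ℝ):ℂ) - 2*Complex.I*α) * n^2) = ((-(π * (Λ^2)⁻¹) * (0 - n)^2 : ℝ) : ℂ) + ((2 * π * α * n^2 : ℝ) : ℂ) * Complex.I := by
    push_cast; ring
  rw [this, Complex.add_re, Complex.ofReal_re, Complex.re_ofReal_mul, Complex.I_re]
  simp

lemma summable_norm_ew (Λ α : ℝ) (hΛ : 1 ≤ Λ) : Summable fun n : ℤ => ‖ew Λ α n‖ := by
  simp_rw [norm_ew]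
  exact summable_real_gauss _ 0 (by positivity)

/-- Gaussian-weighted kernel -/
def KK {d : ℕ} (Λ α : ℝ) (m : Fin d → ℤ) : ℂ := ∏ i, ew Λ α (m i)

lemma norm_KK {d : ℕ} (Λ α : ℝ) (m : Fin d → ℤ) : ‖KK Λ α m‖ = ‖KK Λ 0 m‖ := by
  simp only [KK, norm_prod, norm_ew]

lemma KK_summable {d : ℕ} (Λ α : ℝ) (hΛ : 1 ≤ Λ) : Summable fun m : Fin d → ℤ => ‖KK Λ α m‖ :=
  (summable_pi_prod (fun _ => ew Λ α) (fun _ => summable_norm_ew Λ α hΛ)).1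

lemma sym_KK {d : ℕ} (Λ α : ℝ) (hΛ : 1 ≤ Λ) (t : UnitAddTorus (Fin d)) :
    sym (KK Λ α) t = ∏ i, th Λ α (rep t i) := by
  have h := (summable_pi_prod (fun (i : Fin d) n => ew Λ α n * fourier n (t i)) (fun i => by
    simp only [norm_mul, fourier_apply, Circle.norm_coe, mul_one]
    exact summable_norm_ew Λ α hΛ)).2
  rw [sym]
  simp only [KK, mFourier, ContinuousMap.coe_mk, ← Finset.prod_mul_distrib]
  rw [h]
  apply Finset.prod_congr rfl
  intro i _
  rw [th]
  apply tsum_congr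
  intro n
  rw [← rep_coe_coord t i, fourier_coe_apply]
  congr 2
  push_cast; ring

lemma KK_eq {d : ℕ} (Λ α : ℝ) (m : Fin d → ℤ) :
    KK Λ α m = (Real.exp (-(π * (Λ^2)⁻¹) * ((∑ i, m i ^ 2 : ℤ) : ℝ)) : ℂ) * Complex.exp (2 * π * Complex.I * α * ((∑ i, m i ^ 2 : ℤ) : ℂ)) := by
  simp only [KK, ew]
  rw [← Complex.exp_sum, Complex.ofReal_exp, ← Complex.exp_add]
  congr 1
  push_cast
  rw [Finset.mul_sum, Finset.mul_sum, ← Finset.sum_add_distrib]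
  apply Finset.sum_congr rfl
  intro i _
  ring

lemma KK_continuous {d : ℕ} (Λ : ℝ) (m : Fin d → ℤ) : Continuous (fun α => KK Λ α m) := by
  simp only [KK, ew]
  fun_prop

lemma sym_KK_continuous {d : ℕ} (Λ : ℝ) (hΛ : 1 ≤ Λ) : Continuous (fun p : ℝ × UnitAddTorus (Fin d) => sym (KK Λ p.1) p.2) := by
  unfold sym
  apply continuous_tsum (u := fun m => ‖KK Λ 0 m‖) _ (KK_summable Λ 0 hΛ)
  · intro m p
    rw [norm_mul, norm_mFourier_apply, mul_one, norm_KK]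
  · intro m
    exact ((KK_continuous Λ m).comp continuous_fst).mul ((mFourier m).continuous.comp continuous_snd)

/-- convolution with the kernel -/
def cc {d : ℕ} (Λ α : ℝ) (g : (Fin d → ℤ) → ℝ) (n : Fin d → ℤ) : ℂ := ∑' m, KK Λ α m * (g (n - m) : ℂ)

lemma cc_continuous {d : ℕ} (Λ : ℝ) (hΛ : 1 ≤ Λ) (g : (Fin d → ℤ) → ℝ) (B : ℝ) (hg : ∀ n, |g n| ≤ B) (n : Fin d → ℤ) :
    Continuous (fun α => cc Λ α g n) := by
  unfold cc
  apply continuous_tsum (u := fun m => ‖KK Λ 0 m‖ * B) _ ((KK_summable Λ 0 hΛ).mul_right B)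
  · intro m α
    rw [norm_mul, norm_KK, Complex.norm_real]
    gcongr
    exact hg _
  · intro m
    exact (KK_continuous Λ m).mul continuous_const

lemma orth_int (k : ℤ) : ∫ α in Set.Ioc (0:ℝ) 1, Complex.exp (2 * π * Complex.I * α * (k:ℂ)) = if k = 0 then 1 else 0 := by
  rw [← intervalIntegral.integral_of_le zero_le_one]
  by_cases hk : k = 0
  · simp [hk]
  · rw [if_neg hk]
    have hc : (2 * π * Complex.I * (k:ℂ)) ≠ 0 := by
      have : (k:ℂ) ≠ 0 := by exact_mod_cast hk
      simp [this, Real.pi_ne_zero, Complex.I_ne_zero]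
    have e : ∀ α : ℝ, Complex.exp (2 * π * Complex.I * α * (k:ℂ)) = Complex.exp ((2 * π * Complex.I * (k:ℂ)) * α) := by
      intro α; congr 1; ring
    simp_rw [e]
    rw [integral_exp_mul_complex hc]
    have : (2 * π * Complex.I * (k:ℂ)) * ((1:ℝ):ℂ) = k * (2 * π * Complex.I) := by push_cast; ring
    rw [this, Complex.exp_int_mul_two_pi_mul_I]
    simp

lemma sphere_sum_eq {d : ℕ} (Λ : ℝ) (hΛ : 1 ≤ Λ) (g : (Fin d → ℤ) → ℝ) (B : ℝ) (hg : ∀ n, |g n| ≤ B) (n : Fin d → ℤ) (N : ℕ) :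
    ∫ α in Set.Ioc (0:ℝ) 1, cc Λ α g n * Complex.exp (-(2 * π * Complex.I * α * N)) =
      (Real.exp (-(π * (Λ^2)⁻¹) * N) : ℂ) * ((∑ m ∈ FS.SF d N, g (n - m) : ℝ) : ℂ) := by
  have hB : 0 ≤ B := (abs_nonneg _).trans (hg 0)
  have hnexp : ∀ (α : ℝ) (M : ℂ), M.im = 0 → ‖Complex.exp (-(2 * π * Complex.I * α * M))‖ = 1 := by
    intro α M hM
    rw [Complex.norm_exp]
    simp [hM]
  set Fm : (Fin d → ℤ) → ℝ → ℂ := fun m α => KK Λ α m * (g (n - m) : ℂ) * Complex.exp (-(2 * π * Complex.I * α * N)) with hFm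
  have hcont : ∀ m, Continuous (Fm m) := by
    intro m
    have := KK_continuous Λ m
    simp only [hFm]
    fun_prop
  have hFint : ∀ m, Integrable (Fm m) (volume.restrict (Set.Ioc (0:ℝ) 1)) := fun m =>
    ((hcont m).integrableOn_Icc (a := 0) (b := 1)).mono_set Set.Ioc_subset_Icc_self
  have hnorm : ∀ m α, ‖Fm m α‖ = ‖KK Λ 0 m‖ * |g (n - m)| := by
    intro m α
    simp only [hFm]
    rw [norm_mul, norm_mul, hnexp α N (by simp), norm_KK, Complex.norm_real, mul_one, Real.norm_eq_abs]
  have key := integral_tsum_of_summable_integral_norm (F := Fm) (μ := volume.restrict (Set.Ioc (0:ℝ) 1)) hFint (by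
    simp only [hnorm, integral_const, MeasurableSet.univ, measureReal_restrict_apply, Set.univ_inter, Real.volume_real_Ioc_of_le zero_le_one, sub_zero, smul_eq_mul, one_mul]
    refine Summable.of_nonneg_of_le (fun m => by positivity) (fun m => ?_) ((KK_summable Λ 0 hΛ).mul_right B)
    gcongr
    exact hg _)
  have hval : ∀ m, ∫ α in Set.Ioc (0:ℝ) 1, Fm m α = if m ∈ FS.SF d N then (Real.exp (-(π * (Λ^2)⁻¹) * N) : ℂ) * (g (n - m) : ℂ) else 0 := by
    intro m
    have e : ∀ α : ℝ, Fm m α = ((Real.exp (-(π * (Λ^2)⁻¹) * ((∑ i, m i ^ 2 : ℤ) : ℝ)) : ℂ) * (g (n - m) : ℂ)) *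
        Complex.exp (2 * π * Complex.I * α * (((∑ i, m i ^ 2) - (N:ℤ) : ℤ) : ℂ)) := by
      intro α
      simp only [hFm]
      rw [KK_eq]
      have : Complex.exp (2 * π * Complex.I * α * (((∑ i, m i ^ 2) - (N:ℤ) : ℤ) : ℂ)) =
          Complex.exp (2 * π * Complex.I * α * ((∑ i, m i ^ 2 : ℤ) : ℂ)) * Complex.exp (-(2 * π * Complex.I * α * N)) := by
        rw [← Complex.exp_add]; congr 1; push_cast; ring
      rw [this]; ring
    simp_rw [e]
    rw [integral_const_mul, orth_int]
    by_cases hm : m ∈ FS.SF d N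
    · rw [if_pos hm]
      rw [FS.mem_SF] at hm
      rw [hm]; simp
    · rw [if_neg hm]
      rw [FS.mem_SF] at hm
      rw [if_neg (by omega), mul_zero]
  have e1 : ∀ α : ℝ, cc Λ α g n * Complex.exp (-(2 * π * Complex.I * α * N)) = ∑' m, Fm m α := by
    intro α
    rw [cc, ← tsum_mul_right]
  simp_rw [e1]
  rw [← key]
  simp_rw [hval]
  rw [tsum_eq_sum (s := FS.SF d N) (fun m hm => if_neg hm)]
  push_cast
  rw [Finset.mul_sum]
  exact Finset.sum_congr rfl fun m hm => if_pos hm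
end

open scoped BigOperators ENNReal Real
noncomputable section
open MeasureTheory UnitAddTorus
attribute [local instance] instMSC instHaarC instProbC

lemma cs_one (μ : Measure ℝ) (w v : ℝ → ℝ) (h : ℝ → ℝ≥0∞) (hw : Measurable w) (hv : Measurable v) (hh : Measurable h)
    (hw0 : ∀ a, 0 < w a) (hwv : ∀ a, w a * v a = 1) :
    ∫⁻ a, h a ∂μ ≤ (∫⁻ a, ENNReal.ofReal (w a) ∂μ) ^ (1/2:ℝ) * (∫⁻ a, ENNReal.ofReal (v a) * h a ^ 2 ∂μ) ^ (1/2:ℝ) := by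
  have hv0 : ∀ a, 0 < v a := fun a => by
    have := hwv a
    exact pos_of_mul_pos_right (by rw [this]; exact one_pos) (hw0 a).le
  have key := ENNReal.lintegral_mul_le_Lp_mul_Lq μ (Real.HolderConjugate.two_two) (f := fun a => ENNReal.ofReal (√(w a)))
    (g := fun a => ENNReal.ofReal (√(v a)) * h a) (by fun_prop) (by fun_prop)
  have e1 : ∀ a, ((fun a => ENNReal.ofReal (√(w a))) * (fun a => ENNReal.ofReal (√(v a)) * h a)) a = h a := by
    intro a
    simp only [Pi.mul_apply]
    rw [← mul_assoc, ← ENNReal.ofReal_mul (Real.sqrt_nonneg _), ← Real.sqrt_mul (hw0 a).le, hwv]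
    simp
  have e2 : ∀ a, ENNReal.ofReal (√(w a)) ^ (2:ℝ) = ENNReal.ofReal (w a) := by
    intro a
    rw [ENNReal.rpow_two, ← ENNReal.ofReal_pow (Real.sqrt_nonneg _), Real.sq_sqrt (hw0 a).le]
  have e3 : ∀ a, (ENNReal.ofReal (√(v a)) * h a) ^ (2:ℝ) = ENNReal.ofReal (v a) * h a ^ 2 := by
    intro a
    rw [ENNReal.rpow_two, mul_pow, ← ENNReal.ofReal_pow (Real.sqrt_nonneg _), Real.sq_sqrt (hv0 a).le]
  simp only [e1, e2, e3] at key
  exact key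

lemma cs_arcs {ι : Type*} (s : Finset ι) (A : ι → Set ℝ) (w v : ι → ℝ → ℝ) (h : ℝ → ℝ≥0∞) (hw : ∀ i, Measurable (w i))
    (hv : ∀ i, Measurable (v i)) (hh : Measurable h)
    (hw0 : ∀ i ∈ s, ∀ a, 0 < w i a) (hwv : ∀ i ∈ s, ∀ a, w i a * v i a = 1) :
    (∑ i ∈ s, ∫⁻ a in A i, h a) ^ 2 ≤ (∑ i ∈ s, ∫⁻ a, ENNReal.ofReal (w i a)) * ∑ i ∈ s, ∫⁻ a in A i, ENNReal.ofReal (v i a) * h a ^ 2 := by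
  have h1 : ∑ i ∈ s, ∫⁻ a in A i, h a ≤ (∑ i ∈ s, ∫⁻ a, ENNReal.ofReal (w i a)) ^ (1/2:ℝ) * (∑ i ∈ s, ∫⁻ a in A i, ENNReal.ofReal (v i a) * h a ^ 2) ^ (1/2:ℝ) := by
    calc _ ≤ ∑ i ∈ s, (∫⁻ a, ENNReal.ofReal (w i a)) ^ (1/2:ℝ) * (∫⁻ a in A i, ENNReal.ofReal (v i a) * h a ^ 2) ^ (1/2:ℝ) := by
          apply Finset.sum_le_sum
          intro i hi
          refine (cs_one (volume.restrict (A i)) (w i) (v i) h (hw i) (hv i) hh (hw0 i hi) (hwv i hi)).trans ?_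
          gcongr
          exact Measure.restrict_le_self
      _ ≤ _ := by
          have := ENNReal.inner_le_Lp_mul_Lq s (fun i => (∫⁻ a, ENNReal.ofReal (w i a)) ^ (1/2:ℝ)) (fun i => (∫⁻ a in A i, ENNReal.ofReal (v i a) * h a ^ 2) ^ (1/2:ℝ)) Real.HolderConjugate.two_two
          simp only [← ENNReal.rpow_mul] at this
          norm_num at this
          norm_num
          exact this
  calc _ ≤ ((∑ i ∈ s, ∫⁻ a, ENNReal.ofReal (w i a)) ^ (1/2:ℝ) * (∑ i ∈ s, ∫⁻ a in A i, ENNReal.ofReal (v i a) * h a ^ 2) ^ (1/2:ℝ)) ^ 2 := by gcongr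
    _ = _ := by
      rw [← ENNReal.rpow_two, ENNReal.mul_rpow_of_nonneg _ _ (by norm_num), ← ENNReal.rpow_mul, ← ENNReal.rpow_mul]
      norm_num

lemma avg_le {d : ℕ} (Λ lam : ℝ) (N : ℕ) (hN : (N:ℝ) = lam^2) (h1 : 1 ≤ Λ) (h2 : Λ ≤ lam) (h3 : lam ≤ 2 * Λ)
    (c : ℝ) (hc : 0 < c) (hcN : c * Λ^(d-2) ≤ Nlam d lam)
    (g : (Fin d → ℤ) → ℝ) (B : ℝ) (hg : ∀ n, |g n| ≤ B) (n : Fin d → ℤ) :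
    ‖Avg lam g n‖ₑ ≤ ENNReal.ofReal ((c * Λ^(d-2))⁻¹ * Real.exp (4*π)) * ∫⁻ α in Set.Ioc (0:ℝ) 1, ‖cc Λ α g n‖ₑ := by
  have hs : ∑' m : sph d lam, g (n - (m : Fin d → ℤ)) = ∑ m ∈ FS.SF d N, g (n - m) := by
    rw [sph_eq lam N hN]
    exact Finset.tsum_subtype _ (fun m => g (n - m))
  set S : ℝ := ∑ m ∈ FS.SF d N, g (n - m) with hS
  have hi : ‖((Real.exp (-(π * (Λ^2)⁻¹) * N) : ℂ) * (S : ℂ))‖ₑ ≤ ∫⁻ α in Set.Ioc (0:ℝ) 1, ‖cc Λ α g n‖ₑ := by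
    rw [← sphere_sum_eq Λ h1 g B hg n N]
    refine (enorm_integral_le_lintegral_enorm _).trans (le_of_eq ?_)
    apply lintegral_congr
    intro α
    rw [enorm_mul]
    have : ‖Complex.exp (-(2 * π * Complex.I * α * N))‖ₑ = 1 := by
      rw [← ofReal_norm_eq_enorm, Complex.norm_exp]
      simp
    rw [this, mul_one]
  have hΛ0 : 0 < Λ := by linarith
  have hA : ‖Avg lam g n‖ ≤ ((c * Λ^(d-2))⁻¹ * Real.exp (4*π)) * ‖((Real.exp (-(π * (Λ^2)⁻¹) * N) : ℂ) * (S : ℂ))‖ := by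
    rw [Avg, hs, norm_mul, norm_mul, Complex.norm_real, Complex.norm_real, norm_inv, RCLike.norm_natCast, Real.norm_eq_abs (Real.exp _), Real.abs_exp]
    have he : 1 ≤ Real.exp (4*π) * Real.exp (-(π * (Λ^2)⁻¹) * N) := by
      rw [← Real.exp_add]
      apply Real.one_le_exp
      have : (Λ^2)⁻¹ * N ≤ 4 := by
        rw [hN, inv_mul_le_iff₀ (by positivity)]
        nlinarith
      nlinarith [Real.pi_pos]
    calc (Nlam d lam : ℝ)⁻¹ * ‖S‖ ≤ (c * Λ^(d-2))⁻¹ * ‖S‖ := by gcongr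
      _ ≤ (c * Λ^(d-2))⁻¹ * (Real.exp (4*π) * Real.exp (-(π * (Λ^2)⁻¹) * N)) * ‖S‖ := by
        gcongr
        exact le_mul_of_one_le_right (by positivity) he
      _ = _ := by ring
  calc ‖Avg lam g n‖ₑ = ENNReal.ofReal ‖Avg lam g n‖ := (ofReal_norm_eq_enorm _).symm
    _ ≤ ENNReal.ofReal (((c * Λ^(d-2))⁻¹ * Real.exp (4*π)) * ‖((Real.exp (-(π * (Λ^2)⁻¹) * N) : ℂ) * (S : ℂ))‖) := ENNReal.ofReal_le_ofReal hA
    _ = ENNReal.ofReal ((c * Λ^(d-2))⁻¹ * Real.exp (4*π)) * ‖((Real.exp (-(π * (Λ^2)⁻¹) * N) : ℂ) * (S : ℂ))‖ₑ := by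
      rw [ENNReal.ofReal_mul (by positivity), ofReal_norm_eq_enorm]
    _ ≤ _ := by gcongr

lemma lint_biUnion_le {ι : Type*} (s : Finset ι) (A : ι → Set ℝ) (h : ℝ → ℝ≥0∞) :
    ∫⁻ a in ⋃ i ∈ s, A i, h a ≤ ∑ i ∈ s, ∫⁻ a in A i, h a := by
  classical
  induction s using Finset.induction_on with
  | empty => simp
  | insert i s hi ih =>
    rw [Finset.set_biUnion_insert, Finset.sum_insert hi]
    refine (lintegral_union_le _ _ _).trans ?_
    gcongr

/-- inverse weight -/
def vv (k : ℕ) (i : Σ _ : ℕ, ℤ) (α : ℝ) : ℝ := (i.1:ℝ)^(5/2:ℝ) * (TT (2^k) i.1 i.2 α)^(3/2:ℝ)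

lemma vv_measurable (k : ℕ) (i : Σ _ : ℕ, ℤ) : Measurable (vv k i) := by
  unfold vv TT; fun_prop

lemma Mk_sq (d : ℕ) (hd : 5 ≤ d) : ∃ C : ℝ, 0 < C ∧ ∀ (k : ℕ) (g : (Fin d → ℤ) → ℝ) (B : ℝ), (∀ n, |g n| ≤ B) → ∀ n,
    Mk k g n ^ 2 ≤ ENNReal.ofReal (C * ((((2:ℝ)^k)^(d-2))^2)⁻¹ * (((2:ℝ)^k)^2)⁻¹) *
      ∑ i ∈ FI (2^k), ∫⁻ α in arc (2^k) i.1 i.2, ENNReal.ofReal (vv k i α) * ‖cc (2^k) α g n‖ₑ ^ 2 := by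
  obtain ⟨c, hc, hN⟩ := Nlam_lower d hd
  obtain ⟨C, hC, hF⟩ := farey_weight
  refine ⟨(c⁻¹ * Real.exp (4*π))^2 * C, by positivity, ?_⟩
  intro k g B hg n
  have hk1 : (1:ℝ) ≤ 2^k := one_le_pow₀ (by norm_num)
  have hcov : ∫⁻ α in Set.Ioc (0:ℝ) 1, ‖cc (2^k) α g n‖ₑ ≤ ∑ i ∈ FI (2^k), ∫⁻ α in arc (2^k) i.1 i.2, ‖cc (2^k) α g n‖ₑ := by
    have hsub : Set.Ioc (0:ℝ) 1 ⊆ ⋃ i ∈ FI (2^k), arc (2^k) i.1 i.2 := by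
      intro α hα
      obtain ⟨i, hi, hi2⟩ := arc_cover (2^k) Nat.one_le_two_pow α hα.1.le hα.2
      simp only [Set.mem_iUnion]
      refine ⟨i, hi, ?_⟩
      push_cast at hi2
      exact hi2
    refine (lintegral_mono_set hsub).trans ?_
    exact lint_biUnion_le _ _ _
  have hM : Mk k g n ≤ ENNReal.ofReal ((c * (2^k)^(d-2))⁻¹ * Real.exp (4*π)) * ∑ i ∈ FI (2^k), ∫⁻ α in arc (2^k) i.1 i.2, ‖cc (2^k) α g n‖ₑ := by
    unfold Mk
    refine iSup₂_le ?_
    rintro lam ⟨h1, h2, N, hNN⟩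
    have hl1 : 1 ≤ lam := hk1.trans h1
    refine (avg_le (2^k) lam N hNN hk1 h1 (by rw [pow_succ] at h2; linarith) c hc ?_ g B hg n).trans ?_
    · refine le_trans ?_ (hN lam N hl1 hNN)
      gcongr
    · gcongr
  have hcs := cs_arcs (FI (2^k)) (fun i => arc (2^k) i.1 i.2) (fun i α => (i.1:ℝ)^(-(5/2):ℝ) * (TT (2^k) i.1 i.2 α)^(-(3/2):ℝ))
    (vv k) (fun α => ‖cc (2^k) α g n‖ₑ) (fun i => by unfold TT; fun_prop) (fun i => vv_measurable k i)
    ((cc_continuous (2^k) hk1 g B hg n).measurable.enorm) (by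
      intro i hi a
      have h1 : 0 < (i.1:ℝ) := by exact_mod_cast (mem_FI.1 hi).1.1
      have h2 : 0 < TT (2^k) i.1 i.2 a := by linarith [one_le_TT (2^k) i.1 i.2 a]
      positivity) (by
      intro i hi a
      have h1 : 0 < (i.1:ℝ) := by exact_mod_cast (mem_FI.1 hi).1.1
      have h2 : 0 < TT (2^k) i.1 i.2 a := by linarith [one_le_TT (2^k) i.1 i.2 a]
      rw [vv, mul_mul_mul_comm, ← Real.rpow_add h1, ← Real.rpow_add h2]
      norm_num)
  calc Mk k g n ^ 2 ≤ (ENNReal.ofReal ((c * (2^k)^(d-2))⁻¹ * Real.exp (4*π)) * ∑ i ∈ FI (2^k), ∫⁻ α in arc (2^k) i.1 i.2, ‖cc (2^k) α g n‖ₑ)^2 := by gcongr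
    _ = ENNReal.ofReal (((c * (2^k)^(d-2))⁻¹ * Real.exp (4*π))^2) * (∑ i ∈ FI (2^k), ∫⁻ α in arc (2^k) i.1 i.2, ‖cc (2^k) α g n‖ₑ)^2 := by
      rw [mul_pow, ENNReal.ofReal_pow (by positivity)]
    _ ≤ ENNReal.ofReal (((c * (2^k)^(d-2))⁻¹ * Real.exp (4*π))^2) * (ENNReal.ofReal (C/((2:ℝ)^k)^2) * ∑ i ∈ FI (2^k), ∫⁻ α in arc (2^k) i.1 i.2, ENNReal.ofReal (vv k i α) * ‖cc (2^k) α g n‖ₑ ^ 2) := by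
      gcongr
      refine hcs.trans ?_
      gcongr
      exact hF k
    _ = _ := by
      rw [← mul_assoc, ← ENNReal.ofReal_mul (by positivity)]
      congr 2
      rw [mul_inv]
      field_simp

end

open scoped BigOperators ENNReal Real
noncomputable section
open MeasureTheory UnitAddTorus
attribute [local instance] instMSC instHaarC instProbC

lemma gen_meas {X : Type*} [MeasurableSpace X] (μ : Measure ℝ) [SFinite μ] (a : ℝ → ℝ≥0∞) (ha : Measurable a)
    (K : ℝ → X → ℝ≥0∞) (hK : Measurable (fun p : ℝ × X => K p.1 p.2)) :
    Measurable (fun t => ∫⁻ α, a α * K α t ∂μ) := by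
  apply Measurable.lintegral_prod_right' (f := fun p : X × ℝ => a p.2 * K p.2 p.1)
  exact (ha.comp measurable_snd).mul (hK.comp measurable_swap)

lemma gen_swap {X : Type*} [MeasurableSpace X] (μ : Measure ℝ) [SFinite μ] (ν : Measure X) [SFinite ν] (a : ℝ → ℝ≥0∞) (ha : Measurable a)
    (hat : ∀ α, a α ≠ ⊤) (K : ℝ → X → ℝ≥0∞) (hK : Measurable (fun p : ℝ × X => K p.1 p.2)) (b : X → ℝ≥0∞) (hb : AEMeasurable b ν) :
    ∫⁻ α, a α * ∫⁻ t, K α t * b t ∂ν ∂μ = ∫⁻ t, (∫⁻ α, a α * K α t ∂μ) * b t ∂ν := by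
  have : ∀ α, a α * ∫⁻ t, K α t * b t ∂ν = ∫⁻ t, a α * K α t * b t ∂ν := by
    intro α
    rw [← lintegral_const_mul' _ _ (hat α)]
    simp_rw [mul_assoc]
  simp_rw [this]
  rw [lintegral_lintegral_swap]
  · apply lintegral_congr
    intro t
    rw [lintegral_mul_const]
    exact ha.mul (hK.comp measurable_prodMk_right)
  · apply AEMeasurable.mul
    · exact ((ha.comp measurable_fst).mul hK).aemeasurable
    · exact hb.comp_snd

set_option maxHeartbeats 400000 in
lemma scale_bound (d : ℕ) (hd : 5 ≤ d) (ψ : SchwartzMap (Fin d → ℝ) ℝ) (hψ : goodPsi ψ) :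
    ∃ C : ℝ, 0 < C ∧ ∀ (f : (Fin d → ℤ) → ℝ), (∑' n, ‖f n‖ₑ ^ 2 ≠ ⊤) → ∀ j k : ℕ, 2^(j+2) ≤ k → k < 2^(j+3) →
      ∑' n, Mk k (fun x => f x - conv f (psiQL (fun x => ψ x) (qlcm j) (2^(k-j))) x) n ^ 2 ≤
        ENNReal.ofReal (C * (k:ℝ)^(-(3/2):ℝ)) * ∑' n, ‖f n‖ₑ ^ 2 := by
  obtain ⟨C1, hC1, hMk⟩ := Mk_sq d hd
  obtain ⟨C2, hC2, hFM⟩ := farey_mult d hd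
  refine ⟨C1 * C2, by positivity, ?_⟩
  intro f hf j k hjk hjk2
  have hk1 : (1:ℝ) ≤ 2^k := one_le_pow₀ (by norm_num)
  have hq := one_le_qlcm j
  have hL : (0:ℝ) < 2^(k-j) := by positivity
  have hqL := qlcm_bound j k hjk
  set q := qlcm j with hqdef
  set L : ℝ := 2^(k-j) with hLdef
  have hfs : Summable fun n => ‖(f n : ℂ)‖ ^ 2 := by
    have : ∀ n, ‖f n‖ₑ ^ 2 = ENNReal.ofReal (‖(f n:ℂ)‖^2) := by
      intro n
      rw [Complex.norm_real, ENNReal.ofReal_pow (norm_nonneg _), ofReal_norm_eq_enorm]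
    simp_rw [this] at hf
    refine (ENNReal.summable_toReal hf).congr fun n => ?_
    rw [ENNReal.toReal_ofReal (by positivity)]
  obtain ⟨F, hF, hFc⟩ := exists_L2_of_l2 (fun n => (f n : ℂ)) hfs
  have hps := psiC_summable ψ q L hq hL
  set G : UnitAddTorus (Fin d) → ℂ := fun t => (1 - sym (psiC ψ q L) t) * F t with hG
  have hGeq : G = fun t => F t - sym (psiC ψ q L) t * F t := by
    funext t; simp only [hG]; ring
  have hGm : MemLp G 2 volume := by
    rw [hGeq]; exact hF.sub (memLp_sym_mul hps hF)
  set g : (Fin d → ℤ) → ℝ := fun x => f x - conv f (psiQL (fun x => ψ x) q L) x with hg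
  have hmi : ∀ {n : Fin d → ℤ} (H : UnitAddTorus (Fin d) → ℂ), MemLp H 2 volume → Integrable (fun t => mFourier (-n) t • H t) := by
    intro n H hH
    have hHi : Integrable H := hH.integrable (by norm_num)
    refine hHi.norm.mono' ((mFourier (-n)).continuous.aestronglyMeasurable.smul hH.1) (ae_of_all _ fun t => ?_)
    rw [norm_smul, norm_mFourier_apply, one_mul]
  have hGc : ∀ n, mFourierCoeff G n = (g n : ℂ) := by
    intro n
    have : mFourierCoeff G n = mFourierCoeff F n - mFourierCoeff (fun t => sym (psiC ψ q L) t * F t) n := by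
      rw [hGeq]
      simp only [mFourierCoeff, smul_sub]
      rw [integral_sub]
      · exact hmi F hF
      · exact hmi _ (memLp_sym_mul hps hF)
    rw [this, coeff_sym_mul hps hF, hFc]
    simp only [hg, hFc, conv, psiC]
    push_cast
    congr 1
    apply tsum_congr
    intro m; ring
  have hGi : Integrable G := hGm.integrable (by norm_num)
  have hgb : ∀ n, |g n| ≤ ∫ t, ‖G t‖ := by
    intro n
    rw [← Real.norm_eq_abs, ← Complex.norm_real, ← hGc n, mFourierCoeff]
    refine (norm_integral_le_integral_norm _).trans (le_of_eq ?_)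
    apply integral_congr_ae
    filter_upwards with t
    rw [norm_smul, norm_mFourier_apply, one_mul]
  have hcc : ∀ α n, cc (2^k) α g n = mFourierCoeff (fun t => sym (KK (2^k) α) t * G t) n := by
    intro α n
    rw [coeff_sym_mul (KK_summable (2^k) α hk1) hGm, cc]
    simp_rw [hGc]
  have hccs : ∀ α, ∑' n, ‖cc (2^k) α g n‖ₑ ^ 2 = ∫⁻ t, ‖sym (KK (2^k) α) t * G t‖ₑ ^ 2 := by
    intro α
    simp_rw [hcc]
    exact parseval _ (memLp_sym_mul (KK_summable (2^k) α hk1) hGm)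
  have hccm : ∀ n, Measurable (fun α => ‖cc (2^k) α g n‖ₑ ^ 2) := fun n =>
    ((cc_continuous (2^k) hk1 g _ hgb n).measurable.enorm).pow_const 2
  have hvm : ∀ i, Measurable (fun α => ENNReal.ofReal (vv k i α)) := fun i => (vv_measurable k i).ennreal_ofReal
  have hkm : Measurable (fun p : ℝ × UnitAddTorus (Fin d) => ‖sym (KK (2^k) p.1) p.2‖ₑ ^ 2) :=
    (sym_KK_continuous (2^k) hk1).measurable.enorm.pow_const 2
  -- the main chain
  have hsum : ∑' n, ∑ i ∈ FI (2^k), ∫⁻ α in arc (2^k) i.1 i.2, ENNReal.ofReal (vv k i α) * ‖cc (2^k) α g n‖ₑ ^ 2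
      = ∫⁻ t, (∑ i ∈ FI (2^k), ∫⁻ α in arc (2^k) i.1 i.2, ENNReal.ofReal (vv k i α) * ‖sym (KK (2^k) α) t‖ₑ ^ 2) * ‖G t‖ₑ ^ 2 := by
    have hA : ∀ i : (Σ _ : ℕ, ℤ), Measurable (fun t : UnitAddTorus (Fin d) => ∫⁻ α in arc (2^k) i.1 i.2, ENNReal.ofReal (vv k i α) * ‖sym (KK (2^k) α) t‖ₑ ^ 2) := by
      intro i
      exact gen_meas _ _ (hvm i) (fun α t => ‖sym (KK (2^k) α) t‖ₑ ^ 2) hkm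
    have hGe : AEMeasurable (fun t => ‖G t‖ₑ ^ 2) := hGm.1.enorm.pow_const 2
    calc _ = ∑ i ∈ FI (2^k), ∑' n, ∫⁻ α in arc (2^k) i.1 i.2, ENNReal.ofReal (vv k i α) * ‖cc (2^k) α g n‖ₑ ^ 2 :=
          Summable.tsum_finsetSum (fun i _ => ENNReal.summable)
      _ = ∑ i ∈ FI (2^k), ∫⁻ t, (∫⁻ α in arc (2^k) i.1 i.2, ENNReal.ofReal (vv k i α) * ‖sym (KK (2^k) α) t‖ₑ ^ 2) * ‖G t‖ₑ ^ 2 := by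
          apply Finset.sum_congr rfl
          intro i _
          rw [← lintegral_tsum (f := fun n α => ENNReal.ofReal (vv k i α) * ‖cc (2^k) α g n‖ₑ ^ 2) (fun n => ((hvm i).mul (hccm n)).aemeasurable)]
          simp_rw [ENNReal.tsum_mul_left, hccs]
          simp_rw [enorm_mul, mul_pow]
          exact gen_swap _ _ _ (hvm i) (fun _ => ENNReal.ofReal_ne_top) (fun α t => ‖sym (KK (2^k) α) t‖ₑ ^ 2) hkm _ hGe
      _ = _ := by
          rw [← lintegral_finset_sum']
          · simp_rw [Finset.sum_mul]
          · intro i _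
            exact (hA i).aemeasurable.mul hGe
  have hpt : ∀ᵐ t, (∑ i ∈ FI (2^k), ∫⁻ α in arc (2^k) i.1 i.2, ENNReal.ofReal (vv k i α) * ‖sym (KK (2^k) α) t‖ₑ ^ 2) * ‖G t‖ₑ ^ 2
      ≤ ENNReal.ofReal (C2*(((2:ℝ)^k)^2)^d/((2:ℝ)^k)^2*(k:ℝ)^(-(3/2):ℝ)) * ‖F t‖ₑ ^ 2 := by
    filter_upwards [mult_facts hψ q L hq hL hqL] with t ht
    by_cases hb : ∀ i, badB (rep t i) (1 / (2 * L)) q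
    · simp [hG, ht.2 hb]
    · push Not at hb
      obtain ⟨i0, hi0⟩ := hb
      gcongr
      · have := hFM j k q (rep t) i0 hjk hjk2 (fun n h1 h2 => dvd_qlcm j n h1 h2) hq hi0
        refine le_trans (le_of_eq ?_) this
        apply Finset.sum_congr rfl
        intro i _
        apply lintegral_congr
        intro α
        rw [ENNReal.ofReal_mul (by unfold TT; positivity), vv]
        congr 1
        rw [sym_KK _ _ hk1, ← ofReal_norm_eq_enorm, ← ENNReal.ofReal_pow (norm_nonneg _), norm_prod, Finset.prod_pow]
      · rw [hG]
        simp only [enorm_mul]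
        refine mul_le_of_le_one_left (by positivity) ?_
        rw [← ofReal_norm_eq_enorm]
        exact ENNReal.ofReal_le_one.2 ht.1
  have hfF : ∑' n, ‖f n‖ₑ ^ 2 = ∫⁻ t, ‖F t‖ₑ ^ 2 := by
    rw [← parseval F hF]
    apply tsum_congr
    intro n
    rw [hFc, ← ofReal_norm_eq_enorm, ← ofReal_norm_eq_enorm, Complex.norm_real]
  calc _ ≤ ∑' n, ENNReal.ofReal (C1 * ((((2:ℝ)^k)^(d-2))^2)⁻¹ * (((2:ℝ)^k)^2)⁻¹) *
      ∑ i ∈ FI (2^k), ∫⁻ α in arc (2^k) i.1 i.2, ENNReal.ofReal (vv k i α) * ‖cc (2^k) α g n‖ₑ ^ 2 :=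
        ENNReal.tsum_le_tsum fun n => hMk k g _ hgb n
    _ ≤ ENNReal.ofReal (C1 * ((((2:ℝ)^k)^(d-2))^2)⁻¹ * (((2:ℝ)^k)^2)⁻¹) * (ENNReal.ofReal (C2*(((2:ℝ)^k)^2)^d/((2:ℝ)^k)^2*(k:ℝ)^(-(3/2):ℝ)) * ∑' n, ‖f n‖ₑ ^ 2) := by
        rw [ENNReal.tsum_mul_left, hsum, hfF]
        gcongr
        rw [← lintegral_const_mul' _ _ ENNReal.ofReal_ne_top]
        exact lintegral_mono_ae hpt
    _ = _ := by
        rw [← mul_assoc, ← ENNReal.ofReal_mul (by positivity)]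
        congr 2
        obtain ⟨e, rfl⟩ : ∃ e, d = e + 2 := ⟨d - 2, by omega⟩
        have h2 : ((2:ℝ)^k) ≠ 0 := by positivity
        generalize ((2:ℝ)^k) = X at h2
        simp only [Nat.add_sub_cancel]
        field_simp
        ring

end

lemma log_facts (k : ℕ) (hk : 8 ≤ k) : 2^((Nat.log 2 k - 2)+2) ≤ k ∧ k < 2^((Nat.log 2 k - 2)+3) ∧ Nat.log 2 k - 2 ≤ k := by
  have h3 : 3 ≤ Nat.log 2 k := Nat.le_log_of_pow_le (by norm_num) (by omega)
  have h1 : Nat.log 2 k - 2 + 2 = Nat.log 2 k := by omega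
  have h2 : Nat.log 2 k - 2 + 3 = Nat.log 2 k + 1 := by omega
  rw [h1, h2]
  refine ⟨Nat.pow_log_le_self 2 (by omega), Nat.lt_pow_succ_log_self (by norm_num) k, ?_⟩
  have := Nat.log_le_self 2 k
  omega

/-- **Error term in the proof of Theorem 1**: with `J_k = ⌊log₂ k⌋ - 2`,
`‖sup_{k ≥ 8} M_k(f - f * Ψ_{J_k,k})‖₂ ≤ C ‖f‖₂`. -/
theorem error_term_bound (d : ℕ) (hd : 5 ≤ d) (ψ : SchwartzMap (Fin d → ℝ) ℝ)
    (hψ : ∀ ξ : Fin d → ℝ, (ftR (fun x => ψ x) ξ).im = 0 ∧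
      Set.indicator (cubeQ d) (fun _ => (1 : ℝ)) ξ ≤ (ftR (fun x => ψ x) ξ).re ∧
      (ftR (fun x => ψ x) ξ).re ≤ Set.indicator (cube2Q d) (fun _ => (1 : ℝ)) ξ) :
    ∃ C : ℝ, 0 < C ∧ ∀ f : (Fin d → ℤ) → ℝ,
      (∑' n : Fin d → ℤ,
          (⨆ (k : ℕ) (_ : 8 ≤ k),
            Mk k (fun x => f x - conv f (PsiJK (fun x => ψ x) (Nat.log 2 k - 2) k) x) n) ^ 2)
          ^ ((1 : ℝ) / 2)
        ≤ ENNReal.ofReal C * l2norm f := by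
  obtain ⟨C, hC, hS⟩ := scale_bound d hd ψ hψ
  have hsum : Summable (fun k : ℕ => (k:ℝ)^(-(3/2):ℝ)) := Real.summable_nat_rpow.2 (by norm_num)
  set Z : ℝ := ∑' k : ℕ, (k:ℝ)^(-(3/2):ℝ) with hZ
  have hZ0 : 0 ≤ Z := tsum_nonneg fun k => by positivity
  refine ⟨√(C * (Z + 1)), by positivity, ?_⟩
  intro f
  have hl : l2norm f = (∑' n, ‖f n‖ₑ ^ 2) ^ ((1:ℝ)/2) := rfl
  by_cases hf : ∑' n, ‖f n‖ₑ ^ 2 = ⊤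
  · rw [hl, hf, ENNReal.top_rpow_of_pos (by norm_num), ENNReal.mul_top]
    · exact le_top
    · simp only [ne_eq, ENNReal.ofReal_eq_zero, not_le]; positivity
  have hmain : ∑' n : Fin d → ℤ,
          (⨆ (k : ℕ) (_ : 8 ≤ k),
            Mk k (fun x => f x - conv f (PsiJK (fun x => ψ x) (Nat.log 2 k - 2) k) x) n) ^ 2 ≤ ENNReal.ofReal (C * (Z+1)) * ∑' n, ‖f n‖ₑ ^ 2 := by
    have hk : ∀ k : ℕ, 8 ≤ k → ∑' n, Mk k (fun x => f x - conv f (PsiJK (fun x => ψ x) (Nat.log 2 k - 2) k) x) n ^ 2 ≤ ENNReal.ofReal (C * (k:ℝ)^(-(3/2):ℝ)) * ∑' n, ‖f n‖ₑ ^ 2 := by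
      intro k hk
      obtain ⟨h1, h2, h3⟩ := log_facts k hk
      have := hS f hf (Nat.log 2 k - 2) k h1 h2
      have e : PsiJK (fun x => ψ x) (Nat.log 2 k - 2) k = psiQL (fun x => ψ x) (qlcm (Nat.log 2 k - 2)) (2^(k-(Nat.log 2 k - 2))) := by
        rw [PsiJK, ← Nat.cast_sub h3, zpow_natCast]
      rw [e]
      exact this
    calc _ ≤ ∑' n : Fin d → ℤ, ∑' k : ℕ, if 8 ≤ k then Mk k (fun x => f x - conv f (PsiJK (fun x => ψ x) (Nat.log 2 k - 2) k) x) n ^ 2 else 0 := by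
          apply ENNReal.tsum_le_tsum
          intro n
          rw [← ENNReal.rpow_two, ← ENNReal.le_rpow_inv_iff (by norm_num)]
          refine iSup₂_le fun k hk => ?_
          rw [ENNReal.le_rpow_inv_iff (by norm_num), ENNReal.rpow_two]
          have := ENNReal.le_tsum (f := fun k : ℕ => if 8 ≤ k then Mk k (fun x => f x - conv f (PsiJK (fun x => ψ x) (Nat.log 2 k - 2) k) x) n ^ 2 else 0) k
          simpa only [if_pos hk] using this
      _ = ∑' k : ℕ, ∑' n : Fin d → ℤ, if 8 ≤ k then Mk k (fun x => f x - conv f (PsiJK (fun x => ψ x) (Nat.log 2 k - 2) k) x) n ^ 2 else 0 := ENNReal.tsum_comm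
      _ ≤ ∑' k : ℕ, ENNReal.ofReal (C * (k:ℝ)^(-(3/2):ℝ)) * ∑' n, ‖f n‖ₑ ^ 2 := by
          apply ENNReal.tsum_le_tsum
          intro k
          by_cases h : 8 ≤ k
          · simp only [if_pos h]; exact hk k h
          · simp [if_neg h]
      _ = ENNReal.ofReal (C * Z) * ∑' n, ‖f n‖ₑ ^ 2 := by
          rw [ENNReal.tsum_mul_right, ← ENNReal.ofReal_tsum_of_nonneg (fun k => by positivity) (hsum.mul_left C), tsum_mul_left]
      _ ≤ _ := by
          gcongr
          linarith
  rw [hl]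
  calc _ ≤ (ENNReal.ofReal (C * (Z+1)) * ∑' n, ‖f n‖ₑ ^ 2) ^ ((1:ℝ)/2) := by gcongr
    _ = _ := by
      rw [ENNReal.mul_rpow_of_nonneg _ _ (by norm_num), ENNReal.ofReal_rpow_of_nonneg (by positivity) (by norm_num), Real.sqrt_eq_rpow]
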